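/- Let k be a differential field of characteristic zero whose field of constants C is algebraically closed, and let K and M be finitely generated differential subfields of a common differential field extension of k, each containing k, such that K and M are free over k. Let C_K, C_M and C_{KM} denote the fields of constants of K, of M and of the compositum KM, respectively. If trdeg(C_{KM}|C_M) = l ≥ 1, then either C_K ≠ C, or there exist an intermediate differential field k ⊆ L ⊆ K with trdeg(L|k) ≥ l, a strongly normal extension F of k, and a differential field embedding of L into F fixing k pointwise. -/

import Mathlib

universe u

/-- A bundled differential field of characteristic zero: a field together with a derivation,
given as a raw function satisfying additivity and the Leibniz rule. -/
structure DFld : Type (u + 1) where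
  carrier : Type u
  [fieldInst : Field carrier]
  [charZeroInst : CharZero carrier]
  deriv : carrier → carrier
  deriv_add : ∀ a b, deriv (a + b) = deriv a + deriv b
  deriv_mul : ∀ a b, deriv (a * b) = deriv a * b + a * deriv b

attribute [instance] DFld.fieldInst DFld.charZeroInst

/-- The result of applying the monic linear differential operator
`∂^n + a_{n-1} ∂^{n-1} + ⋯ + a_1 ∂ + a_0` (with coefficients `a`) to `y`,
where the derivation is given by `D`. -/
def LApply {E : Type u} [Field E] (D : E → E) (n : ℕ) (a : Fin n → E) (y : E) : E :=
  D^[n] y + ∑ i : Fin n, a i * D^[(i : ℕ)] y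

/-- `diffGen D k S` is the smallest differential subfield (w.r.t. the derivation `D`)
containing the subfield `k` and the set `S`; i.e. the differential field `k⟨S⟩`. -/
def diffGen {E : Type u} [Field E] (D : E → E) (k : Subfield E) (S : Set E) : Subfield E :=
  sInf {F : Subfield E | k ≤ F ∧ S ⊆ ↑F ∧ ∀ x ∈ F, D x ∈ F}

/-- The subfield of constants of a differential subfield `k`: `{x ∈ k | D x = 0}`. -/
def constantsOf {E : Type u} [Field E] (D : Derivation ℤ E E) (k : Subfield E) : Subfield E where
  carrier := {x | x ∈ k ∧ D x = 0}
  zero_mem' := ⟨k.zero_mem, map_zero D⟩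
  one_mem' := ⟨k.one_mem, D.map_one_eq_zero⟩
  add_mem' := by
    rintro a b ⟨hak, ha0⟩ ⟨hbk, hb0⟩
    exact ⟨k.add_mem hak hbk, by rw [map_add, ha0, hb0, add_zero]⟩
  neg_mem' := by
    rintro a ⟨hak, ha0⟩
    exact ⟨k.neg_mem hak, by rw [map_neg, ha0, neg_zero]⟩
  mul_mem' := by
    rintro a b ⟨hak, ha0⟩ ⟨hbk, hb0⟩
    exact ⟨k.mul_mem hak hbk, by
      rw [Derivation.leibniz, ha0, hb0, smul_zero, smul_zero, add_zero]⟩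
  inv_mem' := by
    rintro x ⟨hxk, hx0⟩
    refine ⟨k.inv_mem hxk, ?_⟩
    by_cases h : x = 0
    · simp [h]
    · have h1 : D (x * x⁻¹) = 0 := by rw [mul_inv_cancel₀ h, D.map_one_eq_zero]
      rw [Derivation.leibniz, hx0, smul_zero, add_zero, smul_eq_mul] at h1
      exact (mul_eq_zero.mp h1).resolve_left h

/-- `F` is a Picard–Vessiot extension of `k` (inside a common differential field) for the
monic linear differential operator of order `n` with (lower-order) coefficients `a`:
both are differential subfields, the constants of `F` equal the constants of `k`,
the coefficients lie in `k`, and `F` is differentially generated over `k` by an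
`n`-dimensional vector space (over the constants) of solutions. -/
def IsPVWith {E : Type u} [Field E] (D : E → E) (k F : Subfield E) (n : ℕ)
    (a : Fin n → E) : Prop :=
  k ≤ F ∧ (∀ x ∈ k, D x ∈ k) ∧ (∀ x ∈ F, D x ∈ F) ∧
  (∀ x ∈ F, D x = 0 → x ∈ k) ∧
  (∀ i, a i ∈ k) ∧
  ∃ y : Fin n → E,
    (∀ i, y i ∈ F) ∧
    (∀ i, LApply D n a (y i) = 0) ∧
    (∀ c : Fin n → E, (∀ i, c i ∈ k ∧ D (c i) = 0) → (∑ i, c i * y i) = 0 → ∀ i, c i = 0) ∧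
    diffGen D k (Set.range y) = F

/-- `F` is a Picard–Vessiot extension of `k` for some monic linear differential operator. -/
def IsPV {E : Type u} [Field E] (D : E → E) (k F : Subfield E) : Prop :=
  ∃ (n : ℕ) (a : Fin n → E), IsPVWith D k F n a

/-- Relative version: the differential subfield `F` is a Picard–Vessiot extension
of the differential subfield `kb ≤ F`. -/
def IsPVRel {E : Type u} [Field E] (D : E → E) (kb F : Subfield E)
    (hF : ∀ x ∈ F, D x ∈ F) : Prop :=
  IsPV (fun x : ↥F => (⟨D ↑x, hF ↑x x.2⟩ : ↥F)) (Subfield.comap F.subtype kb) ⊤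

/-- The ambient differential field (with derivation `D`) is a strongly normal extension of
its differential subfield `k`: it is finitely generated as a field extension of `k`, has no
new constants, and every differential embedding over `k` into a differential field extension
`M` lands in the compositum of the image of the base copy with the constants of `M`. -/
def IsSN {E : Type u} [Field E] (D : E → E) (k : Subfield E) : Prop :=
  (∀ x ∈ k, D x ∈ k) ∧
  (∃ s : Finset E, Subfield.closure (↑k ∪ ↑s) = (⊤ : Subfield E)) ∧
  (∀ x : E, D x = 0 → x ∈ k) ∧
  ∀ (M : DFld.{u}) (ι σ : E →+* M.carrier),
    (∀ x, ι (D x) = M.deriv (ι x)) →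
    (∀ x, σ (D x) = M.deriv (σ x)) →
    (∀ x ∈ k, σ x = ι x) →
    ∀ e : E, σ e ∈ Subfield.closure (Set.range ι ∪ {m : M.carrier | M.deriv m = 0})

/-- Relative version: the differential subfield `F` is a strongly normal extension of the
differential subfield `kb ≤ F`. -/
def IsSNRel {E : Type u} [Field E] (D : E → E) (kb F : Subfield E)
    (hF : ∀ x ∈ F, D x ∈ F) : Prop :=
  IsSN (fun x : ↥F => (⟨D ↑x, hF ↑x x.2⟩ : ↥F)) (Subfield.comap F.subtype kb)

/-- `K` is a finite field extension of the subfield `M`. -/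
def FinExt {E : Type u} [Field E] (M K : Subfield E) : Prop :=
  ∃ h : M ≤ K,
    letI : Algebra ↥M ↥K := (Subfield.inclusion h).toAlgebra
    Module.Finite ↥M ↥K

/-- The transcendence degree of the subfield `K` over the subfield `k`, as the supremum of the
cardinalities of subsets of `K` that are algebraically independent over `k`. -/
noncomputable def trdegOf {E : Type u} [Field E] (k K : Subfield E) : Cardinal.{u} :=
  ⨆ s : {s : Set E // s ⊆ (K : Set E) ∧ AlgebraicIndependent ↥k (fun x : ↥s => (x : E))},
    Cardinal.mk ↥(s.1)

/-- `K` and `M` are free over `k`: every finite subset of `K` that is algebraically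
independent over `k` remains algebraically independent over `M`. -/
def FreeOver {E : Type u} [Field E] (k K M : Subfield E) : Prop :=
  ∀ s : Finset E, (↑s : Set E) ⊆ (K : Set E) →
    AlgebraicIndependent ↥k (fun x : ↥(↑s : Set E) => (x : E)) →
    AlgebraicIndependent ↥M (fun x : ↥(↑s : Set E) => (x : E))

/-- `K` is a `k`-irreducible differential field: it is a finitely generated differential field
extension of `k` of transcendence degree at least 1, and every intermediate differential field
`k ⊂ M ⊆ K` has transcendence degree `0` or `trdeg(K|k)` over `k`. -/
def IsIrred {E : Type u} [Field E] (D : E → E) (k K : Subfield E) : Prop :=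
  (∃ s : Finset E, diffGen D k ↑s = K) ∧
  1 ≤ trdegOf k K ∧
  ∀ M : Subfield E, (∀ x ∈ M, D x ∈ M) → k < M → M ≤ K →
    trdegOf k M = 0 ∨ trdegOf k M = trdegOf k K

/-- `Kf` is a `d`-solvable extension of `k`: there is a tower of differential fields starting
at (a copy of) `k`, each step being a finite algebraic extension or a Picard–Vessiot extension
for an operator of order at most `d`, whose top contains (the copy of) `Kf`. -/
def IsDSolvable {E : Type u} [Field E] (D : E → E) (k Kf : Subfield E) (d : ℕ) : Prop :=
  ∃ (Ω : DFld.{u}) (j : E →+* Ω.carrier),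
    (∀ x, j (D x) = Ω.deriv (j x)) ∧
    ∃ (r : ℕ) (T : Fin (r + 1) → Subfield Ω.carrier),
      T 0 = Subfield.map j k ∧
      Subfield.map j Kf ≤ T (Fin.last r) ∧
      (∀ i, ∀ x ∈ T i, Ω.deriv x ∈ T i) ∧
      ∀ i : Fin r,
        FinExt (T i.castSucc) (T i.succ) ∨
        ∃ n ≤ d, ∃ a : Fin n → Ω.carrier, IsPVWith Ω.deriv (T i.castSucc) (T i.succ) n a

/-- `Kn` is generated over `kb`, as a differential field with the same constants, by one
solution `z` of an inhomogeneous equation `L(y) = b` (with `L` monic over `kb` of order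
`n ≤ d` and `b ∈ kb`) together with an `n`-dimensional space (over the constants) of
solutions of `L(y) = 0`. -/
def IsPVInhomLe {E : Type u} [Field E] (D : E → E) (kb Kn : Subfield E) (d : ℕ) : Prop :=
  kb ≤ Kn ∧ (∀ x ∈ kb, D x ∈ kb) ∧ (∀ x ∈ Kn, D x ∈ Kn) ∧
  (∀ x ∈ Kn, D x = 0 → x ∈ kb) ∧
  ∃ n, n ≤ d ∧ ∃ (a : Fin n → E) (b z : E) (y : Fin n → E),
    (∀ i, a i ∈ kb) ∧ b ∈ kb ∧ z ∈ Kn ∧ (∀ i, y i ∈ Kn) ∧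
    LApply D n a z = b ∧
    (∀ i, LApply D n a (y i) = 0) ∧
    (∀ c : Fin n → E, (∀ i, c i ∈ kb ∧ D (c i) = 0) → (∑ i, c i * y i) = 0 → ∀ i, c i = 0) ∧
    diffGen D kb (insert z (Set.range y)) = Kn

/-- `Kf` is a `d⁺`-solvable extension of `k`. -/
def IsDPlusSolvable {E : Type u} [Field E] (D : E → E) (k Kf : Subfield E) (d : ℕ) : Prop :=
  ∃ (Ω : DFld.{u}) (j : E →+* Ω.carrier),
    (∀ x, j (D x) = Ω.deriv (j x)) ∧
    ∃ (r : ℕ) (T : Fin (r + 1) → Subfield Ω.carrier),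
      T 0 = Subfield.map j k ∧
      Subfield.map j Kf ≤ T (Fin.last r) ∧
      (∀ i, ∀ x ∈ T i, Ω.deriv x ∈ T i) ∧
      ∀ i : Fin r,
        FinExt (T i.castSucc) (T i.succ) ∨ IsPVInhomLe Ω.deriv (T i.castSucc) (T i.succ) d

/-- `TSet D kb K` is the set of elements of `K` annihilated by some monic linear differential
operator with coefficients in `kb`. -/
def TSet {E : Type u} [Field E] (D : E → E) (kb K : Subfield E) : Set E :=
  {x | x ∈ K ∧ ∃ (n : ℕ) (a : Fin n → E), (∀ i, a i ∈ kb) ∧ LApply D n a x = 0}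

set_option linter.all false
open scoped Differential TensorProduct


/-- Ring homs commuting with derivations. -/
def DHom {A B : Type*} [CommRing A] [CommRing B] [Differential A] [Differential B]
    (f : A →+* B) : Prop := ∀ x : A, f (x′) = (f x)′

theorem DHom.comp {A B C : Type*} [CommRing A] [CommRing B] [CommRing C] [Differential A]
    [Differential B] [Differential C] {g : B →+* C} {f : A →+* B} (hg : DHom g) (hf : DHom f) :
    DHom (g.comp f) := fun x => by
  simp only [RingHom.comp_apply]
  rw [hf x, hg]

theorem dhom_algebraMap (A B : Type*) [CommRing A] [CommRing B] [Algebra A B] [Differential A]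
    [Differential B] [DifferentialAlgebra A B] : DHom (algebraMap A B) :=
  fun x => (deriv_algebraMap x).symm

/-- extension of derivations along formally etale maps -/
theorem exists_diff_of_etale (S T : Type u) [CommRing S] [CommRing T] [Algebra S T]
    [Algebra.FormallyEtale S T] [Differential S] :
    ∃ _d : Differential T, DifferentialAlgebra S T := by
  let D0 : Derivation ℤ S T := (Algebra.linearMap S T).compDer (Differential.deriv : Derivation ℤ S S)
  let l : Ω[S⁄ℤ] →ₗ[S] T := D0.liftKaehlerDifferential
  let e := KaehlerDifferential.tensorKaehlerEquivOfFormallyEtale ℤ S T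
  let L : T ⊗[S] Ω[S⁄ℤ] →ₗ[T] T := l.liftBaseChange T
  let d : Derivation ℤ T T := (L ∘ₗ e.symm.toLinearMap).compDer (KaehlerDifferential.D ℤ T)
  letI : Differential T := ⟨d⟩
  refine ⟨⟨d⟩, ⟨fun a => ?_⟩⟩
  change L (e.symm (KaehlerDifferential.D ℤ T (algebraMap S T a))) = _
  rw [KaehlerDifferential.tensorKaehlerEquivOfFormallyEtale_symm_D_algebraMap]
  simp [L, l, D0]

theorem exists_diff_fractionRing (S T : Type u) [CommRing S] [CommRing T] [Algebra S T]
    [IsFractionRing S T] [Differential S] :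
    ∃ _d : Differential T, DifferentialAlgebra S T := by
  haveI : Algebra.FormallyEtale S T := Algebra.FormallyEtale.of_isLocalization (nonZeroDivisors S)
  exact exists_diff_of_etale S T

theorem exists_diff_algebraic (S T : Type u) [Field S] [Field T] [Algebra S T] [CharZero S]
    [Algebra.IsAlgebraic S T] [Differential S] :
    ∃ _d : Differential T, DifferentialAlgebra S T := by
  haveI : Algebra.FormallyEtale S T := by
    exact Algebra.FormallyEtale.of_isSeparable S T
  exact exists_diff_of_etale S T

/-- a ring hom from an algebraic extension is differential if it is so on the base. -/
theorem DHom.of_algebraic {A0 A B : Type*} [Field A0] [Field A] [Field B] [CharZero A0]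
    [Algebra A0 A] [Algebra.IsAlgebraic A0 A] [Differential A0] [Differential A] [Differential B]
    [DifferentialAlgebra A0 A] (f : A →+* B) (hf : DHom (f.comp (algebraMap A0 A))) : DHom f := by
  intro a
  have key : ∀ p : Polynomial A0, f ((Polynomial.aeval a p)′) - (f (Polynomial.aeval a p))′ =
      f (Polynomial.aeval a p.derivative) * (f (a′) - (f a)′) := by
    intro p
    induction p using Polynomial.induction_on' with
    | add p q hp hq =>
      simp only [map_add, Polynomial.derivative_add] at *
      linear_combination hp + hq
    | monomial n c =>
      have h1 : f (algebraMap A0 A c′) = (f (algebraMap A0 A c))′ := hf c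
      rw [← deriv_algebraMap] at h1
      simp only [Polynomial.aeval_monomial, Polynomial.derivative_monomial, map_mul, map_pow,
        Derivation.leibniz, Derivation.leibniz_pow, map_add, map_smul, smul_eq_mul, map_natCast,
        nsmul_eq_mul]
      rw [h1]
      ring
  have hm := key (minpoly A0 a)
  simp only [minpoly.aeval, map_zero, sub_zero] at hm
  have hsep : (minpoly A0 a).Separable := Algebra.IsSeparable.isSeparable A0 a
  have hne : Polynomial.aeval a (minpoly A0 a).derivative ≠ 0 :=
    hsep.aeval_derivative_ne_zero (minpoly.aeval A0 a)
  have := (mul_eq_zero.mp hm.symm).resolve_left (by simpa using hne)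
  exact sub_eq_zero.mp this

theorem deriv_inv_field {B : Type*} [Field B] [Differential B] (y : B) :
    (y⁻¹)′ = - y′ / y ^ 2 := by
  by_cases h : y = 0
  · simp [h]
  have h1 : (y * y⁻¹)′ = 0 := by rw [mul_inv_cancel₀ h]; simp
  rw [Derivation.leibniz] at h1
  simp only [smul_eq_mul] at h1
  field_simp
  field_simp at h1
  linear_combination h1

/-- a ring hom from a fraction field is differential if it is so on the ring. -/
theorem DHom.of_fraction {A0 A B : Type*} [CommRing A0] [IsDomain A0] [Field A] [Field B]
    [Algebra A0 A] [IsFractionRing A0 A] [Differential A0] [Differential A] [Differential B]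
    [DifferentialAlgebra A0 A] (f : A →+* B) (hf : DHom (f.comp (algebraMap A0 A))) : DHom f := by
  intro a
  obtain ⟨x, y, hy, rfl⟩ := IsFractionRing.div_surjective (A := A0) a
  have hx : f ((algebraMap A0 A x)′) = (f (algebraMap A0 A x))′ := by
    rw [deriv_algebraMap]; exact hf x
  have hy' : f ((algebraMap A0 A y)′) = (f (algebraMap A0 A y))′ := by
    rw [deriv_algebraMap]; exact hf y
  rw [div_eq_mul_inv]
  simp only [map_mul, map_inv₀, Derivation.leibniz, deriv_inv_field, smul_eq_mul, map_add, map_div₀,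
    map_neg, map_pow, hx, hy']


theorem deriv_smul_alg {Q A : Type*} [CommRing Q] [CommRing A] [Algebra Q A]
    [Differential Q] [Differential A] [DifferentialAlgebra Q A] (q : Q) (a : A) :
    (q • a)′ = (q′) • a + q • (a′) := by
  rw [Algebra.smul_def q a, Derivation.leibniz, deriv_algebraMap, Algebra.smul_def (q′) a,
    Algebra.smul_def q (a′), smul_eq_mul, smul_eq_mul]
  ring

section tens
variable (Q A B : Type*) [CommRing Q] [CommRing A] [CommRing B] [Algebra Q A] [Algebra Q B]
  [Differential Q] [Differential A] [Differential B] [DifferentialAlgebra Q A]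
  [DifferentialAlgebra Q B]

noncomputable def tensAdd : A ⊗[Q] B →+ A ⊗[Q] B :=
  TensorProduct.liftAddHom
    (AddMonoidHom.mk' (fun a => AddMonoidHom.mk' (fun b => (a′) ⊗ₜ[Q] b + a ⊗ₜ[Q] (b′))
      (fun x y => by simp [TensorProduct.tmul_add]; abel))
      (fun x y => by
        ext b
        simp [TensorProduct.add_tmul]; abel))
    (fun q a b => by
      simp only [AddMonoidHom.mk'_apply, deriv_smul_alg, TensorProduct.add_tmul,
        TensorProduct.tmul_add, TensorProduct.tmul_smul, ← TensorProduct.smul_tmul']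
      abel)

theorem tensAdd_tmul (a : A) (b : B) :
    tensAdd Q A B (a ⊗ₜ b) = (a′) ⊗ₜ[Q] b + a ⊗ₜ[Q] (b′) := rfl

@[reducible]
noncomputable def tensDiff : Differential (A ⊗[Q] B) :=
  ⟨Derivation.mk' (tensAdd Q A B).toIntLinearMap (by
    intro x y
    simp only [AddMonoidHom.coe_toIntLinearMap, smul_eq_mul]
    induction x using TensorProduct.induction_on with
    | zero => simp
    | add x1 x2 h1 h2 => simp only [add_mul, map_add, h1, h2, mul_add]; abel
    | tmul a b =>
      induction y using TensorProduct.induction_on with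
      | zero => simp
      | add x1 x2 h1 h2 => simp only [add_mul, map_add, h1, h2, mul_add]; abel
      | tmul a' b' =>
        simp only [Algebra.TensorProduct.tmul_mul_tmul, tensAdd_tmul, Derivation.leibniz,
          smul_eq_mul, TensorProduct.add_tmul, TensorProduct.tmul_add, mul_add, mul_comm a' a,
          mul_comm b' b, mul_comm a' (a′), mul_comm b' (b′)]
        abel)⟩

attribute [local instance] tensDiff

theorem tens_deriv_tmul (a : A) (b : B) :
    (a ⊗ₜ[Q] b)′ = (a′) ⊗ₜ[Q] b + a ⊗ₜ[Q] (b′) := rfl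

theorem tens_diffAlg_left : DifferentialAlgebra A (A ⊗[Q] B) :=
  ⟨fun a => by
    rw [Algebra.TensorProduct.algebraMap_apply, tens_deriv_tmul]; simp⟩

theorem tens_diffAlg : DifferentialAlgebra Q (A ⊗[Q] B) :=
  ⟨fun a => by
    rw [Algebra.TensorProduct.algebraMap_apply, tens_deriv_tmul]; simp [deriv_algebraMap]⟩

theorem tens_dhom_left :
    DHom (Algebra.TensorProduct.includeLeft : A →ₐ[Q] A ⊗[Q] B).toRingHom := fun a => by
  simp [tens_deriv_tmul]

theorem tens_dhom_right :
    DHom (Algebra.TensorProduct.includeRight : B →ₐ[Q] A ⊗[Q] B).toRingHom := fun a => by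
  simp [tens_deriv_tmul]

/-- a hom out of a tensor product is differential if both components are -/
theorem tens_dhom {C : Type*} [CommRing C] [Differential C] (f : A ⊗[Q] B →+* C)
    (h1 : DHom (f.comp (Algebra.TensorProduct.includeLeft : A →ₐ[Q] A ⊗[Q] B).toRingHom))
    (h2 : DHom (f.comp (Algebra.TensorProduct.includeRight : B →ₐ[Q] A ⊗[Q] B).toRingHom)) :
    DHom f := by
  intro x
  induction x using TensorProduct.induction_on with
  | zero => simp
  | add x y hx hy => simp [hx, hy]
  | tmul a b =>
    have h1' := h1 a
    have h2' := h2 b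
    simp only [AlgHom.toRingHom_eq_coe, RingHom.coe_comp, RingHom.coe_coe, Function.comp_apply,
      Algebra.TensorProduct.includeLeft_apply, Algebra.TensorProduct.includeRight_apply] at h1' h2'
    have e : ∀ (a : A) (b : B), f (a ⊗ₜ b) = f (a ⊗ₜ 1) * f (1 ⊗ₜ b) := by
      intro a b; rw [← map_mul]; simp
    rw [tens_deriv_tmul, map_add, e, e a (b′), e a b, h1', h2', Derivation.leibniz]
    simp only [smul_eq_mul]; ring
end tens

/-- points of finite type algebras over algebraically closed fields -/
theorem exists_point (Q A : Type*) [Field Q] [IsAlgClosed Q] [CommRing A] [Algebra Q A]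
    [Algebra.FiniteType Q A] (c : A) (hc : ¬ IsNilpotent c) :
    ∃ φ : A →ₐ[Q] Q, φ c ≠ 0 := by
  let L := Localization.Away c
  haveI : Algebra.FiniteType A L := inferInstanceAs (Algebra.FiniteType A (Localization.Away c))
  haveI : Algebra.FiniteType Q L := Algebra.FiniteType.trans (S := A) inferInstance inferInstance
  haveI : Nontrivial L := by
    by_contra h
    rw [not_nontrivial_iff_subsingleton] at h
    have := (IsLocalization.subsingleton_iff (S := L) (M := Submonoid.powers c)).mp h
    obtain ⟨n, hn⟩ := this
    exact hc ⟨n, hn⟩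
  obtain ⟨m, hm⟩ := Ideal.exists_maximal L
  letI := Ideal.Quotient.field m
  haveI : Algebra.FiniteType Q (L ⧸ m) := Algebra.FiniteType.trans (S := L) inferInstance inferInstance
  haveI : Module.Finite Q (L ⧸ m) := finite_of_finite_type_of_isJacobsonRing Q (L ⧸ m)
  have hb : Function.Bijective (algebraMap Q (L ⧸ m)) :=
    IsAlgClosed.algebraMap_bijective_of_isIntegral
  let e := AlgEquiv.ofBijective (Algebra.ofId Q (L ⧸ m)) hb
  let φ : A →ₐ[Q] Q := (e.symm.toAlgHom.comp (Ideal.Quotient.mkₐ Q m)).comp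
    (IsScalarTower.toAlgHom Q A L)
  refine ⟨φ, ?_⟩
  have hu : IsUnit (algebraMap A L c) := IsLocalization.Away.algebraMap_isUnit c
  have : IsUnit (φ c) := by
    have := hu.map (e.symm.toAlgHom.comp (Ideal.Quotient.mkₐ Q m))
    exact this
  exact this.ne_zero

/-- tensor products of domains over an algebraically closed field are domains -/
theorem tens_domain (Q A T : Type*) [Field Q] [IsAlgClosed Q] [CommRing A] [IsDomain A]
    [Algebra Q A] [CommRing T] [IsDomain T] [Algebra Q T] : IsDomain (A ⊗[Q] T) := by
  haveI : Nontrivial (A ⊗[Q] T) := inferInstance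
  haveI : NoZeroDivisors (A ⊗[Q] T) := by
    refine ⟨fun {x y} hxy => ?_⟩
    by_contra hcon
    push Not at hcon
    obtain ⟨hx, hy⟩ := hcon
    let b := Module.Free.chooseBasis Q T
    let bA := Algebra.TensorProduct.basis A b
    obtain ⟨i, hi⟩ : ∃ i, bA.repr x i ≠ 0 := by
      by_contra! h
      exact hx (bA.repr.map_eq_zero_iff.mp (Finsupp.ext h))
    obtain ⟨j, hj⟩ : ∃ i, bA.repr y i ≠ 0 := by
      by_contra! h
      exact hy (bA.repr.map_eq_zero_iff.mp (Finsupp.ext h))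
    classical
    let S : Finset A := (bA.repr x).support.image (bA.repr x) ∪ (bA.repr y).support.image (bA.repr y)
    let A0 := Algebra.adjoin Q (S : Set A)
    haveI : Algebra.FiniteType Q A0 := (Subalgebra.fg_iff_finiteType _).mp (Subalgebra.fg_adjoin_finset S)
    have memx : ∀ i, bA.repr x i ∈ A0 := by
      intro i
      by_cases h : bA.repr x i = 0
      · rw [h]; exact zero_mem _
      · apply Algebra.subset_adjoin
        simp only [S, Finset.coe_union, Set.mem_union, Finset.mem_coe, Finset.mem_image]
        exact Or.inl ⟨i, by simpa using h, rfl⟩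
    have memy : ∀ i, bA.repr y i ∈ A0 := by
      intro i
      by_cases h : bA.repr y i = 0
      · rw [h]; exact zero_mem _
      · apply Algebra.subset_adjoin
        simp only [S, Finset.coe_union, Set.mem_union, Finset.mem_coe, Finset.mem_image]
        exact Or.inr ⟨i, by simpa using h, rfl⟩
    obtain ⟨φ, hφ⟩ := exists_point Q A0 (⟨_, memx i⟩ * ⟨_, memy j⟩) (by
      intro h
      have h2 := h.eq_zero
      have h3 := congrArg Subtype.val h2
      simp only [Subalgebra.coe_mul, ZeroMemClass.coe_zero, mul_eq_zero] at h3
      exact h3.elim hi hj)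
    rw [map_mul] at hφ
    -- lift x y to A0 ⊗ T
    let b0 := Algebra.TensorProduct.basis A0 b
    let ι : A0 ⊗[Q] T →ₐ[Q] A ⊗[Q] T := Algebra.TensorProduct.map A0.val (AlgHom.id Q T)
    have hι : Function.Injective ι :=
      Module.Flat.rTensor_preserves_injective_linearMap (M := T) A0.val.toLinearMap
        Subtype.val_injective
    let fx : _ →₀ A0 := Finsupp.onFinset (bA.repr x).support (fun i => ⟨_, memx i⟩) (by
      intro i h; simp at h ⊢; intro h'; exact h (Subtype.ext h'))
    let fy : _ →₀ A0 := Finsupp.onFinset (bA.repr y).support (fun i => ⟨_, memy i⟩) (by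
      intro i h; simp at h ⊢; intro h'; exact h (Subtype.ext h'))
    let x0 := b0.repr.symm fx
    let y0 := b0.repr.symm fy
    have hιx : ι x0 = x := by
      simp only [x0, Module.Basis.repr_symm_apply, Finsupp.linearCombination_apply]
      conv_rhs => rw [← bA.linearCombination_repr x, Finsupp.linearCombination_apply]
      rw [Finsupp.sum, Finsupp.sum, map_sum]
      rw [Finset.sum_subset (s₁ := fx.support) (s₂ := (bA.repr x).support)]
      · refine Finset.sum_congr rfl fun i _ => ?_
        simp [ι, b0, bA, fx, TensorProduct.smul_tmul']
      · exact Finsupp.support_onFinset_subset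
      · intro i _ h
        simp only [Finsupp.mem_support_iff, not_not] at h
        simp [h]
    have hιy : ι y0 = y := by
      simp only [y0, Module.Basis.repr_symm_apply, Finsupp.linearCombination_apply]
      conv_rhs => rw [← bA.linearCombination_repr y, Finsupp.linearCombination_apply]
      rw [Finsupp.sum, Finsupp.sum, map_sum]
      rw [Finset.sum_subset (s₁ := fy.support) (s₂ := (bA.repr y).support)]
      · refine Finset.sum_congr rfl fun i _ => ?_
        simp [ι, b0, bA, fy, TensorProduct.smul_tmul']
      · exact Finsupp.support_onFinset_subset
      · intro i _ h
        simp only [Finsupp.mem_support_iff, not_not] at h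
        simp [h]
    have h0 : x0 * y0 = 0 := by
      apply hι
      rw [map_mul, hιx, hιy, hxy, map_zero]
    let ψ : A0 ⊗[Q] T →ₐ[Q] T :=
      Algebra.TensorProduct.lift ((Algebra.ofId Q T).comp φ) (AlgHom.id Q T) (fun _ _ => Commute.all _ _)
    have hψ : ∀ f : _ →₀ A0, ∀ i, b.repr (ψ (b0.repr.symm f)) i = φ (f i) := by
      intro f i
      induction f using Finsupp.induction_linear with
      | zero => simp
      | add f g hf hg => simp only [map_add, Finsupp.add_apply, hf, hg]
      | single k a =>
        have : b0.repr.symm (Finsupp.single k a) = a ⊗ₜ b k := by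
          simp [b0, TensorProduct.smul_tmul']
        rw [this]
        simp only [ψ, Algebra.TensorProduct.lift_tmul, AlgHom.comp_apply, AlgHom.id_apply,
          Algebra.ofId_apply, ← Algebra.smul_def, map_smul, Finsupp.smul_apply, b.repr_self,
          Finsupp.single_apply]
        split_ifs <;> simp
    have h1 : ψ x0 * ψ y0 = 0 := by rw [← map_mul, h0, map_zero]
    rcases mul_eq_zero.mp h1 with h | h
    · apply hφ
      have := hψ fx i
      rw [show b0.repr.symm fx = x0 from rfl, h] at this
      simp only [map_zero, Finsupp.coe_zero, Pi.zero_apply] at this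
      have h2 : fx i = ⟨_, memx i⟩ := rfl
      rw [← h2, ← this, zero_mul]
    · apply hφ
      have := hψ fy j
      rw [show b0.repr.symm fy = y0 from rfl, h] at this
      simp only [map_zero, Finsupp.coe_zero, Pi.zero_apply] at this
      have h2 : fy j = ⟨_, memy j⟩ := rfl
      rw [← h2, ← this, mul_zero]
  exact NoZeroDivisors.to_isDomain _


/-- constants -/
def cst (T : Type*) [Field T] [Differential T] : Subfield T where
  carrier := {x | x′ = 0}
  zero_mem' := map_zero _
  one_mem' := Derivation.map_one_eq_zero _
  add_mem' := by
    intro a b ha hb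
    simp only [Set.mem_setOf_eq] at *
    simp [ha, hb]
  neg_mem' := by
    intro a ha
    simp only [Set.mem_setOf_eq] at *
    simp [ha]
  mul_mem' := by
    intro a b ha hb
    simp only [Set.mem_setOf_eq] at *
    simp [ha, hb]
  inv_mem' := by
    intro a ha
    simp only [Set.mem_setOf_eq] at *
    simp [deriv_inv_field, ha]

theorem mem_cst {T : Type*} [Field T] [Differential T] {x : T} : x ∈ cst T ↔ x′ = 0 := Iff.rfl

theorem DHom.map_cst {A B : Type*} [Field A] [Field B] [Differential A] [Differential B]
    {f : A →+* B} (hf : DHom f) : (cst A).map f ≤ cst B := by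
  rintro _ ⟨x, hx, rfl⟩
  have hx' : x′ = 0 := hx
  rw [mem_cst, ← hf, hx', map_zero]

/-- bundled differential field extension -/
structure DX (Q : Type u) [Field Q] [Differential Q] where
  C : Type u
  [f : Field C]
  [d : Differential C]
  [a : Algebra Q C]
  [da : DifferentialAlgebra Q C]

attribute [instance] DX.f DX.d DX.a DX.da

theorem amalgam (Q A T : Type u) [Field Q] [Field A] [Field T] [IsAlgClosed Q]
    [Differential Q] [Differential A] [Differential T] [Algebra Q A] [Algebra Q T]
    [DifferentialAlgebra Q A] [DifferentialAlgebra Q T] :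
    ∃ (W : DX Q) (a : A →ₐ[Q] W.C) (t : T →ₐ[Q] W.C), DHom a.toRingHom ∧ DHom t.toRingHom ∧
      Function.Injective (Algebra.TensorProduct.productMap a t) := by
  letI : Differential (A ⊗[Q] T) := tensDiff Q A T
  haveI : DifferentialAlgebra Q (A ⊗[Q] T) := tens_diffAlg Q A T
  haveI : IsDomain (A ⊗[Q] T) := tens_domain Q A T
  obtain ⟨d, hd⟩ := exists_diff_fractionRing (A ⊗[Q] T) (FractionRing (A ⊗[Q] T))
  have hda : DifferentialAlgebra Q (FractionRing (A ⊗[Q] T)) := ⟨fun q => by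
    rw [IsScalarTower.algebraMap_apply Q (A ⊗[Q] T), deriv_algebraMap, deriv_algebraMap,
      ← IsScalarTower.algebraMap_apply]⟩
  let W : DX Q := ⟨FractionRing (A ⊗[Q] T)⟩
  let j : A ⊗[Q] T →ₐ[Q] W.C := IsScalarTower.toAlgHom Q (A ⊗[Q] T) (FractionRing (A ⊗[Q] T))
  have hj : DHom j.toRingHom := dhom_algebraMap (A ⊗[Q] T) (FractionRing (A ⊗[Q] T))
  refine ⟨W, j.comp Algebra.TensorProduct.includeLeft, j.comp Algebra.TensorProduct.includeRight,
    hj.comp (tens_dhom_left Q A T), hj.comp (tens_dhom_right Q A T), ?_⟩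
  have : Algebra.TensorProduct.productMap (j.comp Algebra.TensorProduct.includeLeft)
      (j.comp Algebra.TensorProduct.includeRight) = j := by
    ext x
    · simp
    · have h1 : j (1 ⊗ₜ 1) = 1 := map_one j
      simp [h1]
  rw [this]
  exact IsFractionRing.injective (A ⊗[Q] T) (FractionRing (A ⊗[Q] T))

/-- decomposition of a finite family along a subfield -/
theorem exists_decomp (G S : Type*) [Field G] [Ring S] [Algebra G S] {n : Type*} [Finite n]
    (z : n → S) : ∃ (d : ℕ) (s : Fin d → S) (c : Fin d → n → G), LinearIndependent G s ∧
      ∀ i, z i = ∑ b, c b i • s b := by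
  let V := Submodule.span G (Set.range z)
  haveI : FiniteDimensional G V := FiniteDimensional.span_of_finite G (Set.finite_range z)
  let b := Module.finBasis G V
  refine ⟨_, fun i => (b i : S), fun j i => b.repr ⟨z i, Submodule.subset_span ⟨i, rfl⟩⟩ j, ?_, ?_⟩
  · exact b.linearIndependent.map' V.subtype (Submodule.ker_subtype V)
  · intro i
    have := b.sum_repr ⟨z i, Submodule.subset_span ⟨i, rfl⟩⟩
    have h2 := congrArg V.subtype this
    simp only [map_sum, map_smul] at h2
    exact h2.symm

/-- rational solutions span -/
theorem rational_span {S : Type*} [Field S] (G : Subfield S) {n p : Type*} [Fintype n]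
    (r : p → n → S) (hr : ∀ b i, r b i ∈ G) (z : n → S) (hz : ∀ b, ∑ i, r b i * z i = 0) :
    ∃ (d : ℕ) (s : Fin d → S) (c : Fin d → n → S), (∀ e i, c e i ∈ G) ∧
      (∀ e b, ∑ i, r b i * c e i = 0) ∧ ∀ i, z i = ∑ e, c e i * s e := by
  obtain ⟨d, s, c, hs, hc⟩ := exists_decomp G S z
  refine ⟨d, s, fun e i => c e i, fun e i => (c e i).2, ?_, ?_⟩
  · intro e b
    have h := hz b
    have h2 : ∑ e, (∑ i, (⟨r b i, hr b i⟩ : G) * c e i) • s e = 0 := by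
      rw [← h]
      simp only [Finset.sum_smul, hc, Finset.mul_sum]
      rw [Finset.sum_comm]
      refine Finset.sum_congr rfl fun i _ => Finset.sum_congr rfl fun e _ => ?_
      rw [mul_smul]
      rfl
    have h3 := (Fintype.linearIndependent_iff.mp hs) _ h2 e
    have h4 := congrArg Subtype.val h3
    simpa using h4
  · intro i
    rw [hc]
    rfl

/-- orthogonality in an amalgam decomposes -/
theorem amalgam_orth {Q A T W : Type*} [Field Q] [Field A] [Field T] [Field W] [Algebra Q A]
    [Algebra Q T] [Algebra Q W] (a : A →ₐ[Q] W) (t : T →ₐ[Q] W)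
    (hinj : Function.Injective (Algebra.TensorProduct.productMap a t)) {d : Type*} [Fintype d]
    (s : d → T) (hs : LinearIndependent Q s) (x : d → A) (h : ∑ e, a (x e) * t (s e) = 0) :
    ∀ e, x e = 0 := by
  have h1 : ∑ e, (x e) ⊗ₜ[Q] (s e) = 0 := by
    apply hinj
    simp [map_sum, h]
  classical
  have hinj2 : Function.Injective (Fintype.linearCombination Q s) :=
    LinearMap.ker_eq_bot.mp (LinearMap.ker_eq_bot'.mpr fun c hc => by
      ext e
      exact Fintype.linearIndependent_iff.mp hs c (by simpa [Fintype.linearCombination_apply] using hc) e)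
  have h3 := Module.Flat.lTensor_preserves_injective_linearMap (M := A) _ hinj2
  have h4 : ∑ e, (x e) ⊗ₜ[Q] (Pi.single e (1 : Q) : d → Q) = 0 := by
    apply h3
    rw [map_zero, ← h1, map_sum]
    refine Finset.sum_congr rfl fun e _ => ?_
    simp [Fintype.linearCombination_apply_single]
  have h5 := congrArg (TensorProduct.piScalarRight Q Q A d) h4
  intro e
  have h6 := congrFun h5 e
  simpa [map_sum, Finset.sum_apply, Pi.single_apply] using h6

theorem genericLemma (Q A : Type u) [Field Q] [Field A] [IsAlgClosed Q]
    [Differential Q] [Differential A] [Algebra Q A] [DifferentialAlgebra Q A]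
    (M : Subfield A) {n m : Type} [Fintype n] (ρ : m → n → A)
    (hρ : ∀ j i, ρ j i ∈ M ⊔ cst A)
    (Inv : (T : DX Q) → Subfield T.C → Prop) (T0 : DX Q) (N0 : Subfield T0.C) (h0 : Inv T0 N0)
    (step : ∀ (T : DX Q) (N : Subfield T.C), Inv T N → ∀ (W : DX Q) (a : A →ₐ[Q] W.C)
      (t : T.C →ₐ[Q] W.C), DHom a.toRingHom → DHom t.toRingHom →
      Function.Injective (Algebra.TensorProduct.productMap a t) →
      Inv W (N.map t.toRingHom ⊔ M.map a.toRingHom)) :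
    ∃ (T : DX Q) (N : Subfield T.C), Inv T N ∧ ∃ (p : ℕ) (r : Fin p → n → T.C),
      (∀ b i, r b i ∈ N ⊔ cst T.C) ∧
      (∀ z : n → Q, (∀ j, ∑ i, ρ j i * algebraMap Q A (z i) = 0) →
        ∀ b, ∑ i, r b i * algebraMap Q T.C (z i) = 0) ∧
      ∃ (W : DX Q) (a : A →ₐ[Q] W.C) (t : T.C →ₐ[Q] W.C), DHom a.toRingHom ∧ DHom t.toRingHom ∧
        Function.Injective (Algebra.TensorProduct.productMap a t) ∧
        ∀ j, (fun i => a (ρ j i)) ∈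
          Submodule.span W.C (Set.range fun b => fun i => t (r b i)) := by
  classical
  let P : ℕ → Prop := fun p => ∃ (T : DX Q) (N : Subfield T.C), Inv T N ∧ ∃ (r : Fin p → n → T.C),
      (∀ b i, r b i ∈ N ⊔ cst T.C) ∧
      (∀ z : n → Q, (∀ j, ∑ i, ρ j i * algebraMap Q A (z i) = 0) →
        ∀ b, ∑ i, r b i * algebraMap Q T.C (z i) = 0) ∧ LinearIndependent T.C r
  have hP0 : P 0 := ⟨T0, N0, h0, Fin.elim0, fun b => b.elim0, fun _ _ b => b.elim0,
    linearIndependent_empty_type⟩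
  have hbound : ∀ p, P p → p ≤ Fintype.card n := by
    rintro p ⟨T, N, -, r, -, -, hr⟩
    have := hr.fintype_card_le_finrank
    simpa using this
  obtain ⟨p, hp, hmax⟩ : ∃ p, P p ∧ ¬ P (p + 1) := by
    by_contra! h
    have : ∀ p, P p := fun p => Nat.rec hP0 (fun p hp => h p hp) p
    have := hbound _ (this (Fintype.card n + 1))
    omega
  obtain ⟨T, N, hI, r, hrN, hrz, hrl⟩ := hp
  refine ⟨T, N, hI, p, r, hrN, hrz, ?_⟩
  obtain ⟨W, a, t, ha, ht, hinj⟩ := amalgam Q A T.C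
  refine ⟨W, a, t, ha, ht, hinj, ?_⟩
  intro j
  by_contra hj
  apply hmax
  have hsup : (N ⊔ cst T.C).map t.toRingHom ≤
      (N.map t.toRingHom ⊔ M.map a.toRingHom) ⊔ cst W.C := by
    rw [Subfield.map_sup]
    exact sup_le (le_sup_left.trans le_sup_left) (ht.map_cst.trans le_sup_right)
  have hsup2 : (M ⊔ cst A).map a.toRingHom ≤
      (N.map t.toRingHom ⊔ M.map a.toRingHom) ⊔ cst W.C := by
    rw [Subfield.map_sup]
    exact sup_le (le_sup_right.trans le_sup_left) (ha.map_cst.trans le_sup_right)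
  refine ⟨W, _, step T N hI W a t ha ht hinj,
    Fin.cons (fun i => a (ρ j i)) (fun b i => t (r b i)), ?_, ?_, ?_⟩
  · intro b i
    refine Fin.cases ?_ (fun b => ?_) b
    · exact hsup2 ⟨ρ j i, hρ j i, rfl⟩
    · exact hsup ⟨r b i, hrN b i, rfl⟩
  · intro z hz b
    refine Fin.cases ?_ (fun b => ?_) b
    · have := congrArg a (hz j)
      simpa [map_sum] using this
    · have := congrArg t (hrz z hz b)
      simpa [map_sum] using this
  · rw [linearIndependent_finCons]
    refine ⟨?_, hj⟩
    letI : Algebra T.C W.C := t.toRingHom.toAlgebra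
    rw [Fintype.linearIndependent_iff]
    intro g hg b
    obtain ⟨d, s, c, hs, hc⟩ := exists_decomp T.C W.C g
    have h1 : ∀ i e, ∑ b, c e b * r b i = 0 := by
      intro i e
      have h2 := congrFun hg i
      have h3 : ∑ e, (∑ b, c e b * r b i) • s e = 0 := by
        rw [Pi.zero_apply] at h2
        rw [← h2]
        simp only [Finset.sum_apply, Pi.smul_apply, smul_eq_mul, hc, Finset.sum_smul,
          Finset.sum_mul]
        rw [Finset.sum_comm]
        refine Finset.sum_congr rfl fun b _ => Finset.sum_congr rfl fun e _ => ?_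
        rw [Algebra.smul_def, Algebra.smul_def, map_mul]
        change _ = _ * algebraMap T.C W.C (r b i)
        ring
      exact Fintype.linearIndependent_iff.mp hs _ h3 e
    have h4 : ∀ e b, c e b = 0 := by
      intro e
      apply Fintype.linearIndependent_iff.mp hrl
      ext i
      simpa using h1 i e
    rw [hc b]
    simp [h4]


/-- relative algebraic closure as a subfield -/
def acl {T : Type*} [Field T] (N : Subfield T) : Subfield T := (algebraicClosure N T).toSubfield

theorem mem_acl {T : Type*} [Field T] {N : Subfield T} {z : T} : z ∈ acl N ↔ IsAlgebraic N z :=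
  mem_algebraicClosure_iff

theorem le_acl {T : Type*} [Field T] (N : Subfield T) : N ≤ acl N := fun z hz =>
  mem_acl.mpr (isAlgebraic_algebraMap (⟨z, hz⟩ : N))

theorem ai_mono {ι T : Type*} [Field T] {N N' : Subfield T} {x : ι → T} (h : N' ≤ N)
    (hx : AlgebraicIndependent N x) : AlgebraicIndependent N' x :=
  AlgebraicIndependent.of_ringHom_of_comp_eq (Subfield.inclusion h) (RingHom.id T) hx
    (Subfield.inclusion h).injective rfl

theorem alg_mono {T : Type*} [Field T] {N N' : Subfield T} {z : T} (h : N ≤ N')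
    (hx : IsAlgebraic N z) : IsAlgebraic N' z :=
  IsAlgebraic.ringHom_of_comp_eq (Subfield.inclusion h) (RingHom.id T) hx
    (Subfield.inclusion h).injective rfl

theorem map_mono' {T W : Type*} [Field T] [Field W] (f : T →+* W) {N N' : Subfield T}
    (h : N ≤ N') : N.map f ≤ N'.map f := by
  rintro _ ⟨z, hz, rfl⟩
  exact ⟨z, h hz, rfl⟩

theorem acl_mono {T : Type*} [Field T] {N N' : Subfield T} (h : N ≤ N') : acl N ≤ acl N' :=
  fun _ hz => mem_acl.mpr (alg_mono h (mem_acl.mp hz))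

theorem acl_acl {T : Type*} [Field T] (N : Subfield T) : acl (acl N) = acl N := by
  refine le_antisymm (fun z hz => ?_) (le_acl _)
  have h1 : IsAlgebraic (algebraicClosure N T) z := mem_acl.mp hz
  exact mem_acl.mpr (h1.restrictScalars N)

theorem ai_acl {ι T : Type*} [Field T] {N : Subfield T} {x : ι → T}
    (hx : AlgebraicIndependent N x) : AlgebraicIndependent (acl N) x :=
  hx.extendScalars (algebraicClosure N T)

theorem ai_map {ι T W : Type*} [Field T] [Field W] (f : T →+* W) {N : Subfield T} {x : ι → T} :
    AlgebraicIndependent (N.map f) (f ∘ x) ↔ AlgebraicIndependent N x := by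
  refine algebraicIndependent_ringHom_iff_of_comp_eq (N.equivMapOfInjective f f.injective) f f.injective ?_
  ext; rfl

theorem acl_map {T W : Type*} [Field T] [Field W] (f : T →+* W) (N : Subfield T) :
    (acl N).map f ≤ acl (N.map f) := by
  rintro _ ⟨z, hz, rfl⟩
  refine mem_acl.mpr ?_
  exact IsAlgebraic.ringHom_of_comp_eq (N.equivMapOfInjective f f.injective) f (mem_acl.mp hz)
    (N.equivMapOfInjective f f.injective).injective (by ext; rfl)

theorem ai_sum {ι κ T : Type*} [Field T] {N P : Subfield T} {x : ι → T} {y : κ → T}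
    (hx : AlgebraicIndependent N x) (hNP : N ≤ P) (hxP : ∀ i, x i ∈ P)
    (hy : AlgebraicIndependent P y) : AlgebraicIndependent N (Sum.elim y x) := by
  letI : Algebra N P := (Subfield.inclusion hNP).toAlgebra
  haveI : IsScalarTower N P T := IsScalarTower.of_algebraMap_eq fun _ => rfl
  exact hx.sumElim_of_tower (S := P) (by rintro _ ⟨i, rfl⟩; exact ⟨⟨x i, hxP i⟩, rfl⟩) hy

theorem ai_of_sum {ι κ T : Type*} [Field T] {N P : Subfield T} {x : ι → T} {y : κ → T}
    (h : AlgebraicIndependent N (Sum.elim y x))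
    (hP : P ≤ acl (Subfield.closure (N ∪ Set.range x))) : AlgebraicIndependent P y := by
  obtain ⟨h1, h2⟩ := AlgebraicIndependent.sumElim_iff.mp h
  refine ai_mono hP (ai_acl ?_)
  have h3 := h2.subalgebraAlgebraicClosure
  let f : Subfield.closure (N ∪ Set.range x) →+*
      Subalgebra.algebraicClosure (Algebra.adjoin N (Set.range x)) T :=
    (Subfield.subtype _).codRestrict _ (by
      rintro ⟨z, hz⟩
      change IsAlgebraic _ z
      induction hz using Subfield.closure_induction with
      | mem z hz =>
        rcases hz with hz | hz
        · exact isAlgebraic_algebraMap (algebraMap N (Algebra.adjoin N (Set.range x)) ⟨z, hz⟩)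
        · exact isAlgebraic_algebraMap (⟨z, Algebra.subset_adjoin hz⟩ : Algebra.adjoin N (Set.range x))
      | one => exact isAlgebraic_one
      | add _ _ _ _ h1 h2 => exact h1.add h2
      | neg _ _ h1 => exact h1.neg
      | inv _ _ h1 => exact h1.inv
      | mul _ _ _ _ h1 h2 => exact h1.mul h2)
  exact AlgebraicIndependent.of_ringHom_of_comp_eq f (RingHom.id T) h3
    f.injective rfl

theorem ai_swap {ι κ T : Type*} [Field T] {N : Subfield T} {x : ι → T} {y : κ → T}
    (h : AlgebraicIndependent N (Sum.elim y x)) : AlgebraicIndependent N (Sum.elim x y) := by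
  have := h.comp Sum.swap Sum.swap_leftInverse.injective
  convert this using 1
  ext (i | i) <;> rfl

theorem exists_tb {T : Type*} [Field T] (k N : Subfield T) :
    ∃ Y : Set T, Y ⊆ N ∧ AlgebraicIndependent k ((↑) : Y → T) ∧
      N ≤ acl (Subfield.closure (k ∪ Y)) := by
  have hemp : AlgebraicIndependent k ((↑) : (∅ : Set T) → T) := algebraicIndependent_empty
  obtain ⟨Y, -, hY⟩ := exists_maximal_algebraicIndependent (R := k) ∅ (N : Set T) (by simp) hemp
  have hY1 : AlgebraicIndependent k ((↑) : Y → T) := hY.prop.1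
  have hY2 : Y ⊆ N := hY.prop.2
  refine ⟨Y, hY2, hY1, fun z hz => ?_⟩
  by_contra hzn
  have h1 : AlgebraicIndependent (Subfield.closure (k ∪ Y)) (fun _ : Unit => z) := by
    rw [algebraicIndependent_unique_type_iff]
    exact fun h => hzn (mem_acl.mpr h)
  have hle : k ≤ Subfield.closure (k ∪ Y) := fun x hx => Subfield.subset_closure (Or.inl hx)
  have h2 : AlgebraicIndependent k (Sum.elim (fun _ : Unit => z) ((↑) : Y → T)) :=
    ai_sum hY1 hle (fun i => Subfield.subset_closure (Or.inr i.2)) h1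
  have h3 := h2.to_subtype_range
  have h4 : insert z Y ⊆ Y := by
    refine hY.le_of_ge ⟨?_, Set.insert_subset hz hY2⟩ (Set.subset_insert _ _)
    have : Set.range (Sum.elim (fun _ : Unit => z) ((↑) : Y → T)) = insert z Y := by
      ext w; simp [eq_comm]
    rwa [this] at h3
  exact hzn (le_acl _ (Subfield.subset_closure (Or.inr (h4 (Set.mem_insert _ _)))))

/-- freeness from `K0` over `k0` -/
def FreeK {Q : Type*} [Field Q] (k0 K0 : Subfield Q) (T : Type*) [Field T] [Algebra Q T]
    (N : Subfield T) : Prop :=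
  ∀ s : Set Q, s ⊆ K0 → AlgebraicIndependent k0 ((↑) : s → Q) →
    AlgebraicIndependent N (fun i : s => algebraMap Q T i)

theorem ai_amalgam {ι Q A T W : Type*} [Field Q] [Field A] [Field T] [Field W] [Algebra Q A]
    [Algebra Q T] [Algebra Q W] (a : A →ₐ[Q] W) (t : T →ₐ[Q] W)
    (hinj : Function.Injective (Algebra.TensorProduct.productMap a t)) (y : ι → T)
    (hy : AlgebraicIndependent Q y) : AlgebraicIndependent a.toRingHom.fieldRange (t ∘ y) := by
  have hs : LinearIndependent Q (fun m : ι →₀ ℕ => MvPolynomial.aeval y (MvPolynomial.monomial m (1 : Q))) := by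
    have := (MvPolynomial.basisMonomials ι Q).linearIndependent.map'
      (MvPolynomial.aeval y : MvPolynomial ι Q →ₐ[Q] T).toLinearMap
      (LinearMap.ker_eq_bot.mpr hy)
    have h2 : (fun m : ι →₀ ℕ => MvPolynomial.aeval y (MvPolynomial.monomial m (1 : Q))) =
      (MvPolynomial.aeval y : MvPolynomial ι Q →ₐ[Q] T).toLinearMap ∘
        (MvPolynomial.basisMonomials ι Q) := by
      ext m
      simp
    rw [h2]
    exact this
  rw [algebraicIndependent_iff]
  intro p hp
  have hA : ∀ z : a.toRingHom.fieldRange, ∃ x : A, a x = z := fun z => z.2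
  choose g hg using hA
  have h1 := amalgam_orth a t hinj (fun m : p.support => MvPolynomial.aeval y (MvPolynomial.monomial m.1 (1 : Q)))
    (hs.comp _ Subtype.val_injective) (fun m => g (p.coeff m.1)) (by
      rw [MvPolynomial.as_sum p, map_sum] at hp
      rw [← hp, ← Finset.sum_coe_sort p.support]
      refine Finset.sum_congr rfl fun m _ => ?_
      rw [hg, MvPolynomial.aeval_monomial, MvPolynomial.aeval_monomial]
      simp only [Finsupp.prod, map_one, one_mul, map_prod, map_pow, Function.comp]
      rfl)
  ext m
  by_cases hm : m ∈ p.support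
  · have := h1 ⟨m, hm⟩
    have h2 := hg (p.coeff m)
    rw [MvPolynomial.coeff_zero, ← h2]
    simp at this
    simp [this]
  · rw [MvPolynomial.notMem_support_iff.mp hm, MvPolynomial.coeff_zero]

theorem free_amalgam {Q A T W : Type*} [Field Q] [Field A] [Field T] [Field W] [Algebra Q A]
    [Algebra Q T] [Algebra Q W] (k0 K0 : Subfield Q) (hQ : acl K0 = ⊤)
    (a : A →ₐ[Q] W) (t : T →ₐ[Q] W)
    (hinj : Function.Injective (Algebra.TensorProduct.productMap a t))
    (M : Subfield A) (N : Subfield T) (hkM : k0.map (algebraMap Q A) ≤ M) (hkN : k0.map (algebraMap Q T) ≤ N)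
    (hM : FreeK k0 K0 A M) (hN : FreeK k0 K0 T N) :
    FreeK k0 K0 W (N.map t.toRingHom ⊔ M.map a.toRingHom) := by
  obtain ⟨X, hXK, hX, hXa⟩ := exists_tb k0 K0
  obtain ⟨Y, hYN, hY, hYa⟩ := exists_tb (k0.map (algebraMap Q T)) N
  have h1 := ai_swap (ai_sum hY hkN (fun i => hYN i.2) (hN X hXK hX))
  have h2 : AlgebraicIndependent (algebraMap Q T).fieldRange ((↑) : Y → T) := by
    refine ai_of_sum h1 ?_
    have h3 : (⊤ : Subfield Q) ≤ acl (Subfield.closure (k0 ∪ X)) := by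
      rw [← hQ, ← acl_acl (Subfield.closure _)]
      exact acl_mono hXa
    rw [RingHom.fieldRange_eq_map]
    refine (map_mono' (algebraMap Q T) h3).trans ((acl_map _ _).trans (acl_mono ?_))
    rw [RingHom.map_field_closure]
    refine Subfield.closure_mono ?_
    rw [Set.image_union]
    refine Set.union_subset_union (by rfl) ?_
    rintro _ ⟨x, hx, rfl⟩
    exact ⟨⟨x, hx⟩, rfl⟩
  have h3 : AlgebraicIndependent Q ((↑) : Y → T) :=
    AlgebraicIndependent.of_ringHom_of_comp_eq (algebraMap Q T).rangeRestrictField (RingHom.id T) h2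
      (algebraMap Q T).rangeRestrictField.injective rfl
  have h4 := ai_amalgam a t hinj _ h3
  intro s hs hsi
  have h5 := (ai_map a.toRingHom).mpr (hM s hs hsi)
  have h6 : (a.toRingHom ∘ fun i : s => algebraMap Q A i) = fun i : s => algebraMap Q W i := by
    ext i; exact a.commutes _
  rw [h6] at h5
  have h7 := ai_sum h5 (P := a.toRingHom.fieldRange) (by
      rintro _ ⟨z, _, rfl⟩; exact ⟨z, rfl⟩)
    (fun i => ⟨algebraMap Q A i, a.commutes _⟩) h4
  refine ai_of_sum (ai_swap h7) ?_
  refine sup_le ?_ (fun x hx => le_acl _ (Subfield.subset_closure (Or.inl hx)))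
  refine (map_mono' _ hYa).trans ((acl_map _ _).trans ?_)
  refine acl_mono ?_
  rw [RingHom.map_field_closure, Subfield.closure_le, Set.image_union]
  rintro _ (⟨_, ⟨z, hz, rfl⟩, rfl⟩ | ⟨z, hz, rfl⟩)
  · refine Subfield.subset_closure (Or.inl ⟨algebraMap Q A z, hkM ⟨z, hz, rfl⟩, ?_⟩)
    exact (a.commutes z).trans (t.commutes z).symm
  · exact Subfield.subset_closure (Or.inr ⟨⟨z, hz⟩, rfl⟩)


theorem dstable_closure {T : Type*} [Field T] [Differential T] (S : Set T)
    (h : ∀ s ∈ S, s′ ∈ Subfield.closure S) : ∀ x ∈ Subfield.closure S, x′ ∈ Subfield.closure S := by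
  intro x hx
  induction hx using Subfield.closure_induction with
  | mem z hz => exact h z hz
  | one => simp
  | add _ _ _ _ h1 h2 => simpa using add_mem h1 h2
  | neg _ _ h1 => simpa using h1
  | inv z hz h1 => rw [deriv_inv_field]; exact div_mem (neg_mem h1) (pow_mem hz 2)
  | mul a b ha hb h1 h2 =>
    simp only [Derivation.leibniz, smul_eq_mul]
    exact add_mem (mul_mem ha h2) (mul_mem hb h1)

theorem dstable_sup {T : Type*} [Field T] [Differential T] (N P : Subfield T)
    (hN : ∀ x ∈ N, x′ ∈ N) (hP : ∀ x ∈ P, x′ ∈ P) : ∀ x ∈ N ⊔ P, x′ ∈ N ⊔ P := by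
  have hcl : N ⊔ P = Subfield.closure (N ∪ P) := by
    rw [Subfield.closure_union, Subfield.closure_eq, Subfield.closure_eq]
  rw [hcl]
  · refine dstable_closure _ ?_
    rintro s (hs | hs)
    · exact Subfield.subset_closure (Or.inl (hN s hs))
    · exact Subfield.subset_closure (Or.inr (hP s hs))

theorem dstable_map {T W : Type*} [Field T] [Differential T] [Field W] [Differential W]
    (f : T →+* W) (hf : DHom f) (N : Subfield T)
    (hN : ∀ x ∈ N, x′ ∈ N) : ∀ x ∈ N.map f, x′ ∈ N.map f := by
  rintro _ ⟨x, hx, rfl⟩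
  exact ⟨x′, hN x hx, hf x⟩

theorem dstable_cst (T : Type*) [Field T] [Differential T] : ∀ x ∈ cst T, x′ ∈ cst T := by
  intro x hx
  rw [mem_cst] at hx
  rw [hx]; exact zero_mem _

theorem generic_apply (Q A : Type u) [Field Q] [Field A] [IsAlgClosed Q]
    [Differential Q] [Differential A] [Algebra Q A] [DifferentialAlgebra Q A]
    (M : Subfield A) {n m : Type} [Fintype n] (ρ : m → n → A)
    (hρ : ∀ j i, ρ j i ∈ M ⊔ cst A)
    (Inv : (T : DX Q) → Subfield T.C → Prop) (T0 : DX Q) (N0 : Subfield T0.C) (h0 : Inv T0 N0)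
    (step : ∀ (T : DX Q) (N : Subfield T.C), Inv T N → ∀ (W : DX Q) (a : A →ₐ[Q] W.C)
      (t : T.C →ₐ[Q] W.C), DHom a.toRingHom → DHom t.toRingHom →
      Function.Injective (Algebra.TensorProduct.productMap a t) →
      Inv W (N.map t.toRingHom ⊔ M.map a.toRingHom))
    (v : n → Q) (hv : ∀ j, ∑ i, ρ j i * algebraMap Q A (v i) = 0) :
    ∃ (T : DX Q) (N : Subfield T.C), Inv T N ∧
      ∃ (W : DX Q) (a : A →ₐ[Q] W.C) (t : T.C →ₐ[Q] W.C), DHom a.toRingHom ∧ DHom t.toRingHom ∧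
        Function.Injective (Algebra.TensorProduct.productMap a t) ∧
        ∃ (d : ℕ) (s : Fin d → T.C) (c : Fin d → n → T.C), (∀ e i, c e i ∈ N ⊔ cst T.C) ∧
          (∀ e j, ∑ i, a (ρ j i) * t (c e i) = 0) ∧
          ∀ i, algebraMap Q T.C (v i) = ∑ e, c e i * s e := by
  obtain ⟨T, N, hI, p, r, hr, hrz, W, a, t, ha, ht, hinj, hspan⟩ :=
    genericLemma Q A M ρ hρ Inv T0 N0 h0 step
  refine ⟨T, N, hI, W, a, t, ha, ht, hinj, ?_⟩
  obtain ⟨d, s, c, hc, hcr, hcv⟩ := rational_span (N ⊔ cst T.C) r hr _ (hrz v hv)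
  refine ⟨d, s, c, hc, fun e j => ?_, hcv⟩
  have key : ∀ y ∈ Submodule.span W.C (Set.range fun b => fun i => t (r b i)),
      ∑ i, y i * t (c e i) = 0 := by
    intro y hy
    induction hy using Submodule.span_induction with
    | mem y hy =>
      obtain ⟨b, rfl⟩ := hy
      have := congrArg t (hcr e b)
      simpa [map_sum] using this
    | zero => simp
    | add y z _ _ h1 h2 => simp [add_mul, Finset.sum_add_distrib, h1, h2]
    | smul w y _ h1 => simp [mul_assoc, ← Finset.mul_sum, h1]
  exact key _ (hspan j)

section II
variable {Q : Type u} [Field Q] [IsAlgClosed Q] [Differential Q] (k0 K0 : Subfield Q)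

/-- the invariant for part one -/
def FInv (T : DX Q) (N : Subfield T.C) : Prop :=
  k0.map (algebraMap Q T.C) ≤ N ∧ (∀ x ∈ N, x′ ∈ N) ∧ FreeK k0 K0 T.C N

theorem FInv.step (hQ : acl K0 = ⊤) {A T W : DX Q} {M : Subfield A.C} {N : Subfield T.C}
    (hM : FInv k0 K0 A M) (hN : FInv k0 K0 T N) (a : A.C →ₐ[Q] W.C) (t : T.C →ₐ[Q] W.C)
    (ha : DHom a.toRingHom) (ht : DHom t.toRingHom)
    (hinj : Function.Injective (Algebra.TensorProduct.productMap a t)) :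
    FInv k0 K0 W (N.map t.toRingHom ⊔ M.map a.toRingHom) := by
  refine ⟨?_, dstable_sup _ _ (dstable_map _ ht _ hN.2.1) (dstable_map _ ha _ hM.2.1),
    free_amalgam k0 K0 hQ a t hinj M N hM.1 hN.1 hM.2.2 hN.2.2⟩
  refine le_trans ?_ le_sup_left
  rintro _ ⟨z, hz, rfl⟩
  exact ⟨algebraMap Q T.C z, hN.1 ⟨z, hz, rfl⟩, t.commutes z⟩

def IIset : Set Q := {x | ∃ (T : DX Q) (N : Subfield T.C), FInv k0 K0 T N ∧
  algebraMap Q T.C x ∈ N ⊔ cst T.C}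

theorem II_directed (hQ : acl K0 = ⊤) {x y : Q} (hx : x ∈ IIset k0 K0) (hy : y ∈ IIset k0 K0) :
    ∃ (T : DX Q) (N : Subfield T.C), FInv k0 K0 T N ∧
      algebraMap Q T.C x ∈ N ⊔ cst T.C ∧ algebraMap Q T.C y ∈ N ⊔ cst T.C := by
  obtain ⟨A, M, hM, hx⟩ := hx
  obtain ⟨T, N, hN, hy⟩ := hy
  obtain ⟨W, a, t, ha, ht, hinj⟩ := amalgam Q A.C T.C
  refine ⟨W, _, FInv.step k0 K0 hQ hM hN a t ha ht hinj, ?_, ?_⟩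
  · have h1 : (M ⊔ cst A.C).map a.toRingHom ≤
      (N.map t.toRingHom ⊔ M.map a.toRingHom) ⊔ cst W.C := by
      rw [Subfield.map_sup]
      exact sup_le (le_sup_right.trans le_sup_left) (ha.map_cst.trans le_sup_right)
    exact h1 ⟨_, hx, a.commutes x⟩
  · have h1 : (N ⊔ cst T.C).map t.toRingHom ≤
      (N.map t.toRingHom ⊔ M.map a.toRingHom) ⊔ cst W.C := by
      rw [Subfield.map_sup]
      exact sup_le (le_sup_left.trans le_sup_left) (ht.map_cst.trans le_sup_right)
    exact h1 ⟨_, hy, t.commutes y⟩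

theorem FInv.base (hk : ∀ x ∈ k0, x′ ∈ k0) : 
    FInv k0 K0 (DX.mk (Q := Q) Q) (k0.map (algebraMap Q Q)) := by
  refine ⟨le_rfl, ?_, ?_⟩
  · rintro _ ⟨x, hx, rfl⟩
    exact ⟨x′, hk x hx, rfl⟩
  · intro s hs hi
    exact (ai_map (algebraMap Q Q)).mpr hi

/-- the field of all elements coming from constants -/
def II (hQ : acl K0 = ⊤) (hk : ∀ x ∈ k0, x′ ∈ k0) : Subfield Q where
  carrier := IIset k0 K0
  zero_mem' := ⟨_, _, FInv.base k0 K0 hk, by rw [map_zero]; exact zero_mem _⟩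
  one_mem' := ⟨_, _, FInv.base k0 K0 hk, by rw [map_one]; exact one_mem _⟩
  add_mem' := by
    intro a b ha hb
    obtain ⟨T, N, h, h1, h2⟩ := II_directed k0 K0 hQ ha hb
    exact ⟨T, N, h, by rw [map_add]; exact add_mem h1 h2⟩
  mul_mem' := by
    intro a b ha hb
    obtain ⟨T, N, h, h1, h2⟩ := II_directed k0 K0 hQ ha hb
    exact ⟨T, N, h, by rw [map_mul]; exact mul_mem h1 h2⟩
  neg_mem' := by
    rintro a ⟨T, N, h, h1⟩
    exact ⟨T, N, h, by rw [map_neg]; exact neg_mem h1⟩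
  inv_mem' := by
    rintro a ⟨T, N, h, h1⟩
    exact ⟨T, N, h, by rw [map_inv₀]; exact inv_mem h1⟩

theorem II_dstable (hQ : acl K0 = ⊤) (hk : ∀ x ∈ k0, x′ ∈ k0) :
    ∀ x ∈ II k0 K0 hQ hk, x′ ∈ II k0 K0 hQ hk := by
  rintro x ⟨T, N, h, h1⟩
  refine ⟨T, N, h, ?_⟩
  rw [← deriv_algebraMap]
  exact dstable_sup _ _ h.2.1 (dstable_cst _) _ h1

theorem k_le_II (hQ : acl K0 = ⊤) (hk : ∀ x ∈ k0, x′ ∈ k0) : k0 ≤ II k0 K0 hQ hk :=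
  fun x hx => ⟨_, _, FInv.base k0 K0 hk, le_sup_left (a := k0.map (algebraMap Q Q)) ⟨x, hx, rfl⟩⟩

theorem II_galois (hQ : acl K0 = ⊤) (hk : ∀ x ∈ k0, x′ ∈ k0) (hkK : k0 ≤ K0) (τ : Q ≃+* Q)
    (hτ : DHom τ.toRingHom) (hK : ∀ x ∈ K0, τ x = x) (x : Q) (hx : x ∈ II k0 K0 hQ hk) :
    τ x ∈ II k0 K0 hQ hk := by
  obtain ⟨T, N, h, h1⟩ := hx
  have hK' : ∀ x ∈ K0, τ.symm x = x := fun x hx => by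
    rw [RingEquiv.symm_apply_eq, hK x hx]
  have hτ' : DHom τ.symm.toRingHom := fun y => by
    apply τ.injective
    have := hτ (τ.symm y)
    simp at this
    simp [this]
  letI al : Algebra Q T.C := ((algebraMap Q T.C).comp τ.symm.toRingHom).toAlgebra
  have hal : ∀ y, @algebraMap Q T.C _ _ al y = @algebraMap Q T.C _ _ T.a (τ.symm y) := fun y => rfl
  haveI da : @DifferentialAlgebra Q T.C _ _ al _ _ := @DifferentialAlgebra.mk Q T.C _ _ al _ _ (fun q => by
    have h1 := hτ' q
    have h2 := @deriv_algebraMap Q T.C _ _ T.a _ _ T.da (τ.symm q)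
    rw [hal, hal]
    exact h2.trans (congrArg _ h1.symm))
  refine ⟨@DX.mk Q _ _ T.C _ _ al da, N, ⟨?_, h.2.1, ?_⟩, ?_⟩
  · rintro _ ⟨z, hz, rfl⟩
    refine h.1 ⟨z, hz, ?_⟩
    change _ = @algebraMap Q T.C _ _ T.a (τ.symm z)
    rw [hK' z (hkK hz)]
  · intro s hs hi
    have := h.2.2 s hs hi
    convert this using 2 with i
    change @algebraMap Q T.C _ _ T.a (τ.symm i) = _
    rw [hK' _ (hs i.2)]
  · change @algebraMap Q T.C _ _ T.a (τ.symm (τ x)) ∈ _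
    simpa using h1

theorem II_vector (hQ : acl K0 = ⊤) (hk : ∀ x ∈ k0, x′ ∈ k0) (A : DX Q) (M : Subfield A.C)
    (hM : FInv k0 K0 A M) {n m : Type} [Fintype n] (ρ : m → n → A.C)
    (hρ : ∀ j i, ρ j i ∈ M ⊔ cst A.C)
    (v : n → Q) (hv : ∀ j, ∑ i, ρ j i * algebraMap Q A.C (v i) = 0)
    (i0 : n) (hi0 : v i0 = 1)
    (huniq : ∀ z : n → Q, (∀ j, ∑ i, ρ j i * algebraMap Q A.C (z i) = 0) →
      ∀ i, z i = z i0 * v i) : ∀ i, v i ∈ II k0 K0 hQ hk := by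
  obtain ⟨T, N, hI, W, a, t, ha, ht, hinj, d, s, c, hc, hcρ, hcv⟩ :=
    generic_apply Q A.C M ρ hρ (FInv k0 K0) _ _ (FInv.base k0 K0 hk)
      (fun T N hN W a t ha ht hinj => FInv.step k0 K0 hQ hM hN a t ha ht hinj) v hv
  intro i
  refine ⟨T, N, hI, ?_⟩
  obtain ⟨e, he⟩ : ∃ e, c e i0 ≠ 0 := by
    by_contra! h
    have := hcv i0
    simp [hi0, h] at this
  have key : ∀ i, c e i = c e i0 * algebraMap Q T.C (v i) := by
    obtain ⟨d', s', q, hs', hq⟩ := exists_decomp Q T.C (c e)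
    have h1 : ∀ b j, ∑ i, ρ j i * algebraMap Q A.C (q b i) = 0 := by
      intro b j
      refine amalgam_orth a t hinj s' hs' (fun b => ∑ i, ρ j i * algebraMap Q A.C (q b i)) ?_ b
      rw [← hcρ e j]
      simp only [map_sum, map_mul, AlgHom.commutes, Finset.sum_mul]
      rw [Finset.sum_comm]
      refine Finset.sum_congr rfl fun i _ => ?_
      rw [hq i, map_sum, Finset.mul_sum]
      refine Finset.sum_congr rfl fun b _ => ?_
      rw [Algebra.smul_def, map_mul, AlgHom.commutes]
      ring
    intro i
    rw [hq i, hq i0, Finset.sum_mul]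
    refine Finset.sum_congr rfl fun b _ => ?_
    rw [huniq _ (h1 b) i, Algebra.smul_def, Algebra.smul_def, map_mul]
    ring
  have h2 : algebraMap Q T.C (v i) = c e i / c e i0 := by
    rw [key i]; field_simp
  rw [h2]
  exact div_mem (hc e i) (hc e i0)
end II


/-- the induced derivation on a stable subfield -/
@[reducible]
def subDiff {T : Type*} [Field T] [Differential T] (N : Subfield T) (hN : ∀ x ∈ N, x′ ∈ N) :
    Differential N :=
  ⟨Derivation.mk' (AddMonoidHom.toIntLinearMap
    { toFun := fun x => ⟨(x : T)′, hN x x.2⟩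
      map_zero' := by ext; simp
      map_add' := by intro x y; ext; simp }) (by
      intro a b
      ext
      simp)⟩

theorem subDiff_coe {T : Type*} [Field T] [Differential T] (N : Subfield T)
    (hN : ∀ x ∈ N, x′ ∈ N) (x : N) :
    letI := subDiff N hN
    ((x′ : N) : T) = (x : T)′ := rfl

theorem subDiff_alg {T : Type*} [Field T] [Differential T] (N : Subfield T)
    (hN : ∀ x ∈ N, x′ ∈ N) :
    letI := subDiff N hN
    DifferentialAlgebra N T :=
  letI := subDiff N hN
  ⟨fun _ => rfl⟩

theorem descent {M n : Type*} [Field M] [Differential M] [Fintype n] (U : Submodule M (n → M))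
    (hD : ∀ u ∈ U, (fun i => (u i)′) ∈ U) (h0 : ∃ u ∈ U, u ≠ 0) :
    ∃ c ∈ U, c ≠ 0 ∧ ∀ i, (c i)′ = 0 := by
  classical
  let sup : (n → M) → ℕ := fun u => (Finset.univ.filter fun i => u i ≠ 0).card
  have hex : ∃ m, ∃ u ∈ U, u ≠ 0 ∧ sup u = m := by
    obtain ⟨u, hu, h⟩ := h0
    exact ⟨_, u, hu, h, rfl⟩
  obtain ⟨u, hu, hu0, hum⟩ := Nat.find_spec hex
  have hmin : ∀ w ∈ U, w ≠ 0 → sup u ≤ sup w := fun w hw hw0 => by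
    rw [hum]; exact Nat.find_min' hex ⟨w, hw, hw0, rfl⟩
  obtain ⟨i0, hi0⟩ := Function.ne_iff.mp hu0
  simp only [Pi.zero_apply] at hi0
  let c : n → M := (u i0)⁻¹ • u
  have hc : c ∈ U := U.smul_mem _ hu
  have hci : c i0 = 1 := by simp [c, hi0]
  refine ⟨c, hc, ?_, ?_⟩
  · intro h
    have := congrFun h i0
    rw [hci] at this
    simp at this
  by_contra hne
  push Not at hne
  obtain ⟨i1, hi1⟩ := hne
  have h2 := hmin _ (hD c hc) (Function.ne_iff.mpr ⟨i1, hi1⟩)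
  have h3 : sup (fun i => (c i)′) < sup u := by
    refine Finset.card_lt_card ?_
    rw [Finset.ssubset_iff_of_subset]
    · refine ⟨i0, by simp [hi0], by simp [hci]⟩
    · intro i hi
      simp only [Finset.mem_filter, Finset.mem_univ, true_and] at hi ⊢
      intro h
      apply hi
      simp [c, h]
  omega

/-- constants: linear independence over constants implies linear independence over the field -/
theorem cst_relation {T n : Type*} [Field T] [Differential T] [Fintype n] (N : Subfield T)
    (hN : ∀ x ∈ N, x′ ∈ N) (w : n → T) (hw : ∀ i, (w i)′ = 0) (a : n → T) (ha : ∀ i, a i ∈ N)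
    (ha0 : a ≠ 0) (h : ∑ i, a i * w i = 0) :
    ∃ c : n → T, (∀ i, c i ∈ N ∧ (c i)′ = 0) ∧ c ≠ 0 ∧ ∑ i, c i * w i = 0 := by
  letI := subDiff N hN
  let U : Submodule N (n → N) :=
    { carrier := {u | ∑ i, (u i : T) * w i = 0}
      zero_mem' := by simp
      add_mem' := by
        intro u v hu hv
        simp only [Set.mem_setOf_eq] at *
        simp [add_mul, Finset.sum_add_distrib, hu, hv]
      smul_mem' := by
        intro r u hu
        simp only [Set.mem_setOf_eq] at *
        simp [mul_assoc, ← Finset.mul_sum, hu] }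
  obtain ⟨c, hc, hc0, hcc⟩ := descent U (by
    intro u hu
    have hu' : ∑ i, (u i : T) * w i = 0 := hu
    change ∑ i, (u i : T)′ * w i = 0
    have := congrArg (fun z : T => z′) hu'
    simpa [map_sum, hw, mul_comm] using this) ⟨fun i => ⟨a i, ha i⟩, h, by
      intro h
      apply ha0
      ext i
      exact congrArg Subtype.val (congrFun h i)⟩
  refine ⟨fun i => c i, fun i => ⟨(c i).2, ?_⟩, ?_, hc⟩
  · exact congrArg Subtype.val (hcc i)
  · intro h
    apply hc0
    ext i
    exact congrFun h i

theorem ai_cst {ι T : Type*} [Field T] [Differential T] (N : Subfield T)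
    (hN : ∀ x ∈ N, x′ ∈ N) (f : ι → T) (hf : ∀ i, (f i)′ = 0) (CN : Subfield T)
    (hCN : ∀ x, x ∈ N → x′ = 0 → x ∈ CN)
    (h : AlgebraicIndependent CN f) : AlgebraicIndependent N f := by
  classical
  rw [algebraicIndependent_iff] at h ⊢
  intro p hp
  by_contra hp0
  have hmon : ∀ m : ι →₀ ℕ, ((m.prod fun i e => f i ^ e) : T)′ = 0 := by
    intro m
    rw [← mem_cst]
    exact prod_mem fun i _ => pow_mem (mem_cst.mpr (hf i)) _
  have hev : ∀ (F : Subfield T) (q : MvPolynomial ι F), MvPolynomial.aeval f q =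
      ∑ m ∈ q.support, ((q.coeff m : F) : T) * m.prod fun i e => f i ^ e := by
    intro F q
    conv_lhs => rw [MvPolynomial.as_sum q, map_sum]
    refine Finset.sum_congr rfl fun m _ => ?_
    rw [MvPolynomial.aeval_monomial]
    rfl
  rw [hev] at hp
  obtain ⟨c, hc, hc0, hcs⟩ := cst_relation N hN (fun m : p.support => m.1.prod fun i e => f i ^ e)
    (fun m => hmon _) (fun m => ((p.coeff m.1 : N) : T)) (fun m => (p.coeff m.1).2)
    (by
      intro h0
      apply hp0
      ext m
      by_cases hm : m ∈ p.support
      · have := congrFun h0 ⟨m, hm⟩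
        simpa using this
      · simp [MvPolynomial.notMem_support_iff.mp hm])
    (by rw [← hp, ← Finset.sum_coe_sort p.support])
  let q : MvPolynomial ι CN := ∑ m : p.support, MvPolynomial.monomial m.1 ⟨c m, hCN _ (hc m).1 (hc m).2⟩
  have hq := h q (by
    simp only [q, map_sum, MvPolynomial.aeval_monomial]
    exact hcs)
  apply hc0
  ext m
  have := congrArg (fun z => ((MvPolynomial.coeff m.1 z : CN) : T)) hq
  simp only [q, MvPolynomial.coeff_sum, MvPolynomial.coeff_monomial, MvPolynomial.coeff_zero] at this
  rw [Finset.sum_eq_single m] at this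
  · simpa using this
  · intro b _ hb
    rw [if_neg]
    exact fun h => hb (Subtype.ext h)
  · simp

open scoped IntermediateField.algebraAdjoinAdjoin in
theorem ai_card {ι T : Type*} [Field T] [Fintype ι] {N : Subfield T} {y : ι → T}
    (hy : AlgebraicIndependent N y) (c : Set T)
    (hc : ∀ i, y i ∈ acl (Subfield.closure (N ∪ c))) : (Fintype.card ι : ℕ∞) ≤ c.encard := by
  classical
  have h1 : (AlgebraicIndependent.matroid N T).Indep (Set.range y) := by
    rw [AlgebraicIndependent.matroid_indep_iff]
    exact hy.to_subtype_range
  have h2 : Set.range y ⊆ (AlgebraicIndependent.matroid N T).closure c := by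
    rw [AlgebraicIndependent.matroid_closure_eq]
    rintro _ ⟨i, rfl⟩
    change IsAlgebraic _ _
    have h3 : IsAlgebraic (Subfield.closure (N ∪ c)) (y i) := mem_acl.mp (hc i)
    have h4 : IsAlgebraic (IntermediateField.adjoin N c) (y i) := by
      have : (IntermediateField.adjoin N c).toSubfield = Subfield.closure (N ∪ c) := by
        rw [IntermediateField.adjoin_toSubfield]
        congr 2
        ext z
        exact ⟨by rintro ⟨a, rfl⟩; exact a.2, fun h => ⟨⟨z, h⟩, rfl⟩⟩
      rw [← this] at h3
      exact h3
    exact h4.restrictScalars (Algebra.adjoin N c)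
  have h3 := h1.encard_le_eRk_of_subset h2
  rw [Matroid.eRk_closure_eq] at h3
  have h4 : (Set.range y).encard = Fintype.card ι := by
    rw [Set.encard_eq_coe_toFinset_card, Set.toFinset_range, Finset.card_image_of_injective _ hy.injective,
      Finset.card_univ]
  rw [← h4]
  exact h3.trans (Matroid.eRk_le_encard _ _)


theorem II_alg {Q : Type u} [Field Q] [CharZero Q] [IsAlgClosed Q] [Differential Q] (k0 K0 : Subfield Q)
    (hQ : acl K0 = ⊤) (hk : ∀ x ∈ k0, x′ ∈ k0) (hkK : k0 ≤ K0) (hK : ∀ x ∈ K0, x′ ∈ K0) :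
    II k0 K0 hQ hk ≤ acl (II k0 K0 hQ hk ⊓ K0) := by
  intro x hx
  haveI : Algebra.IsAlgebraic K0 Q := ⟨fun z => by
    rw [← mem_acl, hQ]; trivial⟩
  haveI : IsAlgClosure K0 Q := ⟨inferInstance, inferInstance⟩
  letI := subDiff K0 hK
  haveI := subDiff_alg K0 hK
  have hint : IsIntegral K0 x := Algebra.IsIntegral.isIntegral x
  have hroot : ∀ y ∈ ((minpoly K0 x).map (algebraMap K0 Q)).roots, y ∈ II k0 K0 hQ hk := by
    intro y hy
    have hc : IsConjRoot K0 x y := by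
      rw [isConjRoot_iff_mem_minpoly_aroots hint]
      exact hy
    obtain ⟨σ, hσ⟩ := isConjRoot_iff_exists_algEquiv.mp hc.symm
    rw [← hσ]
    refine II_galois k0 K0 hQ hk hkK σ.toRingEquiv ?_ (fun z hz => σ.commutes ⟨z, hz⟩) x hx
    refine DHom.of_algebraic (A0 := K0) (σ.toRingEquiv.toRingHom) ?_
    intro z
    have h1 := σ.commutes z
    have h2 := σ.commutes (z′)
    change σ (algebraMap K0 Q (z′)) = ((σ (algebraMap K0 Q z))′)
    rw [h1, h2, deriv_algebraMap]
  have hmon : ((minpoly K0 x).map (algebraMap K0 Q)).Monic := (minpoly.monic hint).map _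
  have h1 : (minpoly K0 x).map (algebraMap K0 Q) ∈
      Polynomial.lifts (algebraMap (II k0 K0 hQ hk) Q) := by
    rw [(IsAlgClosed.splits ((minpoly K0 x).map (algebraMap K0 Q))).eq_prod_roots_of_monic hmon]
    refine multiset_prod_mem _ ?_
    intro a ha
    obtain ⟨y, hy, rfl⟩ := Multiset.mem_map.mp ha
    have : Polynomial.X - Polynomial.C y = Polynomial.map (algebraMap (II k0 K0 hQ hk) Q)
      (Polynomial.X - Polynomial.C ⟨y, hroot y hy⟩) := by
      simp
      rfl
    rw [this]
    exact ⟨_, rfl⟩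
  have h2 : (minpoly K0 x).map (algebraMap K0 Q) ∈
      Polynomial.lifts (algebraMap ↥(II k0 K0 hQ hk ⊓ K0) Q) := by
    rw [Polynomial.lifts_iff_coeff_lifts] at h1 ⊢
    intro n
    obtain ⟨z, hz⟩ := h1 n
    have hm : ((minpoly K0 x).map (algebraMap K0 Q)).coeff n ∈ (II k0 K0 hQ hk ⊓ K0) := by
      refine ⟨?_, ?_⟩
      · change ((minpoly K0 x).map (algebraMap K0 Q)).coeff n ∈ II k0 K0 hQ hk
        rw [← hz]; exact z.2
      · change ((minpoly K0 x).map (algebraMap K0 Q)).coeff n ∈ K0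
        rw [Polynomial.coeff_map]; exact ((minpoly K0 x).coeff n).2
    exact ⟨⟨_, hm⟩, rfl⟩
  obtain ⟨q, hq⟩ := h2
  rw [mem_acl]
  refine ⟨q, ?_, ?_⟩
  · rintro rfl
    rw [← hq] at hmon
    simp at hmon
  · rw [Polynomial.aeval_def, ← Polynomial.eval_map]
    have hq' : q.map (algebraMap ↥(II k0 K0 hQ hk ⊓ K0) Q) = (minpoly K0 x).map (algebraMap K0 Q) := hq
    rw [hq', Polynomial.eval_map, ← Polynomial.aeval_def, minpoly.aeval]

theorem alg_deriv {T : Type*} [Field T] [CharZero T] [Differential T] (P P1 : Subfield T)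
    (hP : ∀ x ∈ P, x′ ∈ P1) (h : P ≤ P1) (z : T) (hz1 : z ∈ P1) (hz : IsAlgebraic P z) : z′ ∈ P1 := by
  have hint : IsIntegral P z := hz.isIntegral
  have hsep : (minpoly P z).Separable := (minpoly.irreducible hint).separable
  have h0 := hsep.aeval_derivative_ne_zero (minpoly.aeval P z)
  set p := minpoly P z with hp
  have h1 := minpoly.aeval P z
  rw [Polynomial.aeval_eq_sum_range] at h1
  have h2 := congrArg (fun w : T => w′) h1
  simp only [map_sum, map_zero] at h2
  have h3 : ∀ i, ((p.coeff i • z ^ i : T))′ =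
      ((p.coeff i : P) : T)′ * z ^ i + (p.coeff i : P) * (i * z ^ (i - 1)) * z′ := by
    intro i
    rw [Algebra.smul_def, Derivation.leibniz, Derivation.leibniz_pow]
    simp only [smul_eq_mul, nsmul_eq_mul]
    change (p.coeff i : T) * _ + _ * (p.coeff i : T)′ = _
    ring
  rw [Finset.sum_congr rfl (fun i _ => h3 i), Finset.sum_add_distrib, ← Finset.sum_mul] at h2
  have h4 : Polynomial.aeval z (Polynomial.derivative p) =
      ∑ i ∈ Finset.range (p.natDegree + 1), (p.coeff i : T) * (i * z ^ (i - 1)) := by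
    rw [Polynomial.derivative_apply, Polynomial.sum_over_range _ (by simp), map_sum]
    refine Finset.sum_congr rfl fun i _ => ?_
    rw [map_mul, Polynomial.aeval_C, map_mul, map_natCast, map_pow, Polynomial.aeval_X, mul_assoc]
    rfl
  rw [← h4] at h2
  have h5 : z′ = -(∑ i ∈ Finset.range (p.natDegree + 1), ((p.coeff i : P) : T)′ * z ^ i) /
      Polynomial.aeval z (Polynomial.derivative p) := by
    rw [eq_div_iff h0]
    linear_combination h2
  rw [h5]
  refine div_mem (neg_mem (sum_mem fun i _ => mul_mem (hP _ (p.coeff i).2) (pow_mem hz1 _))) ?_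
  rw [h4]
  exact sum_mem fun i _ => mul_mem (h (p.coeff i).2) (mul_mem (natCast_mem _ _) (pow_mem hz1 _))

theorem mem_sup_finite {T : Type*} [Field T] (N P : Subfield T) (z : T) (hz : z ∈ N ⊔ P) :
    ∃ c : Set T, c.Finite ∧ c ⊆ P ∧ z ∈ Subfield.closure (N ∪ c) := by
  have hcl : N ⊔ P = Subfield.closure (N ∪ P) := by
    rw [Subfield.closure_union, Subfield.closure_eq, Subfield.closure_eq]
  rw [hcl] at hz
  have hm : ∀ c d : Set T, Subfield.closure (N ∪ c) ≤ Subfield.closure (N ∪ (c ∪ d)) ∧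
      Subfield.closure (N ∪ d) ≤ Subfield.closure (N ∪ (c ∪ d)) := fun c d =>
    ⟨Subfield.closure_mono (Set.union_subset_union_right _ Set.subset_union_left),
     Subfield.closure_mono (Set.union_subset_union_right _ Set.subset_union_right)⟩
  induction hz using Subfield.closure_induction with
  | mem z hz =>
    rcases hz with hz | hz
    · exact ⟨∅, Set.finite_empty, by simp, Subfield.subset_closure (Or.inl hz)⟩
    · exact ⟨{z}, Set.finite_singleton z, by simpa using hz, Subfield.subset_closure (Or.inr rfl)⟩
  | one => exact ⟨∅, Set.finite_empty, by simp, one_mem _⟩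
  | add a b _ _ h1 h2 =>
    obtain ⟨c, hc, hcP, h1⟩ := h1
    obtain ⟨d, hd, hdP, h2⟩ := h2
    exact ⟨c ∪ d, hc.union hd, Set.union_subset hcP hdP, add_mem ((hm c d).1 h1) ((hm c d).2 h2)⟩
  | neg a _ h1 =>
    obtain ⟨c, hc, hcP, h1⟩ := h1
    exact ⟨c, hc, hcP, neg_mem h1⟩
  | inv a _ h1 =>
    obtain ⟨c, hc, hcP, h1⟩ := h1
    exact ⟨c, hc, hcP, inv_mem h1⟩
  | mul a b _ _ h1 h2 =>
    obtain ⟨c, hc, hcP, h1⟩ := h1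
    obtain ⟨d, hd, hdP, h2⟩ := h2
    exact ⟨c ∪ d, hc.union hd, Set.union_subset hcP hdP, mul_mem ((hm c d).1 h1) ((hm c d).2 h2)⟩

theorem ai_seq {T : Type*} [Field T] (k0 : Subfield T) (x : ℕ → T)
    (h : ∀ n, x n ∉ acl (Subfield.closure (k0 ∪ x '' Set.Iio n))) (n : ℕ) :
    AlgebraicIndependent k0 (fun i : Fin n => x i) := by
  induction n with
  | zero => 
    exact algebraicIndependent_empty_type
  | succ n ih =>
    have h1 := ai_sum (P := Subfield.closure (k0 ∪ x '' Set.Iio n)) (y := fun i : Fin 1 => x n) ih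
      (fun z hz => Subfield.subset_closure (Or.inl hz))
      (fun i => Subfield.subset_closure (Or.inr ⟨i, i.2, rfl⟩)) (by
        rw [algebraicIndependent_unique_type_iff]
        exact fun hh => h n (mem_acl.mpr hh))
    have h2 := ai_swap h1
    refine (algebraicIndependent_equiv finSumFinEquiv).mp ?_
    convert h2 using 1
    ext (i | i) <;> simp

theorem II_fg1 {Q : Type u} [Field Q] [CharZero Q] [IsAlgClosed Q] [Differential Q] (k0 K0 : Subfield Q)
    (hQ : acl K0 = ⊤) (hk : ∀ x ∈ k0, x′ ∈ k0) (hkK : k0 ≤ K0) (hK : ∀ x ∈ K0, x′ ∈ K0)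
    (x : Q) (hx : x ∈ II k0 K0 hQ hk) (hxK : x ∈ K0) :
    ∃ S : Set Q, S.Finite ∧ x ∈ S ∧ S ⊆ (II k0 K0 hQ hk ⊓ K0 : Subfield Q) ∧
      ∀ z ∈ Subfield.closure (k0 ∪ S), z′ ∈ Subfield.closure (k0 ∪ S) := by
  let y : ℕ → Q := fun n => (fun z : Q => z′)^[n] x
  have hy : ∀ n, y (n+1) = (y n)′ := fun n => Function.iterate_succ_apply' _ _ _
  have hyI : ∀ n, y n ∈ (II k0 K0 hQ hk ⊓ K0 : Subfield Q) := by
    intro n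
    induction n with
    | zero => exact ⟨hx, hxK⟩
    | succ n ih => rw [hy]; exact ⟨II_dstable k0 K0 hQ hk _ ih.1, hK _ ih.2⟩
  have hdep : ∃ n, y n ∈ acl (Subfield.closure (k0 ∪ y '' Set.Iio n)) := by
    by_contra! hne
    have hai := ai_seq k0 y hne
    obtain ⟨T, N, hF, hm⟩ := hx
    obtain ⟨c, hcf, hcC, hm⟩ := mem_sup_finite _ _ _ hm
    have hst := dstable_closure (N ∪ c : Set T.C) (by
      rintro s (hs | hs)
      · exact Subfield.subset_closure (Or.inl (hF.2.1 s hs))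
      · have : s′ = 0 := hcC hs
        rw [this]; exact zero_mem _)
    have hyc : ∀ n, algebraMap Q T.C (y n) ∈ Subfield.closure (N ∪ c : Set T.C) := by
      intro n
      induction n with
      | zero => exact hm
      | succ n ih => rw [hy, ← deriv_algebraMap]; exact hst _ ih
    have h1 := hai (c.ncard + 1)
    have h2 := hF.2.2 _ (by rintro _ ⟨i, rfl⟩; exact (hyI i).2) h1.to_subtype_range
    have h3 : AlgebraicIndependent N (fun i : Fin (c.ncard + 1) => algebraMap Q T.C (y i)) :=
      h2.comp (fun i : Fin (c.ncard + 1) => (⟨y i, i, rfl⟩ : Set.range fun i : Fin (c.ncard + 1) => y i))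
        (fun i j hij => h1.injective (congrArg Subtype.val hij))
    have h4 := ai_card h3 c (fun i => le_acl _ (hyc i))
    rw [← hcf.cast_ncard_eq, Fintype.card_fin] at h4
    norm_cast at h4
    omega
  obtain ⟨n, hn⟩ := hdep
  refine ⟨y '' Set.Iio (n+1), (Set.finite_Iio _).image _, ⟨0, by simp, rfl⟩, ?_, ?_⟩
  · rintro _ ⟨i, -, rfl⟩
    exact hyI i
  have hle : Subfield.closure (k0 ∪ y '' Set.Iio n) ≤ Subfield.closure (k0 ∪ y '' Set.Iio (n+1)) :=
    Subfield.closure_mono (Set.union_subset_union_right _ (Set.image_mono fun i (hi : i < n) => Nat.lt_succ_of_lt hi))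
  have hstep : ∀ z ∈ (k0 ∪ y '' Set.Iio n : Set Q), z′ ∈ Subfield.closure (k0 ∪ y '' Set.Iio (n+1)) := by
    rintro z (hz | ⟨i, hi, rfl⟩)
    · exact Subfield.subset_closure (Or.inl (hk z hz))
    · rw [← hy]
      exact Subfield.subset_closure (Or.inr ⟨i+1, Nat.succ_lt_succ hi, rfl⟩)
  have hP : ∀ z ∈ Subfield.closure (k0 ∪ y '' Set.Iio n), z′ ∈ Subfield.closure (k0 ∪ y '' Set.Iio (n+1)) := by
    intro z hz
    induction hz using Subfield.closure_induction with
    | mem z hz => exact hstep z hz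
    | one => simp
    | add _ _ _ _ h1 h2 => simpa using add_mem h1 h2
    | neg _ _ h1 => simpa using h1
    | inv z hz h1 => rw [deriv_inv_field]; exact div_mem (neg_mem h1) (pow_mem (hle hz) 2)
    | mul a b ha hb h1 h2 =>
      simp only [Derivation.leibniz, smul_eq_mul]
      exact add_mem (mul_mem (hle ha) h2) (mul_mem (hle hb) h1)
  refine dstable_closure _ ?_
  rintro z (hz | ⟨i, hi, rfl⟩)
  · exact Subfield.subset_closure (Or.inl (hk z hz))
  · rcases Nat.lt_succ_iff_lt_or_eq.mp hi with hi | rfl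
    · exact hstep _ (Or.inr ⟨i, hi, rfl⟩)
    · exact alg_deriv _ _ hP hle _ (Subfield.subset_closure (Or.inr ⟨i, by simp, rfl⟩)) (mem_acl.mp hn)

theorem II_fg {Q : Type u} [Field Q] [CharZero Q] [IsAlgClosed Q] [Differential Q] (k0 K0 : Subfield Q)
    (hQ : acl K0 = ⊤) (hk : ∀ x ∈ k0, x′ ∈ k0) (hkK : k0 ≤ K0) (hK : ∀ x ∈ K0, x′ ∈ K0)
    (Y : Set Q) (hYf : Y.Finite) (hY : Y ⊆ (II k0 K0 hQ hk ⊓ K0 : Subfield Q)) :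
    ∃ S : Set Q, S.Finite ∧ Y ⊆ S ∧ S ⊆ (II k0 K0 hQ hk ⊓ K0 : Subfield Q) ∧
      ∀ z ∈ Subfield.closure (k0 ∪ S), z′ ∈ Subfield.closure (k0 ∪ S) := by
  induction Y, hYf using Set.Finite.induction_on with
  | empty => exact ⟨∅, Set.finite_empty, by simp, by simp, by simpa using hk⟩
  | @insert a s _ _ ih =>
    obtain ⟨S, h1, h2, h3, h4⟩ := ih ((Set.subset_insert _ _).trans hY)
    obtain ⟨S', h1', h2', h3', h4'⟩ := II_fg1 k0 K0 hQ hk hkK hK a (hY (Set.mem_insert _ _)).1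
      (hY (Set.mem_insert _ _)).2
    refine ⟨S ∪ S', h1.union h1', Set.insert_subset (Or.inr h2') (fun z hz => Or.inl (h2 hz)),
      Set.union_subset h3 h3', ?_⟩
    have : Subfield.closure (k0 ∪ (S ∪ S')) = Subfield.closure (k0 ∪ S) ⊔ Subfield.closure (k0 ∪ S') := by
      rw [← Subfield.closure_union]
      congr 1
      ext z; simp; tauto
    rw [this]
    exact dstable_sup _ _ h4 h4'


theorem mem_span_of_closure {Q A : Type*} [Field Q] [Field A] [Algebra Q A] (M : Subfield A) (z : A)
    (hz : z ∈ Subring.closure (Set.range (algebraMap Q A) ∪ M)) : z ∈ Submodule.span Q (M : Set A) := by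
  have h1 : z ∈ Algebra.adjoin Q (M : Set A) := by
    have h : Subring.closure (Set.range (algebraMap Q A) ∪ M) ≤
        (Algebra.adjoin Q (M : Set A)).toSubring := by
      rw [Subring.closure_le]
      rintro w (⟨q, rfl⟩ | hw)
      · exact (Algebra.adjoin Q (M : Set A)).algebraMap_mem q
      · exact Algebra.subset_adjoin hw
    exact h hz
  rw [← Subalgebra.mem_toSubmodule, Algebra.adjoin_eq_span] at h1
  have h2 : (Submonoid.closure (M : Set A) : Set A) = M := by
    exact congrArg SetLike.coe (Submonoid.closure_eq M.toSubring.toSubmonoid)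
  rwa [h2] at h1

theorem II_const {Q : Type u} [Field Q] [CharZero Q] [IsAlgClosed Q] [Differential Q] (k0 K0 : Subfield Q)
    (hQ : acl K0 = ⊤) (hk : ∀ x ∈ k0, x′ ∈ k0) (A : DX Q) (M : Subfield A.C)
    (hM : FInv k0 K0 A M) (f : A.C) (hf : f′ = 0)
    (hfm : f ∈ Subfield.closure (Set.range (algebraMap Q A.C) ∪ M)) :
    f ∈ Subfield.closure (M ∪ algebraMap Q A.C '' (II k0 K0 hQ hk)) := by
  classical
  by_cases hf0 : f = 0
  · rw [hf0]; exact zero_mem _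
  have hex : ∃ n : ℕ, ∃ (v : Fin n → Q) (e e' : Fin n → A.C), (∀ i, e i ∈ M) ∧ (∀ i, e' i ∈ M) ∧
      f * (∑ i, algebraMap Q A.C (v i) * e' i) = (∑ i, algebraMap Q A.C (v i) * e i) ∧
      (∑ i, algebraMap Q A.C (v i) * e' i) ≠ 0 := by
    obtain ⟨p, hp, q, hq, hpq⟩ := Subfield.mem_closure_iff.mp hfm
    have hq0 : q ≠ 0 := by
      rintro rfl
      apply hf0
      rw [← hpq, div_zero]
    obtain ⟨n, v, e, rfl⟩ := Submodule.mem_span_set'.mp (mem_span_of_closure M p hp)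
    obtain ⟨n', v', e', rfl⟩ := Submodule.mem_span_set'.mp (mem_span_of_closure M q hq)
    refine ⟨n + n', fun i => Sum.elim v v' (finSumFinEquiv.symm i),
      fun i => Sum.elim (fun j => (e j : A.C)) (fun _ => 0) (finSumFinEquiv.symm i),
      fun i => Sum.elim (fun _ => 0) (fun j => (e' j : A.C)) (finSumFinEquiv.symm i), ?_, ?_, ?_⟩
    · intro i
      beta_reduce
      rcases finSumFinEquiv.symm i with j | j
      · exact (e j).2
      · exact zero_mem _
    · intro i
      beta_reduce
      rcases finSumFinEquiv.symm i with j | j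
      · exact zero_mem _
      · exact (e' j).2
    have h1 : ∀ g : Fin n ⊕ Fin n' → A.C, ∑ i : Fin (n+n'), g (finSumFinEquiv.symm i) =
        ∑ i, g (Sum.inl i) + ∑ j, g (Sum.inr j) := by
      intro g
      rw [← Fintype.sum_sum_type g]
      exact Fintype.sum_equiv finSumFinEquiv.symm _ _ (fun _ => rfl)
    have h2 := h1 (fun i => algebraMap Q A.C (Sum.elim v v' i) * Sum.elim (fun j => (e j : A.C)) (fun _ => 0) i)
    have h3 := h1 (fun i => algebraMap Q A.C (Sum.elim v v' i) * Sum.elim (fun _ => 0) (fun j => (e' j : A.C)) i)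
    rw [h2, h3]
    simp only [Sum.elim_inl, Sum.elim_inr, mul_zero, Finset.sum_const_zero, add_zero, zero_add,
      ← Algebra.smul_def]
    refine ⟨?_, hq0⟩
    rw [← hpq]
    field_simp
  obtain ⟨v, e, e', he, he', hve, hv0⟩ := Nat.find_spec hex
  have hmin : ∀ m < Nat.find hex, _ := fun m hm => Nat.find_min hex hm
  generalize Nat.find hex = n at *
  have hn : n ≠ 0 := by
    rintro rfl
    simp at hv0
  obtain ⟨m, rfl⟩ := Nat.exists_eq_succ_of_ne_zero hn
  have hnz : ∀ w : Fin (m+1) → Q, f * (∑ i, algebraMap Q A.C (w i) * e' i) =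
      (∑ i, algebraMap Q A.C (w i) * e i) → (∑ i, algebraMap Q A.C (w i) * e' i) ≠ 0 → ∀ i, w i ≠ 0 := by
    intro w h1 h2 i hi
    refine hmin m (Nat.lt_succ_self m) ⟨fun j => w (i.succAbove j), fun j => e (i.succAbove j),
      fun j => e' (i.succAbove j), fun j => he _, fun j => he' _, ?_, ?_⟩
    · rw [Fin.sum_univ_succAbove _ i, Fin.sum_univ_succAbove _ i] at h1
      simpa [hi] using h1
    · rw [Fin.sum_univ_succAbove _ i] at h2
      simpa [hi] using h2
  have hv00 := hnz v hve hv0 0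
  let v1 : Fin (m+1) → Q := fun i => (v 0)⁻¹ * v i
  have hsc : ∀ g : Fin (m+1) → A.C, ∑ i, algebraMap Q A.C (v1 i) * g i =
      algebraMap Q A.C (v 0)⁻¹ * ∑ i, algebraMap Q A.C (v i) * g i := by
    intro g
    simp only [v1, map_mul, Finset.mul_sum, mul_assoc]
  have hv1e : f * (∑ i, algebraMap Q A.C (v1 i) * e' i) = (∑ i, algebraMap Q A.C (v1 i) * e i) := by
    rw [hsc, hsc, ← hve]; ring
  have hv10 : (∑ i, algebraMap Q A.C (v1 i) * e' i) ≠ 0 := by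
    rw [hsc]
    refine mul_ne_zero ?_ hv0
    simpa using hv00
  have hII := II_vector k0 K0 hQ hk A M hM (m := Unit) (fun _ i => e i - f * e' i)
    (fun _ i => sub_mem (le_sup_left (a := M) (he i))
      (mul_mem (le_sup_right (a := M) (show f ∈ cst A.C from hf)) (le_sup_left (a := M) (he' i)))) v1
    (by
      intro _
      simp only [sub_mul, Finset.sum_sub_distrib]
      rw [sub_eq_zero]
      rw [Finset.mul_sum] at hv1e
      rw [Finset.sum_congr rfl (fun i _ => mul_comm _ _), ← hv1e]
      exact Finset.sum_congr rfl fun i _ => by ring) 0 (by simp [v1, hv00]) (by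
      intro z hz
      have hz := hz ()
      have hz' : f * (∑ i, algebraMap Q A.C (z i) * e' i) = (∑ i, algebraMap Q A.C (z i) * e i) := by
        rw [Finset.mul_sum]
        simp only [sub_mul, Finset.sum_sub_distrib] at hz
        rw [sub_eq_zero] at hz
        rw [Finset.sum_congr rfl (fun i _ => mul_comm (algebraMap Q A.C (z i)) (e i)), hz]
        exact Finset.sum_congr rfl fun i _ => by ring
      let u : Fin (m+1) → Q := fun i => z i - z 0 * v1 i
      have hlin : ∀ (a b : Fin (m+1) → Q) (r : Q) (g : Fin (m+1) → A.C),
          ∑ i, algebraMap Q A.C (a i - r * b i) * g i = (∑ i, algebraMap Q A.C (a i) * g i) -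
            algebraMap Q A.C r * ∑ i, algebraMap Q A.C (b i) * g i := by
        intro a b r g
        simp only [map_sub, map_mul, sub_mul, Finset.sum_sub_distrib, Finset.mul_sum, mul_assoc]
      have hu : f * (∑ i, algebraMap Q A.C (u i) * e' i) = (∑ i, algebraMap Q A.C (u i) * e i) := by
        simp only [u, hlin]
        rw [← hz', ← hv1e]; ring
      have hu0 : u 0 = 0 := by simp [u, v1, hv00]
      have hu' : ∑ i, algebraMap Q A.C (u i) * e' i = 0 := by
        by_contra h
        exact hnz u hu h 0 hu0
      rw [hu', mul_zero] at hu
      intro i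
      by_contra hi
      have hui : u i ≠ 0 := sub_ne_zero.mpr hi
      refine hnz (fun j => v1 j - (v1 i / u i) * u j) ?_ ?_ i (by field_simp; ring)
      · rw [hlin v1 u, hlin v1 u, hu', ← hu, hv1e.symm]; ring
      · rw [hlin v1 u, hu', mul_zero, sub_zero]; exact hv10)
  have hfin : f = (∑ i, algebraMap Q A.C (v1 i) * e i) / (∑ i, algebraMap Q A.C (v1 i) * e' i) := by
    rw [eq_div_iff hv10, hv1e]
  rw [hfin]
  have hmem : ∀ g : Fin (m+1) → A.C, (∀ i, g i ∈ M) → ∑ i, algebraMap Q A.C (v1 i) * g i ∈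
      Subfield.closure (M ∪ algebraMap Q A.C '' (II k0 K0 hQ hk)) := fun g hg =>
    sum_mem fun i _ => mul_mem (Subfield.subset_closure (Or.inr ⟨_, hII i, rfl⟩))
      (Subfield.subset_closure (Or.inl (hg i)))
  exact div_mem (hmem e he) (hmem e' he')

theorem partIa {Q : Type u} [Field Q] [CharZero Q] [IsAlgClosed Q] [Differential Q] (k0 K0 : Subfield Q)
    (hQ : acl K0 = ⊤) (hk : ∀ x ∈ k0, x′ ∈ k0) (hkK : k0 ≤ K0) (hK : ∀ x ∈ K0, x′ ∈ K0)
    (A : DX Q) (M : Subfield A.C)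
    (hM : FInv k0 K0 A M) {l : ℕ} (f : Fin l → A.C) (hf : ∀ i, (f i)′ = 0)
    (hfm : ∀ i, f i ∈ Subfield.closure (Set.range (algebraMap Q A.C) ∪ M)) (CN : Subfield A.C)
    (hCN : ∀ x, x ∈ M → x′ = 0 → x ∈ CN) (hai : AlgebraicIndependent CN f) :
    ∃ S : Set Q, S.Finite ∧ S ⊆ (II k0 K0 hQ hk ⊓ K0 : Subfield Q) ∧
      (∀ z ∈ Subfield.closure (k0 ∪ S), z′ ∈ Subfield.closure (k0 ∪ S)) ∧
      ∃ y : Fin l → Q, (∀ i, y i ∈ S) ∧ AlgebraicIndependent k0 y := by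
  have h1 := ai_cst M hM.2.1 f hf CN hCN hai
  obtain ⟨Y, hYI, hYai, hYtb⟩ := exists_tb k0 (II k0 K0 hQ hk ⊓ K0)
  have h2 : ∀ i, f i ∈ acl (Subfield.closure (M ∪ algebraMap Q A.C '' Y)) := by
    intro i
    have h3 := II_const k0 K0 hQ hk A M hM (f i) (hf i) (hfm i)
    have h4 : Subfield.closure (M ∪ algebraMap Q A.C '' (II k0 K0 hQ hk)) ≤
      acl (Subfield.closure (M ∪ algebraMap Q A.C '' Y)) := by
      rw [Subfield.closure_le]
      rintro z (hz | ⟨x, hx, rfl⟩)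
      · exact le_acl _ (Subfield.subset_closure (Or.inl hz))
      · have h5 : x ∈ acl (Subfield.closure (k0 ∪ Y)) := by
          have := acl_mono hYtb (II_alg k0 K0 hQ hk hkK hK hx)
          rwa [acl_acl] at this
        have h6 := acl_map (algebraMap Q A.C) (Subfield.closure (k0 ∪ Y)) ⟨x, h5, rfl⟩
        refine acl_mono ?_ h6
        rw [RingHom.map_field_closure, Set.image_union]
        refine Subfield.closure_mono (Set.union_subset_union_left _ ?_)
        rintro _ ⟨z, hz, rfl⟩
        exact hM.1 ⟨z, hz, rfl⟩
    exact h4 h3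
  have h3 := ai_card h1 _ h2
  rw [Fintype.card_fin, (algebraMap Q A.C).injective.encard_image] at h3
  obtain ⟨Y0, hY0, hc⟩ := Set.exists_subset_encard_eq h3
  have hfin : Y0.Finite := Set.finite_of_encard_eq_coe hc
  obtain ⟨S, h4, h5, h6, h7⟩ := II_fg k0 K0 hQ hk hkK hK Y0 hfin (hY0.trans hYI)
  refine ⟨S, h4, h6, h7, ?_⟩
  have hcard : Nat.card Y0 = l := by
    rw [← hfin.cast_ncard_eq] at hc
    exact_mod_cast hc
  haveI := hfin.to_subtype
  let eq := (Finite.equivFinOfCardEq hcard).symm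
  refine ⟨fun i => eq i, fun i => h5 (eq i).2, ?_⟩
  exact (hYai.comp (Set.inclusion hY0) (Set.inclusion_injective hY0)).comp eq eq.injective


theorem ld_alg {A n : Type*} [Field A] [CharZero A] [IsAlgClosed A] [Fintype n] (κ L : Subfield A)
    (hκ : κ ≤ L) (hκL : acl κ ⊓ L ≤ κ) (l : n → A) (hl : ∀ i, l i ∈ L) (u : n → A)
    (hu : ∀ i, u i ∈ acl κ) (hu0 : u ≠ 0) (h : ∑ i, l i * u i = 0) :
    ∃ c : n → A, (∀ i, c i ∈ κ) ∧ c ≠ 0 ∧ ∑ i, l i * c i = 0 := by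
  classical
  letI : Algebra κ L := (Subfield.inclusion hκ).toAlgebra
  haveI : IsScalarTower κ L A := IsScalarTower.of_algebraMap_eq fun _ => rfl
  let Ω := algebraicClosure L A
  haveI : IsAlgClosure L Ω := inferInstance
  haveI : IsScalarTower κ Ω A := IsScalarTower.of_algebraMap_eq fun _ => rfl
  haveI : IsGalois L Ω := {}
  let sup : (n → A) → ℕ := fun u => (Finset.univ.filter fun i => u i ≠ 0).card
  let Good : (n → A) → Prop := fun u => (∀ i, u i ∈ acl κ) ∧ u ≠ 0 ∧ ∑ i, l i * u i = 0
  have hex : ∃ m, ∃ u, Good u ∧ sup u = m := ⟨_, u, ⟨hu, hu0, h⟩, rfl⟩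
  obtain ⟨u, ⟨hu, hu0, h⟩, hum⟩ := Nat.find_spec hex
  have hmin : ∀ w, Good w → sup u ≤ sup w := fun w hw => by
    rw [hum]; exact Nat.find_min' hex ⟨w, hw, rfl⟩
  obtain ⟨i0, hi0⟩ := Function.ne_iff.mp hu0
  simp only [Pi.zero_apply] at hi0
  let c : n → A := fun i => (u i0)⁻¹ * u i
  have hci : c i0 = 1 := by simp [c, hi0]
  have hcs : ∑ i, l i * c i = 0 := by
    have : ∑ i, l i * c i = (u i0)⁻¹ * ∑ i, l i * u i := by
      rw [Finset.mul_sum]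
      exact Finset.sum_congr rfl fun i _ => by simp only [c]; ring
    rw [this, h, mul_zero]
  have hca : ∀ i, c i ∈ acl κ := fun i => mul_mem (inv_mem (hu i0)) (hu i)
  have hcΩ : ∀ i, c i ∈ Ω := fun i => acl_mono hκ (hca i)
  have hfix : ∀ (σ : Gal(Ω/L)) i, ((σ ⟨c i, hcΩ i⟩ : Ω) : A) = c i := by
    intro σ
    by_contra hne
    push Not at hne
    obtain ⟨i1, hi1⟩ := hne
    let w : n → A := fun i => ((σ ⟨c i, hcΩ i⟩ : Ω) : A) - c i
    have hw : Good w := by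
      refine ⟨fun i => sub_mem ?_ (hca i), Function.ne_iff.mpr ⟨i1, sub_ne_zero.mpr hi1⟩, ?_⟩
      · have h1 : IsAlgebraic κ (⟨c i, hcΩ i⟩ : Ω) :=
          (isAlgebraic_algHom_iff (IsScalarTower.toAlgHom κ Ω A) (algebraMap Ω A).injective).mp
            (mem_acl.mp (hca i))
        have h2 := h1.algHom ((σ : Ω →ₐ[L] Ω).restrictScalars κ)
        exact mem_acl.mpr (h2.algHom (IsScalarTower.toAlgHom κ Ω A))
      · simp only [w, mul_sub, Finset.sum_sub_distrib, hcs, sub_zero]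
        have h1 : ∑ i, (algebraMap L Ω ⟨l i, hl i⟩) * (⟨c i, hcΩ i⟩ : Ω) = 0 := by
          apply Subtype.ext
          refine Eq.trans ?_ hcs
          push_cast
          rfl
        have h2 := congrArg (fun z => ((σ z : Ω) : A)) h1
        simp only [map_sum, map_mul, AlgEquiv.commutes, map_zero] at h2
        push_cast at h2
        exact h2
    have h2 := hmin _ hw
    have h3 : sup w < sup u := by
      refine Finset.card_lt_card ?_
      rw [Finset.ssubset_iff_of_subset]
      · refine ⟨i0, by simp [hi0], ?_⟩
        have h1 : (⟨c i0, hcΩ i0⟩ : Ω) = 1 := Subtype.ext hci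
        have h2 : w i0 = 0 := by
          simp only [w]
          rw [h1, hci, map_one]
          simp
        simp [h2]
      · intro i hi
        simp only [Finset.mem_filter, Finset.mem_univ, true_and] at hi ⊢
        intro h
        apply hi
        have h0 : c i = 0 := by simp [c, h]
        have h1 : (⟨c i, hcΩ i⟩ : Ω) = 0 := Subtype.ext h0
        simp only [w]
        rw [h1, h0, map_zero]
        simp
    omega
  refine ⟨c, fun i => ?_, ?_, hcs⟩
  · refine hκL ⟨hca i, ?_⟩
    have h1 : (⟨c i, hcΩ i⟩ : Ω) ∈ (⊥ : IntermediateField L Ω) := by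
      rw [InfiniteGalois.mem_bot_iff_fixed]
      intro f
      exact Subtype.ext (hfix f i)
    obtain ⟨z, hz⟩ := IntermediateField.mem_bot.mp h1
    have := congrArg (fun z : Ω => (z : A)) hz
    change c i ∈ L
    rw [show c i = (z : A) from this.symm]
    exact z.2
  · intro h
    have := congrFun h i0
    rw [hci] at this
    simp at this

theorem ld_free_aux {F B Q A ι : Type*} [Field F] [IsAlgClosed F] [Field B] [Field Q] [Field A]
    [Algebra F B] [Algebra F Q] [Algebra F A] [Algebra B A] [Algebra Q A] [IsScalarTower F B A]
    [IsScalarTower F Q A] (X : ι → B)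
    (hX : ∀ b : B, IsAlgebraic (Algebra.adjoin F (Set.range X)) b)
    (hai : AlgebraicIndependent Q (fun i => algebraMap B A (X i))) :
    Function.Injective (Algebra.TensorProduct.lift (Algebra.ofId Q A) (IsScalarTower.toAlgHom F B A)
      (fun _ _ => Commute.all _ _)) := by
  set μ := (Algebra.TensorProduct.lift (Algebra.ofId Q A) (IsScalarTower.toAlgHom F B A)
      (fun _ _ => Commute.all _ _)) with hμ
  haveI : IsDomain (Q ⊗[F] B) := tens_domain F Q B
  let S : Subalgebra Q (Q ⊗[F] B) := Algebra.adjoin Q (Set.range fun i => 1 ⊗ₜ[F] (X i))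
  have hSR : ∀ r : Q ⊗[F] B, IsAlgebraic S r := by
    intro r
    induction r using TensorProduct.induction_on with
    | zero => exact isAlgebraic_zero
    | add x y hx hy => exact hx.add hy
    | tmul q b =>
      have h1 : q ⊗ₜ[F] b = algebraMap S (Q ⊗[F] B) ⟨algebraMap Q (Q ⊗[F] B) q, S.algebraMap_mem q⟩ *
          (1 ⊗ₜ b) := by
        change _ = (q ⊗ₜ 1) * (1 ⊗ₜ b)
        simp
      rw [h1]
      refine (isAlgebraic_algebraMap _).mul ?_
      let g : B →ₐ[F] Q ⊗[F] B := Algebra.TensorProduct.includeRight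
      let f : Algebra.adjoin F (Set.range X) →+* S :=
        ((g.toRingHom.comp (algebraMap (Algebra.adjoin F (Set.range X)) B))).codRestrict S (by
          rintro ⟨z, hz⟩
          change g z ∈ S
          induction hz using Algebra.adjoin_induction with
          | mem x hx => obtain ⟨i, rfl⟩ := hx; exact Algebra.subset_adjoin ⟨i, rfl⟩
          | algebraMap r => 
            rw [AlgHom.commutes, IsScalarTower.algebraMap_apply F Q]
            exact S.algebraMap_mem _
          | add x y _ _ h1 h2 => rw [map_add]; exact add_mem h1 h2
          | mul x y _ _ h1 h2 => rw [map_mul]; exact mul_mem h1 h2)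
      have hginj : Function.Injective g := g.toRingHom.injective
      refine IsAlgebraic.ringHom_of_comp_eq f g.toRingHom (hX b) ?_ ?_
      · intro a b hab
        apply Subtype.ext
        apply hginj
        exact congrArg Subtype.val hab
      · ext; rfl
  rw [injective_iff_map_eq_zero]
  intro r hr
  by_contra hr0
  obtain ⟨s, hs0, hs⟩ := (hSR r).exists_nonzero_dvd (mem_nonZeroDivisors_of_ne_zero hr0)
  obtain ⟨t, ht⟩ := hs
  have h1 : μ (s : Q ⊗[F] B) = 0 := by
    have : (s : Q ⊗[F] B) = r * t := ht
    rw [this, map_mul, hr, zero_mul]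
  have h2 : (s : Q ⊗[F] B) ∈ Algebra.adjoin Q (Set.range fun i => 1 ⊗ₜ[F] (X i)) := s.2
  rw [Algebra.adjoin_range_eq_range_aeval] at h2
  obtain ⟨p, hp⟩ := h2
  have hp : MvPolynomial.aeval (fun i => 1 ⊗ₜ[F] (X i)) p = (s : Q ⊗[F] B) := hp
  have h3 : MvPolynomial.aeval (fun i => algebraMap B A (X i)) p = 0 := by
    rw [← h1, ← hp, ← AlgHom.comp_apply, MvPolynomial.comp_aeval]
    congr 2
    ext i
    simp [μ]
  have h4 := (algebraicIndependent_iff.mp hai) p h3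
  apply hs0
  apply Subtype.ext
  rw [← hp, h4, map_zero]
  rfl


theorem alg_adjoin {A : Type*} [Field A] (F : Subfield A) (Y : Set A) (b : A)
    (hb : b ∈ acl (Subfield.closure (F ∪ Y))) : IsAlgebraic (Algebra.adjoin F Y) b := by
  have hle : ∀ z ∈ Algebra.adjoin F Y, z ∈ Subfield.closure ((F : Set A) ∪ Y) := by
    intro z hz
    induction hz using Algebra.adjoin_induction with
    | mem x hx => exact Subfield.subset_closure (Or.inr hx)
    | algebraMap r => exact Subfield.subset_closure (Or.inl r.2)
    | add x y _ _ h1 h2 => exact add_mem h1 h2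
    | mul x y _ _ h1 h2 => exact mul_mem h1 h2
  letI : Algebra (Algebra.adjoin F Y) (Subfield.closure ((F : Set A) ∪ Y)) :=
    ((algebraMap (Algebra.adjoin F Y) A).codRestrict _ (fun x => hle _ x.2)).toAlgebra
  haveI : IsScalarTower (Algebra.adjoin F Y) (Subfield.closure ((F : Set A) ∪ Y)) A :=
    IsScalarTower.of_algebraMap_eq fun _ => rfl
  haveI : Algebra.IsAlgebraic (Algebra.adjoin F Y) (Subfield.closure ((F : Set A) ∪ Y)) := by
    refine ⟨?_⟩
    rintro ⟨z, hz⟩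
    rw [← isAlgebraic_algHom_iff (IsScalarTower.toAlgHom (Algebra.adjoin F Y)
      (Subfield.closure ((F : Set A) ∪ Y)) A) (Subtype.val_injective)]
    change IsAlgebraic _ z
    induction hz using Subfield.closure_induction with
    | mem z hz =>
      rcases hz with hz | hz
      · exact isAlgebraic_algebraMap (algebraMap F (Algebra.adjoin F Y) ⟨z, hz⟩)
      · exact isAlgebraic_algebraMap (⟨z, Algebra.subset_adjoin hz⟩ : Algebra.adjoin F Y)
    | one => exact isAlgebraic_one
    | add _ _ _ _ h1 h2 => exact h1.add h2
    | neg _ _ h1 => exact h1.neg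
    | inv _ _ h1 => exact h1.inv
    | mul _ _ _ _ h1 h2 => exact h1.mul h2
  exact (mem_acl.mp hb).restrictScalars (Algebra.adjoin F Y)

theorem ld_comb {A n : Type*} [Field A] [CharZero A] [IsAlgClosed A] [Fintype n]
    (κ L Q : Subfield A) (hκ : κ ≤ L) (hκL : acl κ ⊓ L ≤ κ) (hκQ : κ ≤ Q) (hQ : acl Q = Q)
    (Y : Set A) (hLY : L ≤ acl (Subfield.closure (κ ∪ Y)))
    (hY : AlgebraicIndependent Q ((↑) : Y → A))
    (l : n → A) (hl : ∀ i, l i ∈ L) (q : n → A)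
    (hq : ∀ i, q i ∈ Q) (hq0 : q ≠ 0) (h : ∑ i, l i * q i = 0) :
    ∃ c : n → A, (∀ i, c i ∈ κ) ∧ c ≠ 0 ∧ ∑ i, l i * c i = 0 := by
  suffices h : ∃ u : n → A, (∀ i, u i ∈ acl κ) ∧ u ≠ 0 ∧ ∑ i, l i * u i = 0 by
    obtain ⟨u, h1, h2, h3⟩ := h
    exact ld_alg κ L hκ hκL l hl u h1 h2 h3
  have hFQ : acl κ ≤ Q := hQ ▸ acl_mono hκQ
  set F := acl κ with hF
  set B := acl (Subfield.closure ((F : Set A) ∪ Y)) with hB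
  have hFB : F ≤ B := fun z hz => le_acl _ (Subfield.subset_closure (Or.inl hz))
  have hLB : L ≤ B := hLY.trans (acl_mono (Subfield.closure_mono
    (Set.union_subset_union_left _ (le_acl κ))))
  have hYB : ∀ y ∈ Y, y ∈ B := fun z hz => le_acl _ (Subfield.subset_closure (Or.inr hz))
  letI : Algebra F B := (Subfield.inclusion hFB).toAlgebra
  letI : Algebra F Q := (Subfield.inclusion hFQ).toAlgebra
  haveI : IsScalarTower F B A := IsScalarTower.of_algebraMap_eq fun _ => rfl
  haveI : IsScalarTower F Q A := IsScalarTower.of_algebraMap_eq fun _ => rfl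
  haveI : IsAlgClosed F := (inferInstance : IsAlgClosure κ (algebraicClosure κ A)).isAlgClosed
  let X : Y → B := fun y => ⟨y, hYB y y.2⟩
  have hinj := ld_free_aux (F := F) (B := B) (Q := Q) (A := A) X (by
    rintro ⟨b, hb⟩
    have h1 := alg_adjoin F Y b hb
    have h2 : ∀ z ∈ Algebra.adjoin F Y, ∃ hz : z ∈ B, (⟨z, hz⟩ : B) ∈ Algebra.adjoin F (Set.range X) := by
      intro z hz
      induction hz using Algebra.adjoin_induction with
      | mem x hx => exact ⟨hYB x hx, Algebra.subset_adjoin ⟨⟨x, hx⟩, rfl⟩⟩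
      | algebraMap r => exact ⟨hFB r.2, Subalgebra.algebraMap_mem _ r⟩
      | add x y _ _ h1 h2 => 
        obtain ⟨h1, h1'⟩ := h1
        obtain ⟨h2, h2'⟩ := h2
        exact ⟨add_mem h1 h2, add_mem h1' h2'⟩
      | mul x y _ _ h1 h2 =>
        obtain ⟨h1, h1'⟩ := h1
        obtain ⟨h2, h2'⟩ := h2
        exact ⟨mul_mem h1 h2, mul_mem h1' h2'⟩
    have h3 : IsAlgebraic (Algebra.adjoin F (Set.range X)) b := by
      let f : Algebra.adjoin F Y →+* Algebra.adjoin F (Set.range X) :=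
        { toFun := fun z => ⟨⟨z, (h2 z z.2).1⟩, (h2 z z.2).2⟩
          map_one' := rfl
          map_mul' := fun _ _ => rfl
          map_zero' := rfl
          map_add' := fun _ _ => rfl }
      refine IsAlgebraic.ringHom_of_comp_eq f (RingHom.id A) h1 ?_ ?_
      · intro x y hxy
        apply Subtype.ext
        exact congrArg (fun z : Algebra.adjoin F (Set.range X) => ((z : B) : A)) hxy
      · ext; rfl
    exact (isAlgebraic_algHom_iff (IsScalarTower.toAlgHom (Algebra.adjoin F (Set.range X)) B A)
      (algebraMap B A).injective).mp h3) hY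
  by_contra hcon
  push Not at hcon
  have hli : LinearIndependent F (fun i => (⟨l i, hLB (hl i)⟩ : B)) := by
    rw [Fintype.linearIndependent_iff]
    intro g hg
    by_contra hne
    push Not at hne
    refine hcon (fun i => g i) (fun i => (g i).2) ?_ ?_
    · obtain ⟨i, hi⟩ := hne
      intro h
      exact hi (Subtype.ext (congrFun h i))
    · have := congrArg (fun z : B => (z : A)) hg
      simp only [Algebra.smul_def] at this
      push_cast at this
      refine Eq.trans ?_ this
      refine Finset.sum_congr rfl fun i _ => mul_comm _ _
  have hli2 := Module.Flat.linearIndependent_one_tmul (S := Q) hli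
  rw [Fintype.linearIndependent_iff] at hli2
  apply hq0
  funext i
  refine congrArg (fun z : Q => (z : A)) (hli2 (fun i => ⟨q i, hq i⟩) ?_ i)
  apply hinj
  rw [map_zero, map_sum, ← h]
  refine Finset.sum_congr rfl fun i _ => ?_
  rw [map_smul]
  simp only [Algebra.TensorProduct.lift_tmul, map_one, one_mul, Algebra.smul_def]
  exact mul_comm _ _


theorem sup_frac {T : Type*} [Field T] (N C : Subfield T) (z : T) (hz : z ∈ N ⊔ C) :
    ∃ (m : ℕ) (γ u w : Fin m → T), (∀ i, γ i ∈ N) ∧ LinearIndependent C γ ∧ (∀ i, u i ∈ C) ∧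
      (∀ i, w i ∈ C) ∧ ∑ i, γ i * w i ≠ 0 ∧ z * ∑ i, γ i * w i = ∑ i, γ i * u i := by
  classical
  have hcl : N ⊔ C = Subfield.closure (C ∪ N) := by
    rw [Subfield.closure_union, Subfield.closure_eq, Subfield.closure_eq, sup_comm]
  rw [hcl, Subfield.mem_closure_iff] at hz
  obtain ⟨p, hp, q, hq, rfl⟩ := hz
  have hr : (C : Set T) = Set.range (algebraMap C T) := by
    ext z
    exact ⟨fun h => ⟨⟨z, h⟩, rfl⟩, by rintro ⟨y, rfl⟩; exact y.2⟩
  rw [hr] at hp hq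
  have hp1 := mem_span_of_closure N p hp
  have hq1 := mem_span_of_closure N q hq
  by_cases hq0 : q = 0
  · refine ⟨1, fun _ => 1, fun _ => 0, fun _ => 1, fun _ => one_mem _, ?_, fun _ => zero_mem _,
      fun _ => one_mem _, by simp, by simp [hq0]⟩
    exact LinearIndependent.of_subsingleton 0 one_ne_zero
  obtain ⟨s1, hs1, hp2⟩ := Submodule.mem_span_finite_of_mem_span hp1
  obtain ⟨s2, hs2, hq2⟩ := Submodule.mem_span_finite_of_mem_span hq1
  obtain ⟨b, hb, hsp, hli⟩ := exists_linearIndependent C ((s1 ∪ s2 : Finset T) : Set T)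
  have hbf : b.Finite := (s1 ∪ s2).finite_toSet.subset hb
  haveI := hbf.fintype
  let e := Fintype.equivFin b
  let γ : Fin (Fintype.card b) → T := fun i => (e.symm i : T)
  have hrange : Set.range γ = b := by
    ext z
    constructor
    · rintro ⟨i, rfl⟩; exact (e.symm i).2
    · intro hz; exact ⟨e ⟨z, hz⟩, by simp [γ]⟩
  have key : ∀ y ∈ Submodule.span C ((s1 ∪ s2 : Finset T) : Set T),
      ∃ u : Fin (Fintype.card b) → T, (∀ i, u i ∈ C) ∧ y = ∑ i, γ i * u i := by
    intro y hy
    rw [← hsp, ← hrange, Submodule.mem_span_range_iff_exists_fun] at hy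
    obtain ⟨c, hc⟩ := hy
    refine ⟨fun i => c i, fun i => (c i).2, ?_⟩
    rw [← hc]
    exact Finset.sum_congr rfl fun i _ => mul_comm _ _
  obtain ⟨u, hu, hpu⟩ := key p (Submodule.span_mono (by simp) hp2)
  obtain ⟨w, hw, hqw⟩ := key q (Submodule.span_mono (by simp) hq2)
  refine ⟨_, γ, u, w, fun i => ?_, ?_, hu, hw, by rwa [← hqw], ?_⟩
  · have : γ i ∈ b := hrange ▸ ⟨i, rfl⟩
    have := hb this
    simp only [Finset.coe_union, Set.mem_union] at this
    rcases this with h | h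
    · exact hs1 h
    · exact hs2 h
  · exact hli.comp e.symm e.symm.injective
  · rw [← hpu, ← hqw]; field_simp

theorem acl_of_map {T W : Type*} [Field T] [Field W] (f : T →+* W) (N : Subfield T) (z : T)
    (hz : f z ∈ acl (N.map f)) : z ∈ acl N := by
  refine mem_acl.mpr ?_
  exact IsAlgebraic.of_ringHom_of_comp_eq (N.equivMapOfInjective f f.injective) f (mem_acl.mp hz)
    (N.equivMapOfInjective f f.injective).surjective f.injective (by ext; rfl)

theorem acl_dstable {T : Type*} [Field T] [CharZero T] [Differential T] (P : Subfield T)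
    (hP : ∀ x ∈ P, x′ ∈ P) : ∀ x ∈ acl P, x′ ∈ acl P := fun z hz =>
  alg_deriv P (acl P) (fun x hx => le_acl _ (hP x hx)) (le_acl _) z hz (mem_acl.mp hz)

theorem acl_isAlgClosed {T : Type*} [Field T] [IsAlgClosed T] (P : Subfield T) :
    IsAlgClosed (acl P) :=
  (inferInstance : IsAlgClosure P (algebraicClosure P T)).isAlgClosed

/-- data of generation by copies -/
def CInv {Q Lt : Type u} [Field Q] [Differential Q] [Field Lt] [Differential Lt] (κ : Subfield Lt)
    (j : κ →+* Q) (T : DX Q) (N : Subfield T.C) : Prop :=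
  ∃ (ι : Type) (_ : Finite ι) (lam : ι → Lt →+* T.C), (∀ i, DHom (lam i)) ∧
    (∀ i (z : κ), lam i (z : Lt) = algebraMap Q T.C (j z)) ∧
    N = ((algebraMap Q T.C).comp j).fieldRange ⊔ ⨆ i, (lam i).fieldRange

theorem CInv.step {Q Lt : Type u} [Field Q] [Differential Q] [Field Lt] [Differential Lt]
    (κ : Subfield Lt) (j : κ →+* Q) (A : DX Q) (T W : DX Q) (N : Subfield T.C) (h : CInv κ j T N)
    (e : Lt →+* A.C) (he : DHom e) (hej : ∀ z : κ, e z = algebraMap Q A.C (j z))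
    (a : A.C →ₐ[Q] W.C) (t : T.C →ₐ[Q] W.C) (ha : DHom a.toRingHom) (ht : DHom t.toRingHom) :
    CInv κ j W (N.map t.toRingHom ⊔ e.fieldRange.map a.toRingHom) := by
  obtain ⟨ι, hι, lam, h1, h2, rfl⟩ := h
  refine ⟨Option ι, inferInstance, fun i => i.elim (a.toRingHom.comp e) (fun i => t.toRingHom.comp (lam i)),
    ?_, ?_, ?_⟩
  · rintro (_ | i)
    · exact ha.comp he
    · exact ht.comp (h1 i)
  · rintro (_ | i) z
    · change a (e z) = _
      rw [hej, AlgHom.commutes]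
    · change t (lam i z) = _
      rw [h2, AlgHom.commutes]
  · rw [Subfield.map_sup, Subfield.map_iSup, iSup_option, RingHom.map_fieldRange, RingHom.map_fieldRange]
    simp only [RingHom.map_fieldRange, Option.elim]
    have : t.toRingHom.comp ((algebraMap Q T.C).comp j) = (algebraMap Q W.C).comp j := by
      ext z; exact t.commutes _
    rw [this, sup_assoc, sup_comm (⨆ i, _)]

theorem partIb {Q : Type u} [Field Q] [CharZero Q] [Differential Q] (k0 K0 : Subfield Q)
    (Lt : Type u) [Field Lt] [Differential Lt] (e : Lt →+* Q) (he : DHom e)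
    (k1 : Subfield Lt) (hk1 : k1.map e = k0) (heK : ∀ z, e z ∈ K0)
    (x : Lt) (hx : e x ∈ IIset k0 K0) :
    ∃ (T W : Type u) (_ : Field T) (_ : Field W) (_ : Differential T) (_ : Differential W)
      (t : T →+* W) (a : Lt →+* W) (j : acl k1 →+* T) (ι : Type) (_ : Finite ι)
      (lam : ι → Lt →+* T), DHom t ∧ DHom a ∧ (∀ i, DHom (lam i)) ∧ (∀ z : acl k1, t (j z) = a z) ∧
      (∀ i (z : acl k1), lam i (z : Lt) = j z) ∧ 
      a x ∈ (j.fieldRange ⊔ ⨆ i, (lam i).fieldRange).map t ⊔ cst W ∧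
      ∀ (n : ℕ) (l : Fin n → Lt) (τ : Fin n → T), τ ≠ 0 → ∑ i, a (l i) * t (τ i) = 0 →
        ∃ c : Fin n → Lt, (∀ i, c i ∈ acl k1) ∧ c ≠ 0 ∧ ∑ i, l i * c i = 0 := by
  obtain ⟨T, N, hFI, hx⟩ := hx
  obtain ⟨m, γ, u, w, hγ, hli, hu, hw, hne, hrel⟩ := sup_frac _ _ _ hx
  haveI : CharZero T.C := charZero_of_injective_algebraMap (algebraMap Q T.C).injective
  obtain ⟨dA, hdA⟩ := exists_diff_algebraic T.C (AlgebraicClosure T.C)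
  set A := AlgebraicClosure T.C with hAdef
  haveI : CharZero A := charZero_of_injective_algebraMap (algebraMap T.C A).injective
  have hιd : DHom (algebraMap T.C A) := dhom_algebraMap _ _
  let NA := N.map (algebraMap T.C A)
  have hNA : ∀ x ∈ NA, x′ ∈ NA := dstable_map _ hιd _ hFI.2.1
  let Q' := acl NA
  have hQ' := acl_dstable NA hNA
  letI dQ : Differential Q' := subDiff Q' hQ'
  haveI : DifferentialAlgebra Q' A := subDiff_alg Q' hQ'
  haveI : IsAlgClosed Q' := acl_isAlgClosed NA
  let eA : Lt →+* A := (algebraMap T.C A).comp ((algebraMap Q T.C).comp e)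
  have heA : DHom eA := hιd.comp ((dhom_algebraMap _ _).comp he)
  have hk1N : k1.map eA ≤ NA := by
    rintro _ ⟨z, hz, rfl⟩
    refine ⟨algebraMap Q T.C (e z), hFI.1 ⟨e z, ?_, rfl⟩, rfl⟩
    rw [← hk1]; exact ⟨z, hz, rfl⟩
  have hκQ : ∀ z : acl k1, eA z ∈ Q' := fun z =>
    acl_mono hk1N (acl_map eA k1 ⟨z, z.2, rfl⟩)
  let j : acl k1 →+* Q' := (eA.comp (acl k1).subtype).codRestrict Q' hκQ
  let AX : DX Q' := ⟨A⟩
  let T0 : DX Q' := ⟨Q'⟩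
  have hxA : ∑ i, (eA x * algebraMap T.C A (w i) - algebraMap T.C A (u i)) *
      algebraMap Q' A ⟨algebraMap T.C A (γ i), le_acl _ ⟨γ i, hγ i, rfl⟩⟩ = 0 := by
    have := congrArg (algebraMap T.C A) hrel
    simp only [map_mul, map_sum, Finset.mul_sum] at this
    rw [← sub_eq_zero, ← Finset.sum_sub_distrib] at this
    rw [← this]
    refine Finset.sum_congr rfl fun i _ => ?_
    change _ * (algebraMap T.C A (γ i)) = _
    simp only [eA, RingHom.comp_apply]
    ring
  have hcst : ∀ y ∈ cst T.C, algebraMap T.C A y ∈ cst A := fun y hy => hιd.map_cst ⟨y, hy, rfl⟩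
  obtain ⟨T', N', hInv, W, a, t, ha, ht, hinj, d, s, c, hc, hcr, hcv⟩ :=
    generic_apply Q' A eA.fieldRange (m := Unit) (n := Fin m)
      (fun _ i => eA x * algebraMap T.C A (w i) - algebraMap T.C A (u i))
      (fun _ i => sub_mem (mul_mem (le_sup_left (a := eA.fieldRange) ⟨x, rfl⟩)
        (le_sup_right (b := cst A) (hcst _ (hw i)))) (le_sup_right (b := cst A) (hcst _ (hu i))))
      (CInv (acl k1) j) T0 (((algebraMap Q' T0.C).comp j).fieldRange)
      ⟨PEmpty, inferInstance, fun i => i.elim, fun i => i.elim, fun i => i.elim, by simp⟩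
      (fun T N hN W a t ha ht hinj => CInv.step _ j AX T W N hN eA heA (fun _ => rfl) a t ha ht)
      (fun i => ⟨algebraMap T.C A (γ i), le_acl _ ⟨γ i, hγ i, rfl⟩⟩) (fun _ => hxA)
  obtain ⟨ι, hι, lam, hl1, hl2, hN'⟩ := hInv
  refine ⟨T'.C, W.C, inferInstance, inferInstance, inferInstance, inferInstance, t.toRingHom,
    a.toRingHom.comp eA, (algebraMap Q' T'.C).comp j, ι, hι, lam, ht, ha.comp heA, hl1, ?_, ?_, ?_, ?_⟩
  · intro z
    change t (algebraMap Q' T'.C (j z)) = a (algebraMap Q' A (j z))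
    rw [t.commutes, a.commutes]
  · intro i z; rw [hl2]; rfl
  · rw [← hN']
    change a (eA x) ∈ _
    obtain ⟨e0, he0⟩ : ∃ e0, ∑ i, a (algebraMap T.C A (w i)) * t (c e0 i) ≠ 0 := by
      by_contra! h
      apply hne
      apply (algebraMap T.C A).injective
      apply a.toRingHom.injective
      rw [map_zero, map_zero, map_sum, map_sum]
      have : ∀ i, a.toRingHom (algebraMap T.C A (γ i)) = ∑ e, t (c e i) * t (s e) := by
        intro i
        have h1 : a.toRingHom (algebraMap T.C A (γ i)) = algebraMap Q' W.C
          ⟨algebraMap T.C A (γ i), le_acl _ ⟨γ i, hγ i, rfl⟩⟩ :=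
          a.commutes (⟨algebraMap T.C A (γ i), le_acl _ ⟨γ i, hγ i, rfl⟩⟩ : Q')
        rw [h1, ← t.commutes, hcv]
        simp [map_sum]
      simp only [map_mul, this, Finset.sum_mul]
      rw [Finset.sum_comm]
      refine Finset.sum_eq_zero fun e0 _ => ?_
      have h2 := congrArg (· * t (s e0)) (h e0)
      simp only [zero_mul, Finset.sum_mul] at h2
      rw [← h2]
      refine Finset.sum_congr rfl fun i _ => ?_
      change _ * a (algebraMap T.C A (w i)) = _
      ring
    have h1 := hcr e0 ()
    have h2 : a (eA x) * ∑ i, a (algebraMap T.C A (w i)) * t (c e0 i) =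
        ∑ i, a (algebraMap T.C A (u i)) * t (c e0 i) := by
      rw [← sub_eq_zero, ← h1, Finset.mul_sum, ← Finset.sum_sub_distrib]
      refine Finset.sum_congr rfl fun i _ => ?_
      rw [map_sub, map_mul]; ring
    rw [← eq_div_iff he0] at h2
    rw [h2]
    have hcc : ∀ i, t (c e0 i) ∈ N'.map t.toRingHom ⊔ cst W.C := by
      intro i
      have : (N' ⊔ cst T'.C).map t.toRingHom ≤ N'.map t.toRingHom ⊔ cst W.C := by
        rw [Subfield.map_sup]
        exact sup_le_sup le_rfl ht.map_cst
      exact this ⟨_, hc e0 i, rfl⟩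
    have hww : ∀ y ∈ cst T.C, a (algebraMap T.C A y) ∈ N'.map t.toRingHom ⊔ cst W.C := fun y hy =>
      (le_sup_right (b := cst W.C)) (ha.map_cst ⟨_, hcst y hy, rfl⟩)
    exact div_mem (sum_mem fun i _ => mul_mem (hww _ (hu i)) (hcc i))
      (sum_mem fun i _ => mul_mem (hww _ (hw i)) (hcc i))
  · intro n l τ hτ hsum
    obtain ⟨d', s', q, hs', hq⟩ := exists_decomp Q' T'.C τ
    have h1 : ∀ b, ∑ i, eA (l i) * algebraMap Q' A (q b i) = 0 := by
      refine amalgam_orth a t hinj s' hs' (fun b => ∑ i, eA (l i) * algebraMap Q' A (q b i)) ?_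
      rw [← hsum]
      simp only [map_sum, map_mul, AlgHom.commutes, Finset.sum_mul]
      rw [Finset.sum_comm]
      refine Finset.sum_congr rfl fun i _ => ?_
      change _ = a (eA (l i)) * t (τ i)
      rw [hq i, map_sum, Finset.mul_sum]
      refine Finset.sum_congr rfl fun b _ => ?_
      rw [Algebra.smul_def, map_mul, AlgHom.commutes]
      ring
    obtain ⟨b, hb⟩ : ∃ b, q b ≠ 0 := by
      by_contra! h
      apply hτ
      funext i
      rw [hq i]
      simp [h]
    obtain ⟨Y, -, hY, hYa⟩ := exists_tb k1 ⊤
    have hY2 : AlgebraicIndependent Q' ((↑) : eA '' Y → A) := by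
      have h3 : AlgebraicIndependent k0 ((↑) : e '' Y → Q) := by
        rw [← hk1]
        have := (ai_map e).mpr hY
        exact (algebraicIndependent_image (R := k1.map e) (f := e) (s := Y) e.injective.injOn).mp this
      have h4 := hFI.2.2 _ (by rintro _ ⟨y, -, rfl⟩; exact heK y) h3
      have h5 := ai_acl ((ai_map (algebraMap T.C A)).mpr h4)
      have h6 := h5.comp (fun y : Y => (⟨e y, y, y.2, rfl⟩ : e '' Y)) (by
        intro y z hyz
        exact Subtype.ext (e.injective (congrArg Subtype.val hyz)))
      exact (algebraicIndependent_image (R := Q') (f := eA) (s := Y) eA.injective.injOn).mp h6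
    obtain ⟨c, hc1, hc2, hc3⟩ := ld_comb ((acl k1).map eA) eA.fieldRange Q' 
      (by rintro _ ⟨z, -, rfl⟩; exact ⟨z, rfl⟩) (by
        rintro _ ⟨hz, ⟨z, rfl⟩⟩
        have := acl_of_map eA _ z hz
        rw [acl_acl] at this
        exact ⟨z, this, rfl⟩) (by rintro _ ⟨z, hz, rfl⟩; exact hκQ ⟨z, hz⟩) (acl_acl _) (eA '' Y)
      (by
        rintro _ ⟨z, rfl⟩
        have h7 := acl_map eA _ ⟨z, hYa (by trivial : z ∈ (⊤ : Subfield Lt)), rfl⟩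
        rw [RingHom.map_field_closure, Set.image_union] at h7
        refine acl_mono (Subfield.closure_mono (Set.union_subset_union_left _ ?_)) h7
        rintro _ ⟨y, hy, rfl⟩
        exact ⟨y, le_acl _ hy, rfl⟩) hY2 (fun i => eA (l i)) (fun i => ⟨l i, rfl⟩)
        (fun i => (q b i : A)) (fun i => (q b i).2) (by
          intro h; apply hb; funext i; exact Subtype.ext (congrFun h i)) (h1 b)
    choose c' hc'1 hc'2 using hc1
    refine ⟨c', hc'1, ?_, ?_⟩
    · rintro rfl
      apply hc2
      funext i
      rw [← hc'2 i]; simp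
    · apply eA.injective
      rw [map_zero, map_sum, ← hc3]
      refine Finset.sum_congr rfl fun i _ => ?_
      rw [map_mul]
      exact congrArg _ (hc'2 i)


/-- iterated derivative -/
def dn {A : Type*} [CommRing A] [Differential A] (e : ℕ) (y : A) : A := (fun z : A => (z′))^[e] y

theorem dn_zero {A : Type*} [CommRing A] [Differential A] (y : A) : dn 0 y = y := rfl
theorem dn_succ {A : Type*} [CommRing A] [Differential A] (e : ℕ) (y : A) :
    dn (e + 1) y = (dn e y)′ := Function.iterate_succ_apply' _ _ _

theorem DHom.dn {A B : Type*} [CommRing A] [CommRing B] [Differential A] [Differential B]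
    {f : A →+* B} (hf : DHom f) (e : ℕ) (y : A) : f (dn e y) = dn e (f y) := by
  induction e with
  | zero => rfl
  | succ e ih => rw [dn_succ, dn_succ, hf, ih]

/-- generalized wronskian -/
noncomputable def wr {A n : Type*} [CommRing A] [Differential A] [Fintype n] [DecidableEq n]
    (e : n → ℕ) (y : n → A) : A := (Matrix.of fun i j => dn (e i) (y j)).det

theorem DHom.wr {A B n : Type*} [CommRing A] [CommRing B] [Differential A] [Differential B]
    [Fintype n] [DecidableEq n]
    {f : A →+* B} (hf : DHom f) (e : n → ℕ) (y : n → A) : f (wr e y) = wr e (fun i => f (y i)) := by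
  unfold _root_.wr
  rw [RingHom.map_det]
  congr 1
  ext i j
  simp [hf.dn]

theorem wr1 {Ω n : Type*} [Field Ω] [Differential Ω] [Fintype n] [DecidableEq n] (y c : n → Ω)
    (hc : ∀ i, (c i)′ = 0) (hc0 : c ≠ 0) (h : ∑ i, y i * c i = 0) (e : n → ℕ) : wr e y = 0 := by
  have h1 : ∀ e, ∑ i, dn e (y i) * c i = 0 := by
    intro e
    induction e with
    | zero => exact h
    | succ e ih =>
      have := congrArg (fun z : Ω => (z′)) ih
      simpa [Derivation.leibniz, hc, dn_succ, mul_comm] using this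
  unfold wr
  rw [← Matrix.exists_mulVec_eq_zero_iff]
  refine ⟨c, hc0, ?_⟩
  funext i
  simpa [Matrix.mulVec, dotProduct] using h1 (e i)

theorem wr2 {Ω n : Type*} [Field Ω] [Differential Ω] [Fintype n] [DecidableEq n] (y : n → Ω)
    (h : ∀ e : n → ℕ, wr e y = 0) :
    ∃ c : n → Ω, (∀ i, (c i)′ = 0) ∧ c ≠ 0 ∧ ∑ i, y i * c i = 0 := by
  classical
  let r : ℕ → (n → Ω) := fun e i => dn e (y i)
  have hlt : Submodule.span Ω (Set.range r) < ⊤ := by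
    rw [lt_top_iff_ne_top]
    intro htop
    obtain ⟨b, hb, hsp, hli⟩ := exists_linearIndependent Ω (Set.range r)
    rw [htop] at hsp
    let B := Module.Basis.mk hli (by rw [Subtype.range_coe, hsp])
    let φ : n ≃ b := (Pi.basisFun Ω n).indexEquiv B
    choose e he using fun i => hb (φ i).2
    have h2 : LinearIndependent Ω (Matrix.of fun i j => dn (e i) (y j)).row := by
      have := hli.comp φ φ.injective
      have h3 : (Matrix.of fun i j => dn (e i) (y j)).row = Subtype.val ∘ φ := funext he
      rw [h3]
      exact this
    rw [Matrix.linearIndependent_rows_iff_isUnit, Matrix.isUnit_iff_isUnit_det] at h2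
    exact h2.ne_zero (h e)
  obtain ⟨f, hf, hle⟩ := Submodule.exists_le_ker_of_lt_top _ hlt
  let U : Submodule Ω (n → Ω) :=
    { carrier := {u | ∀ e, ∑ i, dn e (y i) * u i = 0}
      zero_mem' := by simp
      add_mem' := by
        intro a b ha hb e
        simp [mul_add, Finset.sum_add_distrib, ha e, hb e]
      smul_mem' := by
        intro c a ha e
        have := congrArg (c * ·) (ha e)
        simp only [Finset.mul_sum, mul_zero] at this
        rw [← this]
        refine Finset.sum_congr rfl fun i _ => ?_
        simp; ring }
  obtain ⟨c, hcU, hc0, hc⟩ := descent U (by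
      intro u hu e
      have h1 := congrArg (fun z : Ω => (z′)) (hu e)
      have h2 := hu (e + 1)
      simp only [map_sum, Derivation.leibniz, smul_eq_mul, Finset.sum_add_distrib, map_zero] at h1
      have h3 : ∑ i, u i * (dn e (y i))′ = 0 := by
        rw [← h2]
        exact Finset.sum_congr rfl fun i _ => by rw [dn_succ, mul_comm]
      rwa [h3, add_zero] at h1) ⟨fun i => f (Pi.single i 1), by
        intro e
        have h1 : f (r e) = 0 := hle (Submodule.subset_span ⟨e, rfl⟩)
        rw [← h1]
        conv_rhs => rw [← Finset.univ_sum_single (r e), map_sum]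
        refine Finset.sum_congr rfl fun i _ => ?_
        have : (Pi.single i (r e i) : n → Ω) = (r e i) • Pi.single i 1 := by
          rw [← Pi.single_smul']; simp
        rw [this, map_smul]; rfl, by
        intro h0
        apply hf
        refine LinearMap.pi_ext' fun i => LinearMap.ext_ring ?_
        exact congrFun h0 i⟩
  exact ⟨c, hc, hc0, hcU 0⟩

theorem adjoin_dstable {κ T : Type*} [Field κ] [CommRing T] [Algebra κ T] [Differential κ]
    [Differential T] [DifferentialAlgebra κ T] (S : Set T) (B : Subalgebra κ T)
    (hS : Algebra.adjoin κ S ≤ B) (h : ∀ s ∈ S, s′ ∈ B) : ∀ x ∈ Algebra.adjoin κ S, x′ ∈ B := by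
  intro x hx
  induction hx using Algebra.adjoin_induction with
  | mem x hx => exact h x hx
  | algebraMap r => rw [deriv_algebraMap]; exact B.algebraMap_mem _
  | add x y _ _ h1 h2 => rw [map_add]; exact add_mem h1 h2
  | mul x y hx hy h1 h2 =>
    rw [Derivation.leibniz]
    exact add_mem (mul_mem (hS hx) h2) (mul_mem (hS hy) h1)

theorem ft_ring {κ T : Type*} [Field κ] [Field T] [Algebra κ T] [Differential κ] [Differential T]
    [DifferentialAlgebra κ T] (G X : Set T) (hGf : G.Finite) (hXf : X.Finite)
    (hG : ∀ g ∈ G, g′ ∈ IntermediateField.adjoin κ G)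
    (hX : X ⊆ IntermediateField.adjoin κ G) :
    ∃ B : Subalgebra κ T, G ⊆ B ∧ X ⊆ B ∧ (∀ x ∈ B, x′ ∈ B) ∧
      ∃ h ∈ Algebra.adjoin κ G, h ≠ 0 ∧ B = Algebra.adjoin κ (insert (h⁻¹) G) := by
  classical
  let X' := X ∪ (fun z : T => (z′)) '' G
  have hX' : X'.Finite := hXf.union (hGf.image _)
  have hd : ∃ h ∈ Algebra.adjoin κ G, h ≠ 0 ∧ ∀ x ∈ X', h * x ∈ Algebra.adjoin κ G := by
    have : ∀ Z : Set T, Z.Finite → Z ⊆ IntermediateField.adjoin κ G →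
      ∃ h ∈ Algebra.adjoin κ G, h ≠ 0 ∧ ∀ x ∈ Z, h * x ∈ Algebra.adjoin κ G := by
      intro Z hZ
      induction Z, hZ using Set.Finite.induction_on with
      | empty => exact fun _ => ⟨1, one_mem _, one_ne_zero, by simp⟩
      | @insert z Z _ _ ih =>
        intro hs
        obtain ⟨h, hh, hh0, hh1⟩ := ih ((Set.subset_insert _ _).trans hs)
        obtain ⟨p, hp, q, hq, hpq⟩ := (IntermediateField.mem_adjoin_iff_div).mp (hs (Set.mem_insert _ _))
        by_cases hq0 : q = 0
        · refine ⟨h, hh, hh0, ?_⟩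
          rintro x (rfl | hx)
          · rw [hpq, hq0]; simp
          · exact hh1 x hx
        · refine ⟨h * q, mul_mem hh hq, mul_ne_zero hh0 hq0, ?_⟩
          rintro x (rfl | hx)
          · have : h * q * x = h * p := by rw [hpq]; field_simp
            rw [this]; exact mul_mem hh hp
          · rw [mul_right_comm]; exact mul_mem (hh1 x hx) hq
    refine this _ hX' (Set.union_subset hX ?_)
    rintro _ ⟨g, hg, rfl⟩
    exact hG g hg
  obtain ⟨h, hh, hh0, hhX⟩ := hd
  set B := Algebra.adjoin κ (insert (h⁻¹) G) with hB
  have hle : Algebra.adjoin κ G ≤ B := Algebra.adjoin_mono (Set.subset_insert _ _)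
  have hinv : h⁻¹ ∈ B := Algebra.subset_adjoin (Set.mem_insert _ _)
  have hXB : ∀ x ∈ X', x ∈ B := by
    intro x hx
    have : x = h⁻¹ * (h * x) := by field_simp
    rw [this]; exact mul_mem hinv (hle (hhX x hx))
  have hGd : ∀ g ∈ G, g′ ∈ B := fun g hg => hXB _ (Or.inr ⟨g, hg, rfl⟩)
  refine ⟨B, fun g hg => Algebra.subset_adjoin (Set.mem_insert_of_mem _ hg),
    fun x hx => hXB x (Or.inl hx), ?_, h, hh, hh0, rfl⟩
  refine adjoin_dstable _ B le_rfl ?_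
  rintro s (rfl | hs)
  · rw [deriv_inv_field, neg_div, div_eq_mul_inv, ← inv_pow]
    exact neg_mem (mul_mem (adjoin_dstable G B hle hGd h hh) (pow_mem hinv 2))
  · exact hGd s hs

/-- derivation on a stable subalgebra -/
@[reducible]
def subDiffA {κ T : Type*} [CommRing κ] [CommRing T] [Algebra κ T] [Differential T]
    (N : Subalgebra κ T) (hN : ∀ x ∈ N, x′ ∈ N) : Differential N :=
  ⟨Derivation.mk' (AddMonoidHom.toIntLinearMap
    { toFun := fun x => ⟨(x : T)′, hN x x.2⟩
      map_zero' := by ext; simp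
      map_add' := by intro x y; ext; simp }) (by
      intro a b
      ext
      simp)⟩


theorem partII {κ Lt T W : Type u} [Field κ] [Field Lt] [Field T] [Field W] [Differential κ]
    [Differential Lt] [Differential T] [Differential W] [Algebra κ Lt] [Algebra κ T]
    [DifferentialAlgebra κ Lt] [DifferentialAlgebra κ T] (t : T →+* W) (a : Lt →+* W)
    (ht : DHom t) (ha : DHom a) (hta : ∀ z : κ, t (algebraMap κ T z) = a (algebraMap κ Lt z))
    {ι : Type} [Finite ι] (lam : ι → Lt →ₐ[κ] T) (hlam : ∀ i, DHom (lam i).toRingHom)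
    (g : Set Lt) (hg : g.Finite) (hgt : IntermediateField.adjoin κ g = ⊤) (x : Lt)
    (hx : a x ∈ ((algebraMap κ T).fieldRange ⊔ ⨆ i, (lam i).toRingHom.fieldRange).map t ⊔ cst W)
    (hLD : ∀ (n : ℕ) (l : Fin n → Lt) (τ : Fin n → T), τ ≠ 0 → ∑ i, a (l i) * t (τ i) = 0 →
      ¬ LinearIndependent κ l) (RL : Subalgebra κ Lt) (hRF : RL.FG) (hRL : ∀ x ∈ RL, x′ ∈ RL)
    (hgR : g ⊆ RL) (hxR : x ∈ RL) :
    ∃ (B : Subalgebra κ T) (hB : ∀ x ∈ B, x′ ∈ B), B.FG ∧ (∀ i, ∀ r ∈ RL, lam i r ∈ B) ∧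
      (∀ (Ω : Type u) [Field Ω] (φ : B →+* Ω) (b : B), φ b ∈ Subfield.closure (φ '' {b | (∃ z, algebraMap κ B z = b) ∨
          ∃ i, ∃ r ∈ RL, (b : T) = lam i r})) ∧
      ∀ (Ω : Type u) [Field Ω] [Differential Ω] (θ : RL →+* Ω) (φ : B →+* Ω),
        (∀ r (hr : r ∈ RL), θ ⟨r′, hRL r hr⟩ = (θ ⟨r, hr⟩)′) →
        (∀ b (hb : b ∈ B), φ ⟨b′, hB b hb⟩ = (φ ⟨b, hb⟩)′) →
        (∀ z : κ, θ (algebraMap κ RL z) = φ (algebraMap κ B z)) →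
        θ ⟨x, hxR⟩ ∈ Subfield.closure (φ '' {b | (∃ z, algebraMap κ B z = b) ∨
          ∃ i, ∃ r ∈ RL, (b : T) = lam i r}) ⊔ cst Ω := by
  classical
  set N : Subfield T := (algebraMap κ T).fieldRange ⊔ ⨆ i, (lam i).toRingHom.fieldRange with hN
  obtain ⟨m, γ', u, w, hγ', hli, hu, hw, hne, hrel⟩ := sup_frac _ _ _ hx
  choose γ hγN hγ using hγ'
  obtain ⟨X0, hX0⟩ := hRF
  let G : Set T := ⋃ i, lam i '' g
  have hGf : G.Finite := Set.finite_iUnion fun i => hg.image _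
  have hlamG : ∀ i z, lam i z ∈ IntermediateField.adjoin κ G := by
    intro i z
    have h1 : (IntermediateField.adjoin κ g).map (lam i) ≤ IntermediateField.adjoin κ G := by
      rw [IntermediateField.adjoin_map]
      exact IntermediateField.adjoin.mono _ _ _ (Set.subset_iUnion (fun i => lam i '' g) i)
    exact h1 ⟨z, by rw [hgt]; trivial, rfl⟩
  have hNG : ∀ z ∈ N, z ∈ IntermediateField.adjoin κ G := by
    have : N ≤ (IntermediateField.adjoin κ G).toSubfield := by
      refine sup_le ?_ (iSup_le fun i => ?_)
      · rintro _ ⟨z, rfl⟩; exact (IntermediateField.adjoin κ G).algebraMap_mem z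
      · rintro _ ⟨z, rfl⟩; exact hlamG i z
    exact fun z hz => this hz
  -- nonvanishing wronskian
  have hwr : ∃ e : Fin m → ℕ, wr e γ ≠ 0 := by
    by_contra! h
    obtain ⟨c, hc, hc0, hcs⟩ := wr2 (fun i => t (γ i)) (fun e => by
      rw [← ht.wr, h, map_zero])
    rw [Fintype.linearIndependent_iff] at hli
    apply hc0
    funext i
    refine congrArg Subtype.val (hli (fun i => (⟨c i, hc i⟩ : cst W)) ?_ i)
    rw [← hcs]
    refine Finset.sum_congr rfl fun i _ => ?_
    rw [hγ i]; exact mul_comm _ _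
  obtain ⟨e0, he0⟩ := hwr
  have hGd : ∀ y ∈ G, y′ ∈ IntermediateField.adjoin κ G := by
    rintro y hy
    obtain ⟨i, z, hz, rfl⟩ := Set.mem_iUnion.mp hy
    have : (lam i z)′ = lam i (z′) := (hlam i z).symm
    rw [this]; exact hlamG i _
  have hadd : ∀ z ∈ IntermediateField.adjoin κ G, z′ ∈ IntermediateField.adjoin κ G := by
    have := dstable_closure (Set.range (algebraMap κ T) ∪ G) (by
      rintro _ (⟨z, rfl⟩ | hy)
      · rw [deriv_algebraMap]; exact Subfield.subset_closure (Or.inl ⟨_, rfl⟩)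
      · exact hGd _ hy)
    exact this
  have hdn : ∀ e, ∀ z ∈ IntermediateField.adjoin κ G, dn e z ∈ IntermediateField.adjoin κ G := by
    intro e z hz
    induction e with
    | zero => exact hz
    | succ e ih => rw [dn_succ]; exact hadd _ ih
  have hwrN : wr e0 γ ∈ IntermediateField.adjoin κ G := by
    unfold wr
    rw [Matrix.det_apply]
    refine sum_mem fun σ _ => ?_
    rw [Units.smul_def, zsmul_eq_mul]
    exact mul_mem (intCast_mem _ _) (prod_mem fun i _ => hdn _ _ (hNG _ (hγN _)))
  let X : Set T := Set.range γ ∪ {(wr e0 γ)⁻¹} ∪ ⋃ i, lam i '' (X0 : Set Lt)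
  obtain ⟨B, hGB, hXB, hB, h0, hh0, hh00, hBeq⟩ := ft_ring (κ := κ) G X hGf
    (((Set.finite_range γ).union (Set.finite_singleton _)).union
      (Set.finite_iUnion fun i => X0.finite_toSet.image _)) hGd (by
      rintro z ((⟨i, rfl⟩ | hz) | hz)
      · exact hNG _ (hγN i)
      · rw [Set.mem_singleton_iff.mp hz]; exact inv_mem hwrN
      · obtain ⟨i, z, -, rfl⟩ := Set.mem_iUnion.mp hz
        exact hlamG i z)
  have hγB : ∀ i, γ i ∈ B := fun i => hXB (Or.inl (Or.inl ⟨i, rfl⟩))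
  have hwB : (wr e0 γ)⁻¹ ∈ B := hXB (Or.inl (Or.inr rfl))
  have hlB : ∀ i, ∀ r ∈ RL, lam i r ∈ B := by
    intro i r hr
    rw [← hX0] at hr
    have : (Algebra.adjoin κ (X0 : Set Lt)).map (lam i) ≤ B := by
      rw [AlgHom.map_adjoin]
      refine Algebra.adjoin_le ?_
      intro z hz
      exact hXB (Or.inr (Set.mem_iUnion.mpr ⟨i, hz⟩))
    exact this ⟨r, hr, rfl⟩
  have hφN : ∀ (Ω : Type u) [Field Ω] (φ : B →+* Ω) (b : B), φ b ∈ Subfield.closure (φ '' {b | (∃ z, algebraMap κ B z = b) ∨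
          ∃ i, ∃ r ∈ RL, (b : T) = lam i r}) := by
    intro Ω _ φ
    set S := Subfield.closure (φ '' {b | (∃ z, algebraMap κ B z = b) ∨
          ∃ i, ∃ r ∈ RL, (b : T) = lam i r}) with hS
    have hAG : Algebra.adjoin κ G ≤ B := hBeq ▸ Algebra.adjoin_mono (Set.subset_insert _ _)
    have key : ∀ z ∈ Algebra.adjoin κ G, ∀ hz : z ∈ B, φ ⟨z, hz⟩ ∈ S := by
      intro z hz
      induction hz using Algebra.adjoin_induction with
      | mem x hx =>
        intro hz
        obtain ⟨i, r, hr, rfl⟩ := Set.mem_iUnion.mp hx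
        exact Subfield.subset_closure ⟨_, Or.inr ⟨i, r, hgR hr, rfl⟩, rfl⟩
      | algebraMap r => exact fun hz => Subfield.subset_closure ⟨_, Or.inl ⟨r, rfl⟩, rfl⟩
      | add x y hx hy h1 h2 =>
        intro hz
        have := add_mem (h1 (hAG hx)) (h2 (hAG hy))
        rw [← map_add] at this
        exact this
      | mul x y hx hy h1 h2 =>
        intro hz
        have := mul_mem (h1 (hAG hx)) (h2 (hAG hy))
        rw [← map_mul] at this
        exact this
    have hB2 : ∀ z ∈ Algebra.adjoin κ (insert (h0⁻¹) G), ∀ hz : z ∈ B, φ ⟨z, hz⟩ ∈ S := by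
      intro z hz
      induction hz using Algebra.adjoin_induction with
      | mem x hx =>
        intro hz
        rcases hx with rfl | hx
        · have h6 : φ ⟨h0, hAG hh0⟩ * φ ⟨h0⁻¹, hz⟩ = 1 := by
            rw [← map_mul, ← map_one φ]
            congr 1
            exact Subtype.ext (mul_inv_cancel₀ hh00)
          rw [eq_inv_of_mul_eq_one_right h6]
          exact inv_mem (key _ hh0 _)
        · exact key _ (Algebra.subset_adjoin hx) _
      | algebraMap r => exact fun hz => Subfield.subset_closure ⟨_, Or.inl ⟨r, rfl⟩, rfl⟩
      | add x y hx hy h1 h2 =>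
        intro hz
        rw [← hBeq] at hx hy
        have := add_mem (h1 hx) (h2 hy)
        rw [← map_add] at this
        exact this
      | mul x y hx hy h1 h2 =>
        intro hz
        rw [← hBeq] at hx hy
        have := mul_mem (h1 hx) (h2 hy)
        rw [← map_mul] at this
        exact this
    rintro ⟨b, hb⟩
    exact hB2 b (hBeq ▸ hb) hb
  refine ⟨B, hB, ?_, hlB, hφN, ?_⟩
  · rw [hBeq]
    exact Subalgebra.fg_def.mpr ⟨_, hGf.insert _, rfl⟩
  intro Ω _ _ θ φ hθ hφ hθφ
  letI dRL : Differential RL := subDiffA RL hRL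
  letI dB : Differential B := subDiffA B hB
  haveI : DifferentialAlgebra κ RL := ⟨fun z => Subtype.ext (deriv_algebraMap (B := Lt) z)⟩
  haveI : DifferentialAlgebra κ B := ⟨fun z => Subtype.ext (deriv_algebraMap (B := T) z)⟩
  have hθ' : DHom θ := fun r => hθ r r.2
  have hφ' : DHom φ := fun r => hφ r r.2
  letI : Differential (RL ⊗[κ] B) := tensDiff κ RL B
  -- the map to W
  letI algW : Algebra κ W := (t.comp (algebraMap κ T)).toAlgebra
  let aR : RL →ₐ[κ] W := { a.comp (algebraMap RL Lt) with commutes' := fun z => (hta z).symm }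
  let tB : B →ₐ[κ] W := { t.comp (algebraMap B T) with commutes' := fun z => rfl }
  have haR : ∀ r, aR r = a r := fun _ => rfl
  have htB : ∀ b, tB b = t b := fun _ => rfl
  let μ := Algebra.TensorProduct.productMap aR tB
  have hμd : DHom μ.toRingHom := by
    refine tens_dhom _ _ _ _ ?_ ?_
    · intro r
      have : ∀ r, (μ.toRingHom.comp (Algebra.TensorProduct.includeLeft : RL →ₐ[κ] RL ⊗[κ] B).toRingHom) r = a r := by
        intro r; simp [μ, haR]
      rw [this, this]; exact ha r
    · intro r
      have : ∀ r, (μ.toRingHom.comp (Algebra.TensorProduct.includeRight : B →ₐ[κ] RL ⊗[κ] B).toRingHom) r = t r := by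
        intro r; simp [μ, htB]
      rw [this, this]; exact ht r
  have hμinj : Function.Injective μ := by
    rw [injective_iff_map_eq_zero]
    intro z hz
    obtain ⟨n, s, c, hs, hc⟩ : ∃ (n : ℕ) (s : Fin n → RL) (c : Fin n → B), LinearIndependent κ s ∧
        z = ∑ i, s i ⊗ₜ[κ] c i := by
      obtain ⟨p, hp⟩ := TensorProduct.exists_finset z
      obtain ⟨n, s, c, hs, hc⟩ := exists_decomp κ RL (fun i : p => i.1.1)
      refine ⟨n, s, fun b => ∑ i : p, c b i • i.1.2, hs, ?_⟩
      rw [hp, ← Finset.sum_coe_sort]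
      simp only [TensorProduct.tmul_sum]
      rw [Finset.sum_comm]
      refine Finset.sum_congr rfl fun i _ => ?_
      rw [hc i, TensorProduct.sum_tmul]
      exact Finset.sum_congr rfl fun b _ => TensorProduct.smul_tmul _ _ _
    by_contra hz0
    refine hLD n (fun i => s i) (fun i => c i) ?_ ?_ (hs.map' RL.val.toLinearMap (by
      rw [LinearMap.ker_eq_bot]; exact Subtype.val_injective))
    · intro h
      apply hz0
      rw [hc]
      refine Finset.sum_eq_zero fun i _ => ?_
      have : c i = 0 := Subtype.ext (congrFun h i)
      rw [this, TensorProduct.tmul_zero]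
    · rw [hc, map_sum] at hz
      rw [← hz]
      refine Finset.sum_congr rfl fun i _ => ?_
      simp [μ, haR, htB]
  letI algΩ : Algebra κ Ω := (φ.comp (algebraMap κ B)).toAlgebra
  let θR : RL →ₐ[κ] Ω := { θ with commutes' := fun z => hθφ z }
  let φB : B →ₐ[κ] Ω := { φ with commutes' := fun z => rfl }
  let ν := Algebra.TensorProduct.productMap θR φB
  have hνd : DHom ν.toRingHom := by
    refine tens_dhom _ _ _ _ ?_ ?_
    · intro r
      have : ∀ r, (ν.toRingHom.comp (Algebra.TensorProduct.includeLeft : RL →ₐ[κ] RL ⊗[κ] B).toRingHom) r = θ r := by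
        intro r; simp [ν, θR]
      rw [this, this]; exact hθ' r
    · intro r
      have : ∀ r, (ν.toRingHom.comp (Algebra.TensorProduct.includeRight : B →ₐ[κ] RL ⊗[κ] B).toRingHom) r = φ r := by
        intro r; simp [ν, φB]
      rw [this, this]; exact hφ' r
  let γB : Fin m → B := fun i => ⟨γ i, hγB i⟩
  let xR : RL := ⟨x, hxR⟩
  let y : Fin m ⊕ Fin m → RL ⊗[κ] B := Sum.elim (fun i => xR ⊗ₜ γB i) (fun i => 1 ⊗ₜ γB i)
  have hμy : ∀ e, wr e y = 0 := by
    intro e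
    apply hμinj
    rw [map_zero]
    refine (hμd.wr e y).trans ?_
    refine wr1 _ (Sum.elim w (fun i => - u i)) ?_ ?_ ?_ e
    · rintro (i | i)
      · exact hw i
      · simp only [Sum.elim_inr]
        exact neg_mem (hu i)
    · intro h
      apply hne
      refine Finset.sum_eq_zero fun i _ => ?_
      have := congrFun h (Sum.inl i)
      simp only [Sum.elim_inl, Pi.zero_apply] at this
      rw [this, mul_zero]
    · rw [Fintype.sum_sum_type]
      simp only [y, Sum.elim_inl, Sum.elim_inr]
      have h1 : ∀ i, μ.toRingHom (xR ⊗ₜ[κ] γB i) = a x * γ' i := by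
        intro i; simp [μ, haR, htB, xR, γB, hγ]
      have h2 : ∀ i, μ.toRingHom (1 ⊗ₜ[κ] γB i) = γ' i := by
        intro i; simp [μ, haR, htB, xR, γB, hγ]
      simp only [h1, h2, mul_neg, Finset.sum_neg_distrib, mul_assoc, ← Finset.mul_sum]
      rw [hrel]; ring
  obtain ⟨c, hc, hc0, hcs⟩ := wr2 (fun i => ν.toRingHom (y i)) (fun e => by
    rw [← hνd.wr, hμy, map_zero])
  have h1 : ∀ i, ν.toRingHom (xR ⊗ₜ[κ] γB i) = θ xR * φ (γB i) := by
    intro i; simp [ν, θR, φB]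
  have h2 : ∀ i, ν.toRingHom (1 ⊗ₜ[κ] γB i) = φ (γB i) := by
    intro i; simp [ν, θR, φB]
  rw [Fintype.sum_sum_type] at hcs
  simp only [y, Sum.elim_inl, Sum.elim_inr, h1, h2] at hcs
  -- independence of the images
  have hind : ∀ c : Fin m → Ω, (∀ i, (c i)′ = 0) → ∑ i, φ (γB i) * c i = 0 → c = 0 := by
    intro c hc h
    by_contra hc0
    have h3 := wr1 _ c hc hc0 h e0
    have hval : ((wr e0 γB : B) : T) = wr e0 γ := by
      have hv : DHom (algebraMap B T) := fun b => rfl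
      exact hv.wr e0 γB
    have h4 : wr e0 γB * ⟨_, hwB⟩ = 1 := by
      apply Subtype.ext
      change ((wr e0 γB : B) : T) * _ = 1
      rw [hval]
      exact mul_inv_cancel₀ he0
    have h5 := congrArg φ h4
    rw [map_mul, hφ'.wr, h3, zero_mul, map_one] at h5
    exact zero_ne_one h5
  have hne2 : ∑ i, φ (γB i) * c (Sum.inl i) ≠ 0 := by
    intro h
    have h3 := hind (fun i => c (Sum.inl i)) (fun i => hc _) h
    have h4 : ∑ i, φ (γB i) * c (Sum.inr i) = 0 := by
      simp only [mul_assoc, ← Finset.mul_sum] at hcs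
      rwa [h, mul_zero, zero_add] at hcs
    have h5 := hind (fun i => c (Sum.inr i)) (fun i => hc _) h4
    apply hc0
    funext i
    rcases i with i | i
    · exact congrFun h3 i
    · exact congrFun h5 i
  have hfin : θ xR = - (∑ i, φ (γB i) * c (Sum.inr i)) / ∑ i, φ (γB i) * c (Sum.inl i) := by
    rw [eq_div_iff hne2, eq_neg_iff_add_eq_zero, ← hcs, Finset.mul_sum]
    simp only [mul_assoc]
  rw [hfin]
  exact div_mem (neg_mem (sum_mem fun i _ => mul_mem (le_sup_left (b := cst Ω) (hφN Ω φ _))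
    (le_sup_right (b := cst Ω) (hc _)))) (sum_mem fun i _ => mul_mem (le_sup_left (b := cst Ω) (hφN Ω φ _))
    (le_sup_right (b := cst Ω) (hc _)))


theorem rad_diff {A : Type*} [CommRing A] [Algebra ℚ A] [Differential A] (I : Ideal A)
    (hI : ∀ x ∈ I, x′ ∈ I) : ∀ x ∈ I.radical, x′ ∈ I.radical := by
  rintro x ⟨n, hn⟩
  have key : ∀ j m : ℕ, m + j = n → x ^ m * (x′) ^ (2 * j) ∈ I := by
    intro j
    induction j with
    | zero => intro m hm; simp at hm; subst hm; simpa using hn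
    | succ j ih =>
      intro m hm
      have h1 := ih (m + 1) (by omega)
      have h2 := hI _ h1
      rw [Derivation.leibniz, Derivation.leibniz_pow, Derivation.leibniz_pow] at h2
      simp only [smul_eq_mul, nsmul_eq_mul, Nat.add_sub_cancel] at h2
      have h3 := I.mul_mem_left (x′) h2
      have h4 : ((m + 1 : ℕ) : A) * (x ^ m * (x′) ^ (2 * (j + 1))) ∈ I := by
        rcases j with _ | j
        · convert h3 using 1
          simp; ring
        · have h5 := I.mul_mem_left (((2 * (j + 1) : ℕ) : A) * (x′)′) h1
          convert I.sub_mem h3 h5 using 1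
          have e : 2 * (j + 1) - 1 = 2 * j + 1 := by omega
          rw [e]
          push_cast; ring
      have h5 := I.mul_mem_left (algebraMap ℚ A ((m + 1 : ℕ) : ℚ)⁻¹) h4
      rw [← mul_assoc, ← map_natCast (algebraMap ℚ A), ← map_mul, inv_mul_cancel₀ (by positivity),
        map_one, one_mul] at h5
      exact h5
  have := key n 0 (by omega)
  rw [pow_zero, one_mul] at this
  exact ⟨_, this⟩

theorem exists_max_diff (A : Type*) [CommRing A] [Nontrivial A] [Algebra ℚ A] [Differential A] :
    ∃ I : Ideal A, I.IsPrime ∧ (∀ x ∈ I, x′ ∈ I) ∧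
      ∀ J : Ideal A, I ≤ J → (∀ x ∈ J, x′ ∈ J) → J ≠ ⊤ → J = I := by
  obtain ⟨I, -, hI⟩ := zorn_le_nonempty₀ {I : Ideal A | I ≠ ⊤ ∧ ∀ x ∈ I, x′ ∈ I} (by
    intro c hc hch y hy
    refine ⟨sSup c, ⟨?_, ?_⟩, fun z hz => le_sSup hz⟩
    · rw [Ideal.ne_top_iff_one, Submodule.mem_sSup_of_directed ⟨y, hy⟩ hch.directedOn]
      rintro ⟨z, hz, h⟩
      exact (hc hz).1 ((Ideal.eq_top_iff_one _).mpr h)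
    · intro x hx
      rw [Submodule.mem_sSup_of_directed ⟨y, hy⟩ hch.directedOn] at hx ⊢
      obtain ⟨z, hz, h⟩ := hx
      exact ⟨z, hz, (hc hz).2 _ h⟩) ⊥ ⟨bot_ne_top, by intro x hx; rw [Ideal.mem_bot] at hx; simp [hx]⟩
  have hmax : ∀ J : Ideal A, I ≤ J → (∀ x ∈ J, x′ ∈ J) → J ≠ ⊤ → J = I := fun J h1 h2 h3 =>
    le_antisymm (hI.2 ⟨h3, h2⟩ h1) h1
  obtain ⟨hI1, hI2⟩ := hI.1
  have hrad : I.radical = I := hmax _ Ideal.le_radical (rad_diff I hI2) (by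
    rwa [Ne, Ideal.radical_eq_top])
  have hrad2 : ∀ y, y ^ 2 ∈ I → y ∈ I := fun y hy => by
    rw [← hrad]; exact ⟨2, hy⟩
  refine ⟨I, ⟨hI1, ?_⟩, hI2, hmax⟩
  intro x a hxa
  by_contra! hcon
  obtain ⟨hx, ha⟩ := hcon
  let J : Ideal A :=
    { carrier := {y | y * a ∈ I}
      zero_mem' := by simp
      add_mem' := by
        intro y z hy hz
        simp only [Set.mem_setOf_eq, add_mul] at *
        exact I.add_mem hy hz
      smul_mem' := by
        intro c y hy
        simp only [Set.mem_setOf_eq, smul_eq_mul, mul_assoc] at *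
        exact I.mul_mem_left _ hy }
  have hJ : J = I := by
    refine hmax J (fun y hy => I.mul_mem_right _ hy) ?_ ?_
    · intro y (hy : y * a ∈ I)
      change y′ * a ∈ I
      apply hrad2
      have h1 := hI2 _ hy
      rw [Derivation.leibniz] at h1
      simp only [smul_eq_mul] at h1
      have h2 := I.mul_mem_left (y′ * a) h1
      have h3 := I.mul_mem_left (y′ * a′) hy
      convert I.sub_mem h2 h3 using 1
      ring
    · intro h
      have : (1 : A) ∈ J := by rw [h]; trivial
      change 1 * a ∈ I at this
      rw [one_mul] at this
      exact ha this
  apply hx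
  rw [← hJ]
  exact hxa

theorem quot_diff {A : Type*} [CommRing A] [Differential A] (I : Ideal A)
    (hI : ∀ x ∈ I, x′ ∈ I) : ∃ _d : Differential (A ⧸ I), DHom (Ideal.Quotient.mk I) := by
  let f : (A ⧸ I) →+ (A ⧸ I) := QuotientAddGroup.map _ _
    (Differential.deriv : Derivation ℤ A A).toLinearMap.toAddMonoidHom (fun x hx => hI x hx)
  have hf : ∀ x, f (Ideal.Quotient.mk I x) = Ideal.Quotient.mk I (x′) := fun x => rfl
  refine ⟨⟨Derivation.mk' f.toIntLinearMap ?_⟩, fun x => rfl⟩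
  intro a b
  obtain ⟨a, rfl⟩ := Ideal.Quotient.mk_surjective a
  obtain ⟨b, rfl⟩ := Ideal.Quotient.mk_surjective b
  simp only [AddMonoidHom.coe_toIntLinearMap, smul_eq_mul]
  rw [← map_mul, hf, hf, hf, Derivation.leibniz]
  simp only [smul_eq_mul, map_add, map_mul]

open Polynomial in
theorem generic_inv {N F : Type u} [Field N] [Field F] [Algebra N F] (s : Set F) (hs : s.Finite)
    (c : F) (hc : Transcendental N c) (A0 : Set N) (hA : A0.Infinite)
    (h : ∀ a ∈ A0, (c - algebraMap N F a)⁻¹ ∈ Algebra.adjoin N s) : False := by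
  classical
  letI alg1 : Algebra N[X] F := (aeval c : N[X] →ₐ[N] F).toRingHom.toAlgebra
  have hal : ∀ p : N[X], algebraMap N[X] F p = aeval c p := fun p => rfl
  have hinj : Function.Injective (algebraMap N[X] F) := transcendental_iff_injective.mp hc
  let K := FractionRing N[X]
  letI alg2 : Algebra K F := (IsFractionRing.lift (A := N[X]) (K := K) hinj).toAlgebra
  haveI st : IsScalarTower N[X] K F := IsScalarTower.of_algebraMap_eq fun p =>
    (IsFractionRing.lift_algebraMap (A := N[X]) (K := K) hinj p).symm
  haveI st1 : IsScalarTower N N[X] F := IsScalarTower.of_algebraMap_eq fun p => by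
    rw [hal]; simp [← C_eq_algebraMap]
  haveI st2 : IsScalarTower N K F := IsScalarTower.of_algebraMap_eq fun p => by
    rw [IsScalarTower.algebraMap_apply N N[X] K, ← IsScalarTower.algebraMap_apply N[X] K F,
      ← IsScalarTower.algebraMap_apply N N[X] F]
  let R := Algebra.adjoin K s
  haveI : Algebra.FiniteType K R := by
    rw [← Subalgebra.fg_iff_finiteType]
    exact Subalgebra.fg_def.mpr ⟨_, hs, rfl⟩
  let Kb := AlgebraicClosure K
  obtain ⟨φ0, -⟩ := exists_point Kb (Kb ⊗[K] R) 1 not_isNilpotent_one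
  let φ : R →ₐ[K] Kb := (φ0.restrictScalars K).comp Algebra.TensorProduct.includeRight
  have hRs : ∀ r ∈ Algebra.adjoin N s, r ∈ R := by
    intro r hr
    have : Algebra.adjoin N s ≤ R.restrictScalars N := Algebra.adjoin_le Algebra.subset_adjoin
    exact this hr
  have hy : ∀ e : s, ∃ y : N[X], y ≠ 0 ∧
      IsIntegral N[X] (algebraMap N[X] Kb y * φ ⟨e, Algebra.subset_adjoin e.2⟩) := by
    intro e
    haveI : Algebra.IsAlgebraic N[X] Kb := 
      (IsFractionRing.comap_isAlgebraic_iff (K := K)).mpr inferInstance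
    obtain ⟨y, hy, h⟩ := 
      (Algebra.IsAlgebraic.isAlgebraic (R := N[X]) (φ ⟨e, Algebra.subset_adjoin e.2⟩)).exists_integral_multiple
    rw [Algebra.smul_def] at h
    exact ⟨y, hy, h⟩
  choose y hy0 hy using hy
  haveI := hs.fintype
  let g : N[X] := ∏ e : s, y e
  have hg0 : g ≠ 0 := Finset.prod_ne_zero_iff.mpr fun e _ => hy0 e
  let G := algebraMap N[X] Kb g
  have hGi : IsIntegral N[X] G := isIntegral_algebraMap
  have key : ∀ r (hr : r ∈ Algebra.adjoin N s), ∃ n : ℕ, IsIntegral N[X] (G ^ n * φ ⟨r, hRs r hr⟩) := by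
    intro r hr
    induction hr using Algebra.adjoin_induction with
    | mem x hx =>
      refine ⟨1, ?_⟩
      have : G = algebraMap N[X] Kb (∏ e ∈ Finset.univ.erase ⟨x, hx⟩, y e) *
          algebraMap N[X] Kb (y ⟨x, hx⟩) := by
        rw [← map_mul, Finset.prod_erase_mul _ _ (Finset.mem_univ _)]
      rw [pow_one, this, mul_assoc]
      exact isIntegral_algebraMap.mul (hy ⟨x, hx⟩)
    | algebraMap r =>
      refine ⟨0, ?_⟩
      have : φ ⟨algebraMap N F r, hRs _ (Subalgebra.algebraMap_mem _ r)⟩ =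
          algebraMap N[X] Kb (C r) := by
        have e : (⟨algebraMap N F r, hRs _ (Subalgebra.algebraMap_mem _ r)⟩ : R) =
          algebraMap K R (algebraMap N[X] K (C r)) := by
          apply Subtype.ext
          change _ = algebraMap K F _
          rw [← IsScalarTower.algebraMap_apply, hal]; simp
        rw [e, AlgHom.commutes, ← IsScalarTower.algebraMap_apply]
      rw [this, pow_zero, one_mul]
      exact isIntegral_algebraMap
    | add x z hx hz h1 h2 =>
      obtain ⟨n, hn⟩ := h1
      obtain ⟨m, hm⟩ := h2
      refine ⟨n + m, ?_⟩
      have e : (⟨x + z, hRs _ (add_mem hx hz)⟩ : R) = ⟨x, hRs _ hx⟩ + ⟨z, hRs _ hz⟩ := rfl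
      rw [e, map_add]
      have e2 : ∀ p q : Kb, G ^ (n + m) * (p + q) = G ^ n * p * G ^ m + G ^ m * q * G ^ n := by
        intro p q; ring
      rw [e2]
      exact (hn.mul (hGi.pow m)).add (hm.mul (hGi.pow n))
    | mul x z hx hz h1 h2 =>
      obtain ⟨n, hn⟩ := h1
      obtain ⟨m, hm⟩ := h2
      refine ⟨n + m, ?_⟩
      have e : (⟨x * z, hRs _ (mul_mem hx hz)⟩ : R) = ⟨x, hRs _ hx⟩ * ⟨z, hRs _ hz⟩ := rfl
      rw [e, map_mul]
      have e2 : ∀ p q : Kb, G ^ (n + m) * (p * q) = G ^ n * p * (G ^ m * q) := by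
        intro p q; ring
      rw [e2]
      exact hn.mul hm
  have hroot : ∀ a ∈ A0, g.IsRoot a := by
    intro a ha
    have hca : c - algebraMap N F a ≠ 0 := by
      intro h0
      rw [sub_eq_zero] at h0
      exact hc (h0 ▸ isAlgebraic_algebraMap a)
    obtain ⟨n, hn⟩ := key _ (h a ha)
    have hXa : algebraMap N[X] Kb (X - C a) * φ ⟨_, hRs _ (h a ha)⟩ = 1 := by
      rw [IsScalarTower.algebraMap_apply N[X] K Kb, ← φ.commutes, ← map_mul, ← map_one φ]
      congr 1
      apply Subtype.ext
      change algebraMap K F _ * (c - algebraMap N F a)⁻¹ = 1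
      rw [← IsScalarTower.algebraMap_apply, hal]
      simp only [map_sub, aeval_X, aeval_C]
      exact mul_inv_cancel₀ hca
    have hXne : X - C a ≠ 0 := X_sub_C_ne_zero a
    have hXK : algebraMap N[X] K (X - C a) ≠ 0 := by
      rwa [Ne, FaithfulSMul.algebraMap_eq_zero_iff]
    have e1 : G ^ n * φ ⟨_, hRs _ (h a ha)⟩ =
        algebraMap K Kb (algebraMap N[X] K (g ^ n) / algebraMap N[X] K (X - C a)) := by
      rw [map_div₀, ← IsScalarTower.algebraMap_apply, ← IsScalarTower.algebraMap_apply, map_pow,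
        eq_div_iff, mul_assoc, mul_comm (φ _), hXa, mul_one]
      intro h0
      rw [h0, zero_mul] at hXa
      exact zero_ne_one hXa
    rw [e1, isIntegral_algebraMap_iff (algebraMap K Kb).injective] at hn
    obtain ⟨q, hq⟩ := IsIntegrallyClosed.isIntegral_iff.mp hn
    rw [eq_div_iff hXK, ← map_mul] at hq
    have hq2 := IsFractionRing.injective N[X] K hq
    have hd : (X - C a) ∣ g ^ n := ⟨q, by rw [← hq2, mul_comm]⟩
    exact dvd_iff_isRoot.mp ((prime_X_sub_C a).dvd_of_dvd_pow hd)
  exact hA ((g.roots.toFinset.finite_toSet).subset fun a ha => by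
    simpa [hg0] using hroot a ha)


theorem alg_const {T : Type*} [Field T] [Differential T] (N : Subfield T)
    (hN : ∀ x ∈ N, x′ ∈ N) (CN : Subfield T) (hCN : ∀ x, x ∈ N → x′ = 0 → x ∈ CN)
    (hCl : IsAlgClosed CN) (c : T) (hc : c′ = 0) (halg : IsAlgebraic N c) : c ∈ CN := by
  by_contra hcon
  have h1 : Transcendental CN c := by
    intro h
    obtain ⟨y, hy⟩ := minpoly.mem_range_of_degree_eq_one CN c
      (IsAlgClosed.degree_eq_one_of_irreducible CN (minpoly.irreducible h.isIntegral))
    exact hcon (hy ▸ y.2)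
  have h2 : AlgebraicIndependent CN (fun _ : Unit => c) :=
    (algebraicIndependent_unique_type_iff (ι := Unit)).mpr h1
  have h3 := ai_cst N hN (fun _ : Unit => c) (fun _ => hc) CN hCN h2
  exact ((algebraicIndependent_unique_type_iff (ι := Unit)).mp h3) halg

theorem isAlgClosed_map {A B : Type u} [Field A] [Field B] (f : A →+* B) (S : Subfield A)
    (h : IsAlgClosed S) : IsAlgClosed (S.map f) := by
  have e : (f.comp S.subtype).fieldRange = S.map f := by
    ext z; simp [RingHom.mem_fieldRange, Subfield.mem_map]
  rw [← e]
  exact IsAlgClosed.of_ringEquiv _ _ (RingHom.rangeRestrictFieldEquiv (f.comp S.subtype))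

theorem ext_one (N A : Type u) [Field N] [CharZero N] [Differential N] (hC : IsAlgClosed (cst N))
    [CommRing A] [Nontrivial A] [Algebra N A] [Differential A] [DifferentialAlgebra N A]
    [Algebra.FiniteType N A] :
    ∃ (N1 : Type u) (_ : Field N1) (_ : Differential N1) (j : N →+* N1) (φ : A →+* N1),
      DHom j ∧ DHom φ ∧ (∀ z, φ (algebraMap N A z) = j z) ∧
      ∀ z : N1, z′ = 0 → ∃ a : N, a′ = 0 ∧ j a = z := by
  letI : Algebra ℚ A := ((algebraMap N A).comp (algebraMap ℚ N)).toAlgebra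
  obtain ⟨I, hIp, hId, hImax⟩ := exists_max_diff A
  obtain ⟨_d, hmk⟩ := quot_diff I hId
  obtain ⟨F, _, _, hfr⟩ : ∃ (F : Type u) (_ : Field F) (_ : Algebra (A ⧸ I) F),
      IsFractionRing (A ⧸ I) F := ⟨FractionRing (A ⧸ I), inferInstance, inferInstance, inferInstance⟩
  obtain ⟨_dF, hdF⟩ := exists_diff_fractionRing (A ⧸ I) F
  let φ : A →+* F := (algebraMap (A ⧸ I) F).comp (Ideal.Quotient.mk I)
  have hφ : DHom φ := (dhom_algebraMap _ _).comp hmk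
  let j : N →+* F := φ.comp (algebraMap N A)
  have hj : DHom j := hφ.comp (dhom_algebraMap _ _)
  have hker : ∀ x, φ x = 0 ↔ x ∈ I := by
    intro x
    rw [← Ideal.Quotient.eq_zero_iff_mem]
    exact FaithfulSMul.algebraMap_eq_zero_iff (A ⧸ I) F
  letI algF : Algebra N F := j.toAlgebra
  have hfrac : ∀ z : F, ∃ x y : A, φ y ≠ 0 ∧ z = φ x / φ y := by
    intro z
    obtain ⟨x, y, hy, rfl⟩ := IsFractionRing.div_surjective (A := A ⧸ I) z
    obtain ⟨x, rfl⟩ := Ideal.Quotient.mk_surjective x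
    obtain ⟨y, rfl⟩ := Ideal.Quotient.mk_surjective y
    refine ⟨x, y, ?_, rfl⟩
    have := nonZeroDivisors.ne_zero hy
    rwa [Ne, hker, ← Ideal.Quotient.eq_zero_iff_mem]
  have step1 : ∀ z : F, z′ = 0 → ∃ x, φ x = z := by
    intro z hz
    let J : Ideal A :=
      { carrier := {y | ∃ x, φ x = φ y * z}
        zero_mem' := ⟨0, by simp⟩
        add_mem' := by
          rintro y w ⟨x, hx⟩ ⟨v, hv⟩
          exact ⟨x + v, by rw [map_add, map_add, hx, hv, add_mul]⟩
        smul_mem' := by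
          rintro c y ⟨x, hx⟩
          exact ⟨c * x, by rw [smul_eq_mul, map_mul, map_mul, hx, mul_assoc]⟩ }
    have hIJ : I ≤ J := fun y hy => ⟨0, by rw [(hker y).mpr hy]; simp⟩
    have hJd : ∀ y ∈ J, y′ ∈ J := by
      rintro y ⟨x, hx⟩
      refine ⟨x′, ?_⟩
      rw [hφ, hφ, hx, Derivation.leibniz, hz]
      simp [mul_comm]
    by_cases hJ : J = ⊤
    · have : (1 : A) ∈ J := by rw [hJ]; trivial
      obtain ⟨x, hx⟩ := this
      exact ⟨x, by rw [hx]; simp⟩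
    · exfalso
      have hJI := hImax J hIJ hJd hJ
      obtain ⟨x, y, hy, rfl⟩ := hfrac z
      have : y ∈ J := ⟨x, (mul_div_cancel₀ _ hy).symm⟩
      rw [hJI] at this
      exact hy ((hker y).mpr this)
  obtain ⟨s, hs⟩ := (inferInstance : Algebra.FiniteType N A).out
  have hadj : ∀ x, φ x ∈ Algebra.adjoin N (φ '' (s : Set A)) := by
    intro x
    have hx : x ∈ Algebra.adjoin N (s : Set A) := by rw [hs]; trivial
    let φ' : A →ₐ[N] F := { φ with commutes' := fun z => rfl }
    have : (Algebra.adjoin N (s : Set A)).map φ' = Algebra.adjoin N (φ '' (s : Set A)) :=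
      AlgHom.map_adjoin _ _
    rw [← this]
    exact ⟨x, hx, rfl⟩
  refine ⟨F, inferInstance, _dF, j, φ, hj, hφ, fun z => rfl, ?_⟩
  intro z hz
  by_cases htr : Transcendental N z
  · exfalso
    refine generic_inv (φ '' (s : Set A)) (s.finite_toSet.image _) z htr (cst N : Set N)
      (Set.infinite_coe_iff.mp (inferInstance : Infinite (cst N))) ?_
    intro a ha
    have ha' : a′ = 0 := ha
    obtain ⟨x, hx⟩ := step1 (z - algebraMap N F a)⁻¹ (by
      rw [deriv_inv_field]
      have : (algebraMap N F a)′ = 0 := by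
        change (j a)′ = 0
        rw [← hj, ha', map_zero]
      rw [map_sub, hz, this]; simp)
    rw [← hx]
    exact hadj x
  · have halg : IsAlgebraic N z := not_not.mp htr
    have halg2 : IsAlgebraic j.fieldRange z := by
      obtain ⟨p, hp, hp0⟩ := halg
      refine ⟨p.map j.rangeRestrictField, ?_, ?_⟩
      · rwa [Ne, Polynomial.map_eq_zero]
      · rw [← hp0, Polynomial.aeval_def, Polynomial.aeval_def, Polynomial.eval₂_map]
        rfl
    have := alg_const j.fieldRange (by
      rintro _ ⟨x, rfl⟩
      exact ⟨x′, hj x⟩) ((cst N).map j) (by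
      rintro _ ⟨x, rfl⟩ hx
      refine ⟨x, ?_, rfl⟩
      rw [← hj] at hx
      exact (map_eq_zero j).mp hx) (isAlgClosed_map j _ hC) z hz halg2
    obtain ⟨a, ha, h⟩ := this
    exact ⟨a, ha, h⟩


open scoped IntermediateField.algebraAdjoinAdjoin in
theorem findim_algClosure (k L : Type u) [Field k] [Field L] [Algebra k L]
    [Algebra.EssFiniteType k L] : FiniteDimensional k (algebraicClosure k L) := by
  classical
  let κ := algebraicClosure k L
  obtain ⟨s, hs⟩ := exists_isTranscendenceBasis k L
  let E := IntermediateField.adjoin k s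
  haveI : Algebra.IsAlgebraic E L := by
    have := hs.isAlgebraic_field
    rwa [Subtype.range_coe] at this
  haveI : Algebra.EssFiniteType E L := Algebra.EssFiniteType.of_comp k E L
  haveI : FiniteDimensional E L := Algebra.finite_of_essFiniteType_of_isAlgebraic
  have hAI : AlgebraicIndependent κ ((↑) : s → L) := hs.1.extendScalars κ
  have key : ∀ t : Finset κ, LinearIndependent k (fun i : t => (i : κ)) → t.card ≤ Module.finrank E L := by
    intro t ht
    have h1 : LinearIndependent (Algebra.adjoin k s) (fun i : t => ((i : κ) : L)) := by
      rw [Fintype.linearIndependent_iff]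
      intro g hg
      have hp : ∀ i, ∃ p : MvPolynomial s k, MvPolynomial.aeval ((↑) : s → L) p = g i := by
        intro i
        have h0 : ∀ z ∈ Algebra.adjoin k s, ∃ p : MvPolynomial s k,
            MvPolynomial.aeval ((↑) : s → L) p = z := by
          intro z hz
          rw [Algebra.adjoin_eq_range] at hz
          exact hz
        exact h0 _ (g i).2
      choose p hp using hp
      let P : MvPolynomial s κ := ∑ i : t, MvPolynomial.C (i : κ) * MvPolynomial.map (algebraMap k κ) (p i)
      have hP : MvPolynomial.aeval ((↑) : s → L) P = 0 := by
        rw [← hg]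
        simp only [P, map_sum, map_mul]
        refine Finset.sum_congr rfl fun i _ => ?_
        rw [MvPolynomial.aeval_C, MvPolynomial.aeval_map_algebraMap, hp, mul_comm]
        rfl
      have hP0 : P = 0 := by
        apply hAI
        rw [hP, map_zero]
      rw [Fintype.linearIndependent_iff] at ht
      have hp0 : ∀ i, p i = 0 := by
        intro i
        ext m
        rw [MvPolynomial.coeff_zero]
        refine ht (fun i => (p i).coeff m) ?_ i
        have := congrArg (MvPolynomial.coeff m) hP0
        simp only [P, MvPolynomial.coeff_sum, MvPolynomial.coeff_C_mul, MvPolynomial.coeff_map,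
          MvPolynomial.coeff_zero] at this
        rw [← this]
        exact Finset.sum_congr rfl fun i _ => by rw [Algebra.smul_def, mul_comm]
      intro i
      apply Subtype.ext
      rw [← hp, hp0]; simp
    have h2 : LinearIndependent E (fun i : t => ((i : κ) : L)) :=
      (LinearIndependent.iff_fractionRing (Algebra.adjoin k s) (IntermediateField.adjoin k s)).mp h1
    simpa using h2.fintype_card_le_finrank
  exact Module.rank_lt_aleph0_iff.mp ((rank_le key).trans_lt Cardinal.natCast_lt_aleph0)

theorem conj {k κ κ' Ω : Type*} [Field k] [Field κ] [Field κ'] [Field Ω] [Algebra k κ]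
    [Algebra k κ'] [Algebra.IsAlgebraic k κ] (hsp : ∀ x : κ, ((minpoly k x).map (algebraMap k κ')).Splits)
    (s : κ' →+* Ω) (τ : κ →+* Ω) (h : ∀ z : k, τ (algebraMap k κ z) = s (algebraMap k κ' z)) :
    ∃ i : κ →ₐ[k] κ', ∀ z, τ z = s (i z) := by
  let A := AlgebraicClosure Ω
  letI : Algebra κ' A := ((algebraMap Ω A).comp s).toAlgebra
  letI : Algebra k A := ((algebraMap Ω A).comp (s.comp (algebraMap k κ'))).toAlgebra
  haveI : IsScalarTower k κ' A := IsScalarTower.of_algebraMap_eq fun _ => rfl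
  let τ' : κ →ₐ[k] A := { (algebraMap Ω A).comp τ with
    commutes' := fun z => congrArg (algebraMap Ω A) (h z) }
  let e := Algebra.IsAlgebraic.algHomEquivAlgHomOfSplits A κ' hsp
  refine ⟨e.symm τ', fun z => ?_⟩
  have h1 : e (e.symm τ') z = τ' z := by rw [Equiv.apply_symm_apply]
  apply (algebraMap Ω A).injective
  exact h1.symm

theorem ext_fam {κ N0 : Type u} [Field κ] [Differential κ] [Field N0] [CharZero N0] [Differential N0]
    (hC : IsAlgClosed (cst N0)) {J : Type u} [Finite J] (B : J → Type u) [∀ p, CommRing (B p)]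
    [∀ p, Nontrivial (B p)] [∀ p, Algebra κ (B p)] [∀ p, Differential (B p)]
    [∀ p, DifferentialAlgebra κ (B p)] [∀ p, Algebra.FiniteType κ (B p)] (i : J → κ →+* N0)
    (hi : ∀ p, DHom (i p)) :
    ∃ (N : Type u) (_ : Field N) (_ : Differential N) (j : N0 →+* N) (φ : ∀ p, B p →+* N),
      DHom j ∧ (∀ p, DHom (φ p)) ∧ (∀ p z, φ p (algebraMap κ (B p) z) = j (i p z)) ∧
      ∀ z : N, z′ = 0 → ∃ a : N0, a′ = 0 ∧ j a = z := by
  have key : ∀ l : List J, ∃ (N : Type u) (_ : Field N) (_ : Differential N) (j : N0 →+* N),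
      DHom j ∧ (∀ p ∈ l, ∃ φ : B p →+* N, DHom φ ∧
        ∀ z, φ (algebraMap κ (B p) z) = j (i p z)) ∧
      ∀ z : N, z′ = 0 → ∃ a : N0, a′ = 0 ∧ j a = z := by
    intro l
    induction l with
    | nil => exact ⟨N0, inferInstance, inferInstance, RingHom.id _, fun _ => rfl, by simp,
        fun z hz => ⟨z, hz, rfl⟩⟩
    | cons p l ih =>
      obtain ⟨N, _, _, j, hj, hφ, hc⟩ := ih
      haveI : CharZero N := charZero_of_injective_ringHom j.injective
      have hcst : cst N = (cst N0).map j := by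
        refine le_antisymm ?_ hj.map_cst
        intro z hz
        obtain ⟨a, ha, h⟩ := hc z hz
        exact ⟨a, ha, h⟩
      have hCN : IsAlgClosed (cst N) := by
        rw [hcst]; exact isAlgClosed_map _ _ hC
      letI : Algebra κ N := (j.comp (i p)).toAlgebra
      haveI : DifferentialAlgebra κ N := ⟨fun z => ((hj.comp (hi p)) z).symm⟩
      letI := tensDiff κ N (B p)
      haveI : DifferentialAlgebra N (N ⊗[κ] B p) := tens_diffAlg_left κ N (B p)
      obtain ⟨N1, _, _, j1, φ1, hj1, hφ1, hcomp, hc1⟩ := ext_one N (N ⊗[κ] B p) hCN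
      refine ⟨N1, inferInstance, inferInstance, j1.comp j, hj1.comp hj, ?_, ?_⟩
      · intro q hq
        rcases List.mem_cons.mp hq with rfl | hq
        · refine ⟨φ1.comp (Algebra.TensorProduct.includeRight : B q →ₐ[κ] N ⊗[κ] B q).toRingHom,
            hφ1.comp (tens_dhom_right κ N (B q)), fun z => ?_⟩
          have h2 := hcomp (j (i q z))
          rw [RingHom.comp_apply, RingHom.comp_apply, ← h2]
          congr 1
          exact (Algebra.TensorProduct.includeRight : B q →ₐ[κ] N ⊗[κ] B q).commutes z
        · obtain ⟨φ, h1, h2⟩ := hφ q hq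
          exact ⟨j1.comp φ, hj1.comp h1, fun z => by
            rw [RingHom.comp_apply, h2, RingHom.comp_apply]⟩
      · intro z hz
        obtain ⟨a, ha, rfl⟩ := hc1 z hz
        obtain ⟨b, hb, rfl⟩ := hc a ha
        exact ⟨b, hb, rfl⟩
  haveI := Fintype.ofFinite J
  obtain ⟨N, _, _, j, hj, hφ, hc⟩ := key Finset.univ.toList
  choose φ h1 h2 using fun p => hφ p (by simp)
  exact ⟨N, inferInstance, inferInstance, j, φ, hj, h1, h2, hc⟩


structure BD (κ R : Type u) [Field κ] [CommRing R] [Algebra κ R] [Differential κ]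
    [Differential R] (x : R) where
  B : Type u
  [cr : CommRing B]
  [nt : Nontrivial B]
  [alg : Algebra κ B]
  [ft : Algebra.FiniteType κ B]
  [df : Differential B]
  [da : DifferentialAlgebra κ B]
  ι : Type
  [fin : Finite ι]
  lam : ι → R →ₐ[κ] B
  hlam : ∀ i, DHom (lam i).toRingHom
  genB : ∀ (Ω : Type u) [Field Ω] (φ : B →+* Ω) (b : B), φ b ∈ Subfield.closure
    (φ '' (Set.range (algebraMap κ B) ∪ ⋃ i, Set.range (lam i)))
  gen : ∀ (Ω : Type u) [Field Ω] [Differential Ω] (θ : R →+* Ω) (φ : B →+* Ω), DHom θ → DHom φ →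
    (∀ z : κ, θ (algebraMap κ R z) = φ (algebraMap κ B z)) →
    θ x ∈ Subfield.closure
      (φ '' (Set.range (algebraMap κ B) ∪ ⋃ i, Set.range (lam i))) ⊔ cst Ω

attribute [instance] BD.cr BD.nt BD.alg BD.ft BD.df BD.da BD.fin

/-- images of a finite type algebra lie in a subfield -/
theorem ft_mem {κ B Ω : Type*} [Field κ] [CommRing B] [Algebra κ B] [Field Ω] (s : Set B)
    (hs : Algebra.adjoin κ s = ⊤) (φ : B →+* Ω) (P : Subfield Ω)
    (h1 : ∀ z : κ, φ (algebraMap κ B z) ∈ P) (h2 : ∀ x ∈ s, φ x ∈ P) (b : B) : φ b ∈ P := by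
  have hb : b ∈ Algebra.adjoin κ s := by rw [hs]; trivial
  induction hb using Algebra.adjoin_induction with
  | mem x hx => exact h2 x hx
  | algebraMap r => exact h1 r
  | add x y _ _ h h' => rw [map_add]; exact add_mem h h'
  | mul x y _ _ h h' => rw [map_mul]; exact mul_mem h h'

theorem partIV {k κ R L N0 : Type u} [Field k] [Field κ] [CommRing R] [Field L] [Field N0]
    [CharZero k] [Differential k] [Differential κ] [Differential R] [Differential L]
    [Differential N0] [Algebra k κ] [Algebra κ R] [Algebra k N0] [Algebra κ N0]
    [IsScalarTower k κ N0] [DifferentialAlgebra k κ] [DifferentialAlgebra κ R]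
    [DifferentialAlgebra k N0] [FiniteDimensional k κ] [IsAlgClosed N0]
    (r : R →+* L) (hr : DHom r) (e : L →+* N0) (he : DHom e)
    (hcomp : ∀ z : κ, e (r (algebraMap κ R z)) = algebraMap κ N0 z)
    (hL : Subfield.closure (Set.range r) = ⊤) (hC : IsAlgClosed (cst k))
    (hconst : ∀ z : N0, z′ = 0 → ∃ a : k, a′ = 0 ∧ algebraMap k N0 a = z)
    (X0 : Finset R) (hX0 : Algebra.adjoin κ (X0 : Set R) = ⊤) (bd : ∀ x : X0, BD κ R x.1) :
    ∃ (F : Type u) (_ : Field F) (_ : CharZero F) (_ : Differential F) (ψ : L →+* F), DHom ψ ∧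
      (∃ s : Finset F, Subfield.closure ((Set.range fun z : k => ψ (r (algebraMap κ R (algebraMap k κ z))))
        ∪ (s : Set F)) = ⊤) ∧
      (∀ x : F, x′ = 0 → ∃ z : k, ψ (r (algebraMap κ R (algebraMap k κ z))) = x) ∧
      ∀ (Ω : Type u) [Field Ω] [Differential Ω] (ι σ : F →+* Ω), DHom ι → DHom σ →
        (∀ z : k, ι (ψ (r (algebraMap κ R (algebraMap k κ z)))) =
          σ (ψ (r (algebraMap κ R (algebraMap k κ z))))) →
        ∀ y : F, σ y ∈ Subfield.closure (Set.range ι ∪ {m | m′ = 0}) := by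
  classical
  haveI : CharZero N0 := charZero_of_injective_algebraMap (algebraMap k N0).injective
  have hCN : IsAlgClosed (cst N0) := by
    have : cst N0 = (cst k).map (algebraMap k N0) := by
      refine le_antisymm ?_ (dhom_algebraMap k N0).map_cst
      intro z hz
      obtain ⟨a, ha, h⟩ := hconst z hz
      exact ⟨a, ha, h⟩
    rw [this]
    exact isAlgClosed_map _ _ hC
  let J := X0 × (κ →ₐ[k] N0)
  haveI : Finite (κ →ₐ[k] N0) := inferInstance
  have hid : ∀ p : J, DHom p.2.toRingHom := by
    intro p
    refine DHom.of_algebraic (A0 := k) _ ?_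
    intro z
    have h1 : ∀ z, (p.2.toRingHom.comp (algebraMap k κ)) z = algebraMap k N0 z := fun z => p.2.commutes z
    rw [h1, h1]
    exact dhom_algebraMap k N0 z
  obtain ⟨N, _, _, j, φ, hj, hφ, hφc, hcN⟩ := ext_fam hCN (J := J) (fun p => (bd p.1).B)
    (fun p => p.2.toRingHom) hid
  haveI : CharZero N := charZero_of_injective_ringHom j.injective
  let κ' := IntermediateField.normalClosure k κ N0
  haveI hnc : IsNormalClosure k κ κ' := Algebra.IsAlgebraic.isNormalClosure_normalClosure (fun x => IsAlgClosed.splits _)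
  haveI hnn : Normal k κ' := hnc.normal
  haveI : FiniteDimensional k κ' := inferInstance
  have hiκ : ∀ (i : κ →ₐ[k] N0) z, i z ∈ κ' := fun i z =>
    AlgHom.fieldRange_le_normalClosure i ⟨z, rfl⟩
  have hκκ' : ∀ z, algebraMap κ N0 z ∈ κ' := fun z => hiκ (IsScalarTower.toAlgHom k κ N0) z
  have hκ'd : ∀ z ∈ κ', z′ ∈ κ' := by
    intro z hz
    refine alg_deriv (algebraMap k N0).fieldRange κ'.toSubfield ?_ ?_ z hz ?_
    · rintro _ ⟨x, rfl⟩
      rw [deriv_algebraMap]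
      exact κ'.algebraMap_mem _
    · rintro _ ⟨x, rfl⟩
      exact κ'.algebraMap_mem _
    · have h1 : IsAlgebraic k z := by
        have := Algebra.IsAlgebraic.isAlgebraic (R := k) (⟨z, hz⟩ : κ')
        exact this.algebraMap (A := N0)
      obtain ⟨p, hp, hp0⟩ := h1
      refine ⟨p.map (algebraMap k N0).rangeRestrictField, ?_, ?_⟩
      · rwa [Ne, Polynomial.map_eq_zero]
      · rw [← hp0, Polynomial.aeval_def, Polynomial.aeval_def, Polynomial.eval₂_map]
        rfl
  let Y : Set N := Set.range (fun x => j (e (r x))) ∪ j '' (κ' : Set N0) ∪ ⋃ p, Set.range (φ p)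
  let F := Subfield.closure Y
  have hFd : ∀ z ∈ F, z′ ∈ F := by
    refine dstable_closure Y ?_
    rintro z ((⟨x, rfl⟩ | ⟨x, hx, rfl⟩) | hz)
    · refine Subfield.subset_closure (Or.inl (Or.inl ⟨x′, ?_⟩))
      simp only
      rw [hr, he, hj]
    · exact Subfield.subset_closure (Or.inl (Or.inr ⟨x′, hκ'd x hx, hj x⟩))
    · obtain ⟨p, b, rfl⟩ := Set.mem_iUnion.mp hz
      exact Subfield.subset_closure (Or.inr (Set.mem_iUnion.mpr ⟨p, b′, hφ p b⟩))
  letI dF : Differential F := subDiff F hFd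
  have hYF : Y ⊆ F := Subfield.subset_closure
  have hLF : ∀ z : L, j (e z) ∈ F := by
    intro z
    have hz : z ∈ Subfield.closure (Set.range r) := by rw [hL]; trivial
    have : Subfield.closure (Set.range r) ≤ F.comap (j.comp e) := by
      rw [Subfield.closure_le]
      rintro _ ⟨x, rfl⟩
      exact hYF (Or.inl (Or.inl ⟨x, rfl⟩))
    exact this hz
  let ψ : L →+* F := (j.comp e).codRestrict F hLF
  let jκ : κ' →+* F := (j.comp κ'.val.toRingHom).codRestrict F
    (fun z => hYF (Or.inl (Or.inr ⟨z, z.2, rfl⟩)))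
  let φF : ∀ p : J, (bd p.1).B →+* F := fun p => (φ p).codRestrict F
    (fun b => hYF (Or.inr (Set.mem_iUnion.mpr ⟨p, b, rfl⟩)))
  have hψd : DHom ψ := fun z => Subtype.ext ((hj.comp he) z)
  have hφFd : ∀ p, DHom (φF p) := fun p z => Subtype.ext (hφ p z)
  have hk : ∀ z : k, ψ (r (algebraMap κ R (algebraMap k κ z))) = jκ (algebraMap k κ' z) := by
    intro z
    apply Subtype.ext
    change j (e (r _)) = j (algebraMap k N0 z)
    rw [hcomp, ← IsScalarTower.algebraMap_apply]
  have hgenF : ∀ (Ω : Type u) [Field Ω] (σ : F →+* Ω) (P : Subfield Ω),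
      (∀ x, σ (ψ (r x)) ∈ P) → (∀ z, σ (jκ z) ∈ P) → (∀ p b, σ (φF p b) ∈ P) → ∀ y, σ y ∈ P := by
    intro Ω _ σ P h1 h2 h3
    rintro ⟨y, hy⟩
    have key : F ≤ (P.comap σ).map F.subtype := by
      change Subfield.closure Y ≤ _
      rw [Subfield.closure_le]
      rintro z ((⟨x, rfl⟩ | ⟨x, hx, rfl⟩) | hz)
      · exact ⟨_, h1 x, rfl⟩
      · exact ⟨_, h2 ⟨x, hx⟩, rfl⟩
      · obtain ⟨p, b, rfl⟩ := Set.mem_iUnion.mp hz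
        exact ⟨_, h3 p b, rfl⟩
    obtain ⟨w, hw, h⟩ := key hy
    have : w = ⟨y, hy⟩ := Subtype.ext h
    rw [← this]
    exact hw
  have hφκ : ∀ (p : J) (z : κ), φF p (algebraMap κ (bd p.1).B z) = jκ ⟨p.2 z, hiκ p.2 z⟩ := by
    intro p z
    exact Subtype.ext (hφc p z)
  have hψκ : ∀ z : κ, ψ (r (algebraMap κ R z)) = jκ ⟨algebraMap κ N0 z, hκκ' z⟩ := by
    intro z
    apply Subtype.ext
    change j (e (r _)) = j _
    rw [hcomp]
    rfl
  refine ⟨F, inferInstance, inferInstance, dF, ψ, hψd, ?_, ?_, ?_⟩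
  · -- finite generation
    let b := Module.finBasis k κ'
    have hft : ∀ p : J, ∃ s : Finset (bd p.1).B, Algebra.adjoin κ (s : Set (bd p.1).B) = ⊤ := fun p =>
      (bd p.1).ft.out
    choose s hs using hft
    let Z : Set F := (fun x => ψ (r x)) '' (X0 : Set R) ∪ Set.range (fun i => jκ (b i)) ∪
      ⋃ p, φF p '' (s p : Set (bd p.1).B)
    have hZ : Z.Finite := ((X0.finite_toSet.image _).union (Set.finite_range _)).union
      (Set.finite_iUnion fun p => (s p).finite_toSet.image _)
    refine ⟨hZ.toFinset, ?_⟩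
    rw [Set.Finite.coe_toFinset, eq_top_iff]
    rintro y -
    set P := Subfield.closure ((Set.range fun z : k => ψ (r (algebraMap κ R (algebraMap k κ z)))) ∪ Z) with hP
    have hPκ : ∀ z, jκ z ∈ P := by
      intro z
      rw [← b.sum_repr z, map_sum]
      refine sum_mem fun i _ => ?_
      rw [Algebra.smul_def, map_mul]
      refine mul_mem ?_ (Subfield.subset_closure (Or.inr (Or.inl (Or.inr ⟨i, rfl⟩))))
      rw [← hk]
      exact Subfield.subset_closure (Or.inl ⟨_, rfl⟩)
    refine hgenF F (RingHom.id F) P ?_ hPκ ?_ y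
    · intro x
      refine ft_mem (X0 : Set R) hX0 ((RingHom.id F).comp (ψ.comp r)) P ?_ ?_ x
      · intro z
        change ψ (r _) ∈ P
        rw [hψκ]; exact hPκ _
      · intro x hx
        exact Subfield.subset_closure (Or.inr (Or.inl (Or.inl ⟨x, hx, rfl⟩)))
    · intro p
      refine ft_mem (s p : Set (bd p.1).B) (hs p) ((RingHom.id F).comp (φF p)) P ?_ ?_
      · intro z
        change φF p _ ∈ P
        rw [hφκ]; exact hPκ _
      · intro x hx
        exact Subfield.subset_closure (Or.inr (Or.inr (Set.mem_iUnion.mpr ⟨p, x, hx, rfl⟩)))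
  · -- constants
    intro x hx
    obtain ⟨a, ha, hax⟩ := hcN (x : N) (congrArg Subtype.val hx)
    obtain ⟨z, hz, rfl⟩ := hconst a ha
    refine ⟨z, ?_⟩
    rw [hk]
    exact Subtype.ext hax
  · -- strong normality
    intro Ω _ _ ι σ hι hσ hισ
    set P := Subfield.closure (Set.range ι ∪ {m | m′ = 0}) with hP
    have hιP : ∀ y, ι y ∈ P := fun y => Subfield.subset_closure (Or.inl ⟨y, rfl⟩)
    have hcP : cst Ω ≤ P := fun y hy => Subfield.subset_closure (Or.inr hy)
    have core : ∀ θ : R →+* Ω, DHom θ →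
        (∀ z : k, θ (algebraMap κ R (algebraMap k κ z)) = ι (jκ (algebraMap k κ' z))) →
        ∀ x, θ x ∈ P := by
      intro θ hθ hθk
      obtain ⟨i, hi⟩ := conj (k := k) (κ := κ) (κ' := κ') hnc.splits (ι.comp jκ)
        (θ.comp (algebraMap κ R)) hθk
      refine ft_mem (X0 : Set R) hX0 θ P ?_ ?_
      · intro z
        have := hi z
        rw [RingHom.comp_apply] at this
        rw [this]
        exact hιP _
      · intro x hx
        let p : J := ⟨⟨x, hx⟩, κ'.val.comp i⟩
        have h1 := (bd p.1).gen Ω θ (ι.comp (φF p)) hθ (hι.comp (hφFd p)) (by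
          intro z
          have := hi z
          rw [RingHom.comp_apply] at this
          rw [this]
          change _ = ι (φF p _)
          rw [hφκ]
          rfl)
        have h2 : Subfield.closure ((ι.comp (φF p)) '' (Set.range (algebraMap κ (bd p.1).B) ∪
            ⋃ i, Set.range ((bd p.1).lam i))) ⊔ cst Ω ≤ P := by
          refine sup_le ?_ hcP
          rw [Subfield.closure_le]
          rintro _ ⟨b, -, rfl⟩
          exact hιP _
        exact h2 h1
    have hσk : ∀ z : k, σ (jκ (algebraMap k κ' z)) = ι (jκ (algebraMap k κ' z)) := by
      intro z
      rw [← hk]; exact (hισ z).symm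
    have hσκ : ∀ z, σ (jκ z) ∈ P := by
      intro z
      obtain ⟨i, hi⟩ := conj (k := k) (κ := κ') (κ' := κ') (fun x => hnn.splits x) (ι.comp jκ)
        (σ.comp jκ) hσk
      have := hi z
      rw [RingHom.comp_apply] at this
      rw [this]
      exact hιP _
    refine hgenF Ω σ P ?_ hσκ ?_
    · refine core (σ.comp (ψ.comp r)) (hσ.comp (hψd.comp hr)) ?_
      intro z
      rw [← hσk, ← hk]; rfl
    · intro p b
      have h1 := (bd p.1).genB Ω (σ.comp (φF p)) b
      refine (Subfield.closure_le.mpr ?_ : _ ≤ P) h1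
      rintro _ ⟨b, hb | hb, rfl⟩
      · obtain ⟨z, rfl⟩ := hb
        rw [RingHom.comp_apply, hφκ]
        exact hσκ _
      · obtain ⟨i, x, rfl⟩ := Set.mem_iUnion.mp hb
        refine core ((σ.comp (φF p)).comp ((bd p.1).lam i).toRingHom)
          ((hσ.comp (hφFd p)).comp ((bd p.1).hlam i)) ?_ x
        intro z
        rw [← hσk]
        change σ (φF p ((bd p.1).lam i _)) = _
        rw [AlgHom.commutes, hφκ]
        congr 2
        exact Subtype.ext (p.2.commutes z)


theorem mkBD {Q : Type u} [Field Q] [CharZero Q] [Differential Q] (k0 K0 : Subfield Q)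
    (Lt : Type u) [Field Lt] [Differential Lt] (e : Lt →+* Q) (he : DHom e)
    (k1 : Subfield Lt) (hk1 : k1.map e = k0) (heK : ∀ z, e z ∈ K0)
    (hka : ∀ x ∈ acl k1, x′ ∈ acl k1) (RL : Subalgebra (acl k1) Lt) (hRF : RL.FG)
    (hRL : ∀ x ∈ RL, x′ ∈ RL) (g : Set Lt) (hg : g.Finite)
    (hgt : IntermediateField.adjoin (acl k1) g = ⊤) (hgR : g ⊆ RL) (x : RL)
    (hx : e (x : Lt) ∈ IIset k0 K0) :
    letI := subDiff (acl k1) hka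
    letI := subDiffA RL hRL
    Nonempty (BD (acl k1) RL x) := by
  letI d1 := subDiff (acl k1) hka
  letI d2 := subDiffA RL hRL
  haveI : DifferentialAlgebra (acl k1) Lt := subDiff_alg _ hka
  obtain ⟨T, W, _, _, _, _, t, a, j, ι, hfin, lam0, ht, ha, hlam0, htj, hlj, hax, hLD⟩ :=
    partIb k0 K0 Lt e he k1 hk1 heK x hx
  letI : Algebra (acl k1) T := j.toAlgebra
  haveI hTd : DifferentialAlgebra (acl k1) T := by
    refine ⟨fun z => ?_⟩
    apply t.injective
    have h1 : t ((algebraMap (acl k1) T z)′) = (t (j z))′ := ht _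
    have h2 : t (algebraMap (acl k1) T (z′)) = t (j (z′)) := rfl
    rw [h1, h2, htj, htj, ← ha]
    rfl
  let lam : ι → Lt →ₐ[acl k1] T := fun i => { lam0 i with commutes' := fun z => hlj i z }
  obtain ⟨B, hB, hBF, hlB, hgB, hgen⟩ := partII t a ht ha (fun z => htj z) lam (fun i => hlam0 i) g hg hgt
    (x : Lt) hax (by
      intro n l τ hτ hs hli
      obtain ⟨c, hc, hc0, hsum⟩ := hLD n l τ hτ hs
      apply hc0
      rw [Fintype.linearIndependent_iff] at hli
      have := hli (fun i => ⟨c i, hc i⟩) (by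
        rw [← hsum]
        refine Finset.sum_congr rfl fun i _ => ?_
        rw [Algebra.smul_def, mul_comm]
        rfl)
      funext i
      exact congrArg Subtype.val (this i)) RL hRF hRL hgR x.2
  letI dB := subDiffA B hB
  haveI : DifferentialAlgebra (acl k1) B := ⟨fun z => Subtype.ext (hTd.deriv_algebraMap z)⟩
  haveI : Algebra.FiniteType (acl k1) B := B.fg_iff_finiteType.mp hBF
  let lamB : ι → RL →ₐ[acl k1] B := fun i => ((lam i).comp RL.val).codRestrict B (fun r => hlB i r r.2)
  have hset : {b : B | (∃ z, algebraMap (acl k1) B z = b) ∨ ∃ i, ∃ r ∈ RL, (b : T) = lam i r} ⊆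
      Set.range (algebraMap (acl k1) B) ∪ ⋃ i, Set.range (lamB i) := by
    rintro b (⟨z, rfl⟩ | ⟨i, r, hr, h⟩)
    · exact Or.inl ⟨z, rfl⟩
    · exact Or.inr (Set.mem_iUnion.mpr ⟨i, ⟨r, hr⟩, Subtype.ext h.symm⟩)
  refine ⟨{ B := B, ι := ι, lam := lamB, hlam := ?_, genB := ?_, gen := ?_ }⟩
  · intro i z
    exact Subtype.ext (hlam0 i z)
  · intro Ω _ φ b
    exact Subfield.closure_mono (Set.image_mono hset) (hgB Ω φ b)
  · intro Ω _ _ θ φ hθ hφ hc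
    exact sup_le_sup_right (Subfield.closure_mono (Set.image_mono hset)) _
      (hgen Ω θ φ (fun r hr => hθ ⟨r, hr⟩) (fun b hb => hφ ⟨b, hb⟩) hc)

theorem assemble {Q : Type u} [Field Q] [CharZero Q] [Differential Q] (k0 K0 : Subfield Q)
    (Lt : Type u) [Field Lt] [Differential Lt] (e : Lt →+* Q) (he : DHom e)
    (k1 : Subfield Lt) (hk1 : k1.map e = k0) (heK : ∀ z, e z ∈ K0)
    (heI : ∀ x, e x ∈ IIset k0 K0) (hk1d : ∀ x ∈ k1, x′ ∈ k1) (g : Set Lt) (hg : g.Finite)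
    (hgt : Subfield.closure (k1 ∪ g) = ⊤) (hC : IsAlgClosed (cst Lt))
    (hconst : cst Lt ≤ k1) :
    ∃ (F : Type u) (_ : Field F) (_ : CharZero F) (_ : Differential F) (ψ : Lt →+* F), DHom ψ ∧
      (∃ s : Finset F, Subfield.closure ((k1.map ψ : Set F) ∪ (s : Set F)) = ⊤) ∧
      (∀ x : F, x′ = 0 → x ∈ k1.map ψ) ∧
      ∀ (Ω : Type u) [Field Ω] [Differential Ω] (ι σ : F →+* Ω), DHom ι → DHom σ →
        (∀ z ∈ k1.map ψ, ι z = σ z) →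
        ∀ y : F, σ y ∈ Subfield.closure (Set.range ι ∪ {m | m′ = 0}) := by
  classical
  haveI : CharZero Lt := RingHom.charZero e
  have hka := acl_dstable k1 hk1d
  letI dk : Differential k1 := subDiff k1 hk1d
  letI dκ : Differential (acl k1) := subDiff (acl k1) hka
  haveI : DifferentialAlgebra (acl k1) Lt := subDiff_alg _ hka
  haveI : DifferentialAlgebra k1 Lt := subDiff_alg _ hk1d
  letI : Algebra k1 (acl k1) := inferInstanceAs (Algebra k1 (algebraicClosure k1 Lt))
  haveI hst : IsScalarTower k1 (acl k1) Lt :=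
    inferInstanceAs (IsScalarTower k1 (algebraicClosure k1 Lt) Lt)
  have hgtk : IntermediateField.adjoin k1 g = ⊤ := by
    rw [eq_top_iff]
    rintro z -
    have hz : z ∈ Subfield.closure (k1 ∪ g) := by rw [hgt]; trivial
    refine (Subfield.closure_le.mpr ?_ : _ ≤ (IntermediateField.adjoin k1 g).toSubfield) hz
    rintro y (hy | hy)
    · exact (IntermediateField.adjoin k1 g).algebraMap_mem ⟨y, hy⟩
    · exact IntermediateField.subset_adjoin _ _ hy
  haveI : Algebra.EssFiniteType k1 Lt := by
    rw [← IntermediateField.fg_top_iff]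
    exact ⟨hg.toFinset, by rw [hg.coe_toFinset]; exact hgtk⟩
  haveI : FiniteDimensional k1 (acl k1) := findim_algClosure k1 Lt
  have hgta : IntermediateField.adjoin (acl k1) g = ⊤ := by
    rw [eq_top_iff]
    rintro z -
    have hz : z ∈ Subfield.closure (k1 ∪ g) := by rw [hgt]; trivial
    refine (Subfield.closure_le.mpr ?_ : _ ≤ (IntermediateField.adjoin (acl k1) g).toSubfield) hz
    rintro y (hy | hy)
    · exact (IntermediateField.adjoin (acl k1) g).algebraMap_mem ⟨y, le_acl _ hy⟩
    · exact IntermediateField.subset_adjoin _ _ hy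
  obtain ⟨RL, hgR, -, hRL, h, hh, hh0, hRLe⟩ := ft_ring (κ := acl k1) g ∅ hg Set.finite_empty
    (fun z _ => by rw [hgta]; trivial) (Set.empty_subset _)
  have hRF : RL.FG := by
    rw [hRLe]
    exact ⟨(hg.insert _).toFinset, by rw [Set.Finite.coe_toFinset]⟩
  letI dR := subDiffA RL hRL
  haveI : DifferentialAlgebra (acl k1) RL := ⟨fun z => Subtype.ext rfl⟩
  haveI : DifferentialAlgebra k1 (acl k1) := ⟨fun z => Subtype.ext rfl⟩
  haveI : Algebra.FiniteType (acl k1) RL := RL.fg_iff_finiteType.mp hRF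
  obtain ⟨X0, hX0⟩ := (inferInstance : Algebra.FiniteType (acl k1) RL).out
  let N0 := AlgebraicClosure Lt
  obtain ⟨dN, hdN⟩ := exists_diff_algebraic Lt N0
  haveI : DifferentialAlgebra k1 N0 := ⟨fun z => by
    rw [IsScalarTower.algebraMap_apply k1 Lt N0, IsScalarTower.algebraMap_apply k1 Lt N0,
      ← deriv_algebraMap, ← deriv_algebraMap]⟩
  have hN0d : DHom (algebraMap Lt N0) := dhom_algebraMap _ _
  have hck : IsAlgClosed (cst k1) := by
    have h1 : cst Lt = (cst k1).map (algebraMap k1 Lt) := by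
      refine le_antisymm ?_ (dhom_algebraMap k1 Lt).map_cst
      intro z hz
      exact ⟨⟨z, hconst hz⟩, Subtype.ext hz, rfl⟩
    rw [h1] at hC
    let eq : cst k1 ≃+* (cst k1).map (algebraMap k1 Lt) :=
      (cst k1).toSubring.equivMapOfInjective (algebraMap k1 Lt) (algebraMap k1 Lt).injective
    exact IsAlgClosed.of_ringEquiv _ _ eq.symm
  have hconst' : ∀ z : N0, z′ = 0 → ∃ a : k1, a′ = 0 ∧ algebraMap k1 N0 a = z := by
    intro z hz
    have h1 : z ∈ (cst Lt).map (algebraMap Lt N0) := by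
      refine alg_const (algebraMap Lt N0).fieldRange ?_ _ ?_ (isAlgClosed_map _ _ hC) z hz ?_
      · rintro _ ⟨y, rfl⟩
        exact ⟨y′, hN0d y⟩
      · rintro _ ⟨y, rfl⟩ hy
        refine ⟨y, ?_, rfl⟩
        rw [← hN0d] at hy
        exact (map_eq_zero _).mp hy
      · obtain ⟨p, hp, hp0⟩ := Algebra.IsAlgebraic.isAlgebraic (R := Lt) z
        refine ⟨p.map (algebraMap Lt N0).rangeRestrictField, ?_, ?_⟩
        · rwa [Ne, Polynomial.map_eq_zero]
        · rw [← hp0, Polynomial.aeval_def, Polynomial.aeval_def, Polynomial.eval₂_map]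
          rfl
    obtain ⟨y, hy, rfl⟩ := h1
    exact ⟨⟨y, hconst hy⟩, Subtype.ext hy, rfl⟩
  have hbd : ∀ x : X0, Nonempty (BD (acl k1) RL x.1) := fun x =>
    mkBD k0 K0 Lt e he k1 hk1 heK hka RL hRF hRL g hg hgta hgR x.1 (heI _)
  obtain ⟨F, i1, i2, i3, ψ, hψ, ⟨s, hs⟩, hcF, hsn⟩ := partIV (k := k1) (κ := acl k1) (R := RL) (L := Lt) (N0 := N0)
    RL.val.toRingHom (fun z => rfl) (algebraMap Lt N0) hN0d (fun z => rfl) (by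
      rw [eq_top_iff, ← hgt, Subfield.closure_le]
      rintro z (hz | hz)
      · exact Subfield.subset_closure ⟨⟨z, RL.algebraMap_mem ⟨z, le_acl _ hz⟩⟩, rfl⟩
      · exact Subfield.subset_closure ⟨⟨z, hgR hz⟩, rfl⟩) hck hconst' X0 hX0
    (fun x => (hbd x).some)
  refine ⟨F, i1, i2, i3, ψ, hψ, ⟨s, ?_⟩, ?_, ?_⟩
  · rw [eq_top_iff, ← hs]
    refine Subfield.closure_mono (Set.union_subset_union_left _ ?_)
    rintro _ ⟨z, rfl⟩
    exact ⟨z, z.2, rfl⟩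
  · intro x hx
    obtain ⟨z, rfl⟩ := hcF x hx
    exact ⟨z, z.2, rfl⟩
  · intro Ω _ _ ι σ hι hσ h
    exact hsn Ω ι σ hι hσ (fun z => h _ ⟨z, z.2, rfl⟩)

theorem free_fam {E : Type u} [Field E] {k K M : Subfield E} (h : FreeOver k K M) {ι : Type*}
    (x : ι → E) (hxK : ∀ i, x i ∈ K) (hx : AlgebraicIndependent k x) : AlgebraicIndependent M x := by
  refine algebraicIndependent_of_finite_type fun t ht => ?_
  have h1 : AlgebraicIndependent k (fun i : t => x i) := hx.comp _ Subtype.val_injective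
  haveI := ht.to_subtype
  obtain ⟨s, hs⟩ := (Set.finite_range (fun i : t => x i)).exists_finset_coe
  have h2 := h s (by rw [hs]; rintro _ ⟨i, rfl⟩; exact hxK i)
  rw [hs] at h2
  exact (algebraicIndependent_subtype_range h1.injective).mp
    (h2 ((algebraicIndependent_subtype_range h1.injective).mpr h1))

theorem trdeg_attained {E : Type u} [Field E] (k K : Subfield E) (l : ℕ) (hl : 1 ≤ l)
    (h : trdegOf k K = l) : ∃ f : Fin l → E, (∀ i, f i ∈ K) ∧ AlgebraicIndependent k f := by
  by_cases hex : ∃ s : {s : Set E // s ⊆ (K : Set E) ∧ AlgebraicIndependent ↥k (fun x : ↥s => (x : E))},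
      (l : Cardinal) ≤ Cardinal.mk ↥(s.1)
  · obtain ⟨⟨s, hs, hai⟩, hle⟩ := hex
    have h1 : Cardinal.lift.{u} (Cardinal.mk (Fin l)) ≤ Cardinal.lift.{0} (Cardinal.mk s) := by
      simpa using hle
    obtain ⟨g⟩ := Cardinal.lift_mk_le'.mp h1
    exact ⟨fun i => g i, fun i => hs (g i).2, hai.comp g g.injective⟩
  · push Not at hex
    exfalso
    obtain ⟨m, rfl⟩ : ∃ m, l = m + 1 := ⟨l - 1, by omega⟩
    have h2 : trdegOf k K ≤ (m : Cardinal) := by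
      refine ciSup_le' fun s => ?_
      have := hex s
      obtain ⟨n, hn⟩ := Cardinal.lt_aleph0.mp (this.trans (Cardinal.natCast_lt_aleph0))
      rw [hn] at this ⊢
      have : n < m + 1 := by exact_mod_cast this
      exact_mod_cast Nat.lt_succ_iff.mp this
    rw [h] at h2
    have : m + 1 ≤ m := by exact_mod_cast h2
    omega

theorem le_trdegOf {E : Type u} [Field E] (k K : Subfield E) (l : ℕ) (f : Fin l → E)
    (hf : ∀ i, f i ∈ K) (h : AlgebraicIndependent k f) : (l : Cardinal) ≤ trdegOf k K := by
  have h1 := (algebraicIndependent_subtype_range h.injective).mpr h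
  have h2 : Cardinal.mk (Set.range f) = l := by
    have := Cardinal.mk_range_eq_of_injective h.injective
    simpa using this
  rw [← h2]
  unfold trdegOf
  exact le_ciSup (f := fun s : {s : Set E // s ⊆ (K : Set E) ∧
      AlgebraicIndependent ↥k (fun x : ↥s => (x : E))} => Cardinal.mk ↥(s.1))
    (Cardinal.bddAbove_range _) ⟨Set.range f, by rintro _ ⟨i, rfl⟩; exact hf i, h1⟩

/-- (Extension of Rosenlicht's result.) Let `K`, `M` be finitely generated
differential subfields of a common differential field extension of `k`, free over `k`. If
`trdeg(C_{KM}|C_M) = l ≥ 1`, then either `C_K ≠ C`, or `K` contains a differential subfield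
`L` over `k` of transcendence degree at least `l` that embeds differentially over `k` into a
strongly normal extension of `k`. -/
theorem stmt11 {E : Type u} [Field E] [CharZero E] (D : Derivation ℤ E E)
    (k K M : Subfield E)
    (hk : ∀ x ∈ k, D x ∈ k) (hKd : ∀ x ∈ K, D x ∈ K) (hMd : ∀ x ∈ M, D x ∈ M)
    (hkK : k ≤ K) (hkM : k ≤ M)
    (hC : IsAlgClosed ↥(constantsOf D k))
    (hKfg : ∃ s : Finset E, diffGen (⇑D) k ↑s = K)
    (hMfg : ∃ s : Finset E, diffGen (⇑D) k ↑s = M)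
    (hfree : FreeOver k K M)
    (l : ℕ) (hl : 1 ≤ l)
    (htd : trdegOf (constantsOf D M) (constantsOf D (K ⊔ M)) = l) :
    constantsOf D K ≠ constantsOf D k ∨
    ∃ L : Subfield E, k ≤ L ∧ L ≤ K ∧ (∀ x ∈ L, D x ∈ L) ∧
      (l : Cardinal) ≤ trdegOf k L ∧
      ∃ (F : DFld.{u}) (ψ : ↥L →+* F.carrier),
        (∀ (x : E) (hx : x ∈ L) (hx' : D x ∈ L), ψ ⟨D x, hx'⟩ = F.deriv (ψ ⟨x, hx⟩)) ∧
        IsSN F.deriv (Subfield.map ψ (Subfield.comap L.subtype k)) := by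
  classical
  by_cases hCK : constantsOf D K = constantsOf D k
  swap
  · exact Or.inl hCK
  refine Or.inr ?_
  letI dE : Differential E := ⟨D⟩
  let Eb := AlgebraicClosure E
  obtain ⟨dEb, hdEb⟩ := exists_diff_algebraic E Eb
  haveI : CharZero Eb := charZero_of_injective_algebraMap (algebraMap E Eb).injective
  let i0 : E →+* Eb := algebraMap E Eb
  have hi0 : DHom i0 := dhom_algebraMap E Eb
  let Qs : Subfield Eb := acl (K.map i0)
  have hKi : ∀ x ∈ K.map i0, x′ ∈ K.map i0 := dstable_map i0 hi0 K hKd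
  have hQs := acl_dstable (K.map i0) hKi
  letI dQ : Differential Qs := subDiff Qs hQs
  haveI : DifferentialAlgebra Qs Eb := subDiff_alg Qs hQs
  haveI : IsAlgClosed Qs := acl_isAlgClosed _
  letI dK : Differential K := subDiff K hKd
  let eK : K →+* Qs := (i0.comp K.subtype).codRestrict Qs (fun z => le_acl _ ⟨z, z.2, rfl⟩)
  have heK : DHom eK := fun z => Subtype.ext (hi0 z)
  have heKc : ∀ z, (eK z : Eb) = i0 z := fun z => rfl
  let kK : Subfield K := k.comap K.subtype
  have hkKm : kK.map K.subtype = k := by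
    ext z
    constructor
    · rintro ⟨y, hy, rfl⟩; exact hy
    · intro hz; exact ⟨⟨z, hkK hz⟩, hz, rfl⟩
  let k0 : Subfield Qs := kK.map eK
  let K0 : Subfield Qs := eK.fieldRange
  have hQ : acl K0 = ⊤ := by
    rw [eq_top_iff]
    rintro z -
    apply acl_of_map Qs.subtype
    have h1 : K.map i0 ≤ K0.map Qs.subtype := by
      rintro _ ⟨y, hy, rfl⟩
      exact ⟨eK ⟨y, hy⟩, ⟨_, rfl⟩, rfl⟩
    exact acl_mono h1 z.2
  have hk0 : ∀ x ∈ k0, x′ ∈ k0 := dstable_map eK heK kK (fun x hx => hk _ hx)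
  have hkK0 : k0 ≤ K0 := by
    rintro _ ⟨y, hy, rfl⟩; exact ⟨y, rfl⟩
  have hK0 : ∀ x ∈ K0, x′ ∈ K0 := by
    rintro _ ⟨y, rfl⟩
    exact ⟨y′, heK y⟩
  let A : DX Qs := { C := Eb }
  let M' : Subfield A.C := M.map i0
  have hFI : FInv k0 K0 A M' := by
    refine ⟨?_, dstable_map i0 hi0 M hMd, ?_⟩
    · rintro _ ⟨_, ⟨y, hy, rfl⟩, rfl⟩
      exact ⟨y, hkM hy, rfl⟩
    · intro s hs hai
      have : ∀ i : s, ∃ p : K, eK p = i := fun i => hs i.2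
      choose p hp using this
      have h1 : AlgebraicIndependent k0 (eK ∘ p) := by
        have : eK ∘ p = ((↑) : s → Qs) := funext hp
        rw [this]; exact hai
      have h2 : AlgebraicIndependent kK p := (ai_map eK).mp h1
      have h3 : AlgebraicIndependent k (K.subtype ∘ p) := by
        have := (ai_map K.subtype).mpr h2
        rwa [hkKm] at this
      have h4 := free_fam hfree _ (fun i => (p i).2) h3
      have h5 := (ai_map i0).mpr h4
      have h6 : (fun i : s => algebraMap Qs A.C i) = i0 ∘ (K.subtype ∘ p) := by
        funext i
        change ((i : Qs) : Eb) = i0 (p i)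
        rw [← hp i]
        rfl
      rw [h6]
      exact h5
  obtain ⟨f, hfC, hfai⟩ := trdeg_attained _ _ l hl htd
  obtain ⟨S, hSf, hSI, hSd, y, hyS, hyai⟩ := partIa k0 K0 hQ hk0 hkK0 hK0 A M' hFI (fun i => i0 (f i))
    (fun i => by
      rw [← hi0]
      have : (f i)′ = 0 := (hfC i).2
      rw [this, map_zero])
    (fun i => by
      have h1 : f i ∈ K ⊔ M := (hfC i).1
      have h2 : K ⊔ M ≤ (Subfield.closure (Set.range (algebraMap Qs A.C) ∪ M')).comap i0 := by
        refine sup_le ?_ ?_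
        · intro z hz
          exact Subfield.subset_closure (Or.inl ⟨eK ⟨z, hz⟩, rfl⟩)
        · intro z hz
          exact Subfield.subset_closure (Or.inr ⟨z, hz, rfl⟩)
      exact h2 h1)
    ((constantsOf D M).map i0)
    (by
      rintro _ ⟨x, hx, rfl⟩ h
      refine ⟨x, ⟨hx, ?_⟩, rfl⟩
      rw [← hi0] at h
      exact (map_eq_zero _).mp h)
    ((ai_map i0).mpr hfai)
  let SK : Set K := eK ⁻¹' S
  have hSK : eK '' SK = S := by
    refine Set.image_preimage_eq_of_subset ?_
    intro z hz
    exact (hSI hz).2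
  have hSKf : SK.Finite := hSf.preimage eK.injective.injOn
  let S' : Set E := K.subtype '' SK
  let LK : Subfield K := Subfield.closure (kK ∪ SK)
  have hLKm : LK.map eK = Subfield.closure (k0 ∪ S) := by
    rw [RingHom.map_field_closure, Set.image_union, hSK]
    rfl
  have hLKd : ∀ x ∈ LK, x′ ∈ LK := by
    intro x hx
    have h1 : eK x ∈ Subfield.closure (k0 ∪ S) := by rw [← hLKm]; exact ⟨x, hx, rfl⟩
    have h2 := hSd _ h1
    rw [← hLKm, ← heK] at h2
    obtain ⟨z, hz, h⟩ := h2
    rwa [← eK.injective h]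
  let L : Subfield E := LK.map K.subtype
  have hkL : k ≤ L := by
    intro z hz
    exact ⟨⟨z, hkK hz⟩, Subfield.subset_closure (Or.inl hz), rfl⟩
  have hLK : L ≤ K := by
    rintro _ ⟨z, hz, rfl⟩; exact z.2
  have hLd : ∀ x ∈ L, D x ∈ L := by
    rintro _ ⟨z, hz, rfl⟩
    exact ⟨z′, hLKd z hz, rfl⟩
  refine ⟨L, hkL, hLK, hLd, ?_, ?_⟩
  · have : ∀ i, ∃ p : K, eK p = y i := fun i => (hSI (hyS i)).2
    choose p hp using this
    have h1 : AlgebraicIndependent kK p := by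
      refine (ai_map eK).mp ?_
      have : eK ∘ p = y := funext hp
      rw [this]; exact hyai
    have h2 := (ai_map K.subtype).mpr h1
    rw [hkKm] at h2
    refine le_trdegOf k L l _ ?_ h2
    intro i
    refine ⟨p i, Subfield.subset_closure (Or.inr ?_), rfl⟩
    change eK (p i) ∈ S
    rw [hp]; exact hyS i
  · letI dL : Differential L := subDiff L hLd
    let e : L →+* Qs := eK.comp (Subfield.inclusion hLK)
    have he : DHom e := fun z => heK (Subfield.inclusion hLK z)
    let k1 : Subfield L := k.comap L.subtype
    have hcst : cst L = (constantsOf D k).comap L.subtype := by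
      ext z
      constructor
      · intro hz
        have : (z : E) ∈ constantsOf D K := ⟨hLK z.2, congrArg Subtype.val hz⟩
        rw [hCK] at this
        exact this
      · intro hz
        exact Subtype.ext hz.2
    obtain ⟨F, i1, i2, i3, ψ, hψ, hfg, hcF, hsn⟩ := assemble k0 K0 L e he k1
      (by
        ext z
        constructor
        · rintro ⟨x, hx, rfl⟩
          exact ⟨⟨x, hLK x.2⟩, hx, rfl⟩
        · rintro ⟨x, hx, rfl⟩
          exact ⟨⟨x, hkL hx⟩, hx, rfl⟩)
      (fun z => ⟨_, rfl⟩)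
      (by
        intro x
        obtain ⟨z, hz, hzx⟩ := x.2
        have h1 : e x ∈ LK.map eK := ⟨z, hz,
          congrArg eK (Subtype.ext hzx : z = Subfield.inclusion hLK x)⟩
        rw [hLKm] at h1
        have h2 : Subfield.closure (k0 ∪ S) ≤ II k0 K0 hQ hk0 := by
          rw [Subfield.closure_le]
          rintro w (hw | hw)
          · exact k_le_II k0 K0 hQ hk0 hw
          · exact (hSI hw).1
        exact h2 h1)
      (fun x hx => hk _ hx)
      (L.subtype ⁻¹' S') ((hSKf.image _).preimage L.subtype.injective.injOn)
      (by
        rw [eq_top_iff]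
        rintro x -
        have h1 : L ≤ (Subfield.closure ((k1 : Set L) ∪ L.subtype ⁻¹' S')).map L.subtype := by
          rw [RingHom.map_field_closure]
          change LK.map K.subtype ≤ _
          rw [RingHom.map_field_closure, Subfield.closure_le]
          rintro _ ⟨w, hw | hw, rfl⟩
          · exact Subfield.subset_closure ⟨⟨w, hkL hw⟩, Or.inl hw, rfl⟩
          · exact Subfield.subset_closure ⟨⟨w, ⟨w, Subfield.subset_closure (Or.inr hw), rfl⟩⟩,
              Or.inr ⟨w, hw, rfl⟩, rfl⟩
        obtain ⟨w, hw, h⟩ := h1 x.2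
        rwa [← Subtype.ext h])
      (by
        have h1 : (cst L).map L.subtype = constantsOf D k := by
          rw [hcst]
          ext z
          constructor
          · rintro ⟨y, hy, rfl⟩; exact hy
          · intro hz; exact ⟨⟨z, hkL hz.1⟩, hz, rfl⟩
        rw [← h1] at hC
        let eq : cst L ≃+* (cst L).map L.subtype :=
          (cst L).toSubring.equivMapOfInjective L.subtype L.subtype.injective
        exact IsAlgClosed.of_ringEquiv _ _ eq.symm)
      (by rw [hcst]; intro z hz; exact hz.1)
    let FD : DFld.{u} := { carrier := F, deriv := fun x => x′, deriv_add := fun a b => by simp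
                           deriv_mul := fun a b => by
                            simp only [Derivation.leibniz, smul_eq_mul]; ring }
    refine ⟨FD, ψ, fun x hx hx' => hψ ⟨x, hx⟩, ?_, hfg, hcF, ?_⟩
    · exact dstable_map ψ hψ k1 (fun x hx => hk _ hx)
    · intro Ω ι σ hι hσ hισ y
      letI : Differential Ω.carrier := ⟨Derivation.mk' (AddMonoidHom.toIntLinearMap
        (AddMonoidHom.mk' Ω.deriv Ω.deriv_add)) (by
          intro a b
          simp only [smul_eq_mul]
          change Ω.deriv (a * b) = a * Ω.deriv b + b * Ω.deriv a
          rw [Ω.deriv_mul]; ring)⟩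
      exact hsn Ω.carrier ι σ hι hσ (fun z hz => (hισ z hz).symm) y
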